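/- arXiv:1408.5391 — 3 statements merged into one kernel-verified Lean document; each statement's English description precedes it below -/
import Mathlib

section
/- For every integer n ≥ 1, the following identity holds in the polynomial ring ℤ[λ, x_1, …, x_n]: ∏_{1 ≤ i < j ≤ n} (x_i + λ x_j) = Σ_{α ∈ MT_n} λ^{E(α)} (1+λ)^{N(α)} ∏_{k=1}^{n} x_k^{C_k(α)−1}, where the sum is over all ASM arrays (rotated monotone triangles) α of order n. -/
open scoped Classical

/-- An ASM array (rotated monotone triangle) of order `n`: rows `i = 1,…,n`, row `i`
having columns `j = 0,…,n-i`, with `α i 0 = i`, `i ≤ α i j ≤ i+j`, weakly increasing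
rows, strictly increasing columns, and `α i j ≤ α (i+1) (j-1)` for `j ≥ 1`.
Entries outside the staircase domain are normalized to `0`. -/
def IsMT (n : ℕ) (α : ℕ → ℕ → ℕ) : Prop :=
  (∀ i j, ¬(1 ≤ i ∧ i ≤ n ∧ j ≤ n - i) → α i j = 0) ∧
  (∀ i, 1 ≤ i → i ≤ n → α i 0 = i) ∧
  (∀ i j, 1 ≤ i → i ≤ n → j ≤ n - i → i ≤ α i j ∧ α i j ≤ i + j) ∧
  (∀ i j, 1 ≤ i → i ≤ n → j + 1 ≤ n - i → α i j ≤ α i (j + 1)) ∧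
  (∀ i j, 1 ≤ i → i + 1 ≤ n → j ≤ n - (i + 1) → α i j < α (i + 1) j) ∧
  (∀ i j, 1 ≤ i → i + 1 ≤ n → 1 ≤ j → j ≤ n - i → α i j ≤ α (i + 1) (j - 1))

/-- `E(α)`: the number of entries (with `j ≥ 1`) equal to their southwest diagonal
neighbor. -/
def Ecnt (n : ℕ) (α : ℕ → ℕ → ℕ) : ℕ :=
  ((Finset.Icc 1 n ×ˢ Finset.Icc 1 n).filter
    (fun p => p.2 ≤ n - p.1 ∧ α p.1 p.2 = α (p.1 + 1) (p.2 - 1))).card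

/-- `N(α)`: the number of entries (with `j ≥ 1`) strictly greater than their west
neighbor and strictly less than their southwest diagonal neighbor (this is the
number of `-1` entries of the corresponding ASM). -/
def Ncnt (n : ℕ) (α : ℕ → ℕ → ℕ) : ℕ :=
  ((Finset.Icc 1 n ×ˢ Finset.Icc 1 n).filter
    (fun p => p.2 ≤ n - p.1 ∧ α p.1 (p.2 - 1) < α p.1 p.2 ∧
      α p.1 p.2 < α (p.1 + 1) (p.2 - 1))).card

/-- `C_k(α)`: the total number of entries of `α` (column 0 included) equal to `k`. -/
def Ccnt (n : ℕ) (α : ℕ → ℕ → ℕ) (k : ℕ) : ℕ :=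
  ((Finset.Icc 1 n ×ˢ Finset.range (n + 1)).filter
    (fun p => p.2 ≤ n - p.1 ∧ α p.1 p.2 = k)).card

section CoefficientDeterminant

open PowerSeries Finset

variable {R : Type*} [CommRing R]

/-- The determinant of the matrix of the first `m` coefficients of `m` power series. -/
noncomputable def coeffDet {m : ℕ} (f : Fin m → R⟦X⟧) : R :=
  Matrix.det (Matrix.of fun i k : Fin m => coeff (k : ℕ) (f i))

/-- If all series have constant coefficient `1` and consecutive differences are `X * g i`, then
the coefficient determinant of `f` is that of `g`. -/
theorem coeffDet_succ {m : ℕ} (f : Fin (m + 1) → R⟦X⟧) (g : Fin m → R⟦X⟧)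
    (hf : ∀ i, constantCoeff (f i) = 1)
    (hg : ∀ i : Fin m, f i.succ - f i.castSucc = X * g i) :
    coeffDet f = coeffDet g := by
  have key : coeffDet f = Matrix.det (Matrix.of fun i k : Fin (m + 1) =>
      coeff (k : ℕ) (Fin.cons (α := fun _ => R⟦X⟧) (f 0) (fun i => X * g i) i)) := by
    refine Matrix.det_eq_of_forall_row_eq_smul_add_pred (fun _ => 1) (fun j => ?_) fun i j => ?_
    · simp
    · simp [← hg]
  rw [key, Matrix.det_succ_column_zero, Fin.sum_univ_succ]
  simp [hf, coeffDet, Matrix.submatrix]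

theorem coeffDet_smul {m : ℕ} (c : Fin m → R) (f : Fin m → R⟦X⟧) :
    coeffDet (fun i => c i • f i) = (∏ i, c i) * coeffDet f := by
  simp only [coeffDet, ← Matrix.det_mul_column, Matrix.of_apply, map_smul, smul_eq_mul]

theorem coeffDet_eq_zero {m : ℕ} (f : Fin m → R⟦X⟧) {i j : Fin m} (hij : i ≠ j)
    (h : f i = f j) : coeffDet f = 0 :=
  Matrix.det_zero_of_row_eq hij (by ext k; simp [h])

theorem coeffDet_sum {m : ℕ} (A : Fin m → Finset ℕ) (g : Fin m → ℕ → R⟦X⟧) :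
    coeffDet (fun i => ∑ c ∈ A i, g i c) =
      ∑ b ∈ Fintype.piFinset A, coeffDet fun i => g i (b i) := by
  have h := (Matrix.detRowAlternating (n := Fin m) (R := R)).toMultilinearMap.map_sum_finset
    (fun i c => fun k : Fin m => coeff (k : ℕ) (g i c)) A
  refine Eq.trans ?_ h
  refine congrArg Matrix.det ?_
  ext i k
  simp

variable (x : ℕ → R) (L : R)

/-- The power series `∏_{c < a} (1 + x_c X) / ∏_{c < a + d} (1 - L x_c X)`. -/
noncomputable def ratioSeries (d a : ℕ) : R⟦X⟧ :=
  (∏ c ∈ range a, (1 + x c • X)) * ∏ c ∈ range (a + d), PowerSeries.mk fun k => (L * x c) ^ k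

theorem constantCoeff_ratioSeries (d a : ℕ) : constantCoeff (ratioSeries x L d a) = 1 := by
  simp [ratioSeries, map_prod, smul_eq_C_mul, constantCoeff_mk]

theorem mk_pow_eq (r : R) : (PowerSeries.mk fun k => r ^ k) = 1 + r • X * (PowerSeries.mk fun k => r ^ k) := by
  ext k
  cases k with
  | zero => simp
  | succ k => simp [coeff_succ_X_mul, pow_succ', coeff_one]

/-- Difference of consecutive ratio series, with a larger gap on the right. -/
theorem ratioSeries_succ_sub (d a : ℕ) :
    ratioSeries x L d (a + 1) - ratioSeries x L d a =
      X * ((x a + L * x (a + d)) • ratioSeries x L (d + 1) a) := by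
  have h := mk_pow_eq (L * x (a + d))
  simp only [ratioSeries, prod_range_succ, show a + 1 + d = a + d + 1 by ring,
    ← add_assoc]
  generalize (PowerSeries.mk fun k => (L * x (a + d)) ^ k) = G at *
  simp only [smul_eq_C_mul, map_add, map_mul] at *
  linear_combination (∏ c ∈ range a, (1 + C (x c) * X)) *
    (∏ c ∈ range (a + d), PowerSeries.mk fun k => (L * x c) ^ k) * h

/-- Difference of consecutive ratio series, expressed in the same family when the gap is `1`. -/
theorem ratioSeries_one_succ_sub (a : ℕ) :
    ratioSeries x L 1 (a + 1) - ratioSeries x L 1 a =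
      X * (x a • ratioSeries x L 1 a + (L * x (a + 1)) • ratioSeries x L 1 (a + 1)) := by
  have h := mk_pow_eq (L * x (a + 1))
  simp only [ratioSeries, prod_range_succ]
  generalize (PowerSeries.mk fun k => (L * x (a + 1)) ^ k) = G at *
  generalize (PowerSeries.mk fun k => (L * x a) ^ k) = G' at *
  simp only [smul_eq_C_mul, map_mul] at *
  linear_combination (∏ c ∈ range a, (1 + C (x c) * X)) * (1 + C (x a) * X) *
    (∏ c ∈ range a, PowerSeries.mk fun k => (L * x c) ^ k) * G' * h

/-- Local weight of an entry `c` lying between its left neighbours `a` and `a'`. -/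
def entryWeight (a c a' : ℕ) : R :=
  (if c = a' then L else 1) * (if a < c ∧ c < a' then 1 + L else 1)

theorem ratioSeries_sub {a a' : ℕ} (h : a < a') :
    ratioSeries x L 1 a' - ratioSeries x L 1 a =
      X * ∑ c ∈ Icc a a', (entryWeight L a c a' * x c) • ratioSeries x L 1 c := by
  have hsum : ∀ b, a < b → ∑ c ∈ Icc a b, (entryWeight L a c b * x c) • ratioSeries x L 1 c =
      x a • ratioSeries x L 1 a + (∑ c ∈ Ioo a b, ((1 + L) * x c) • ratioSeries x L 1 c) +
        (L * x b) • ratioSeries x L 1 b := by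
    intro b hb
    rw [← Ico_insert_right hb.le, sum_insert (by simp), ← Ioo_insert_left hb,
      sum_insert (by simp)]
    have : ∑ c ∈ Ioo a b, (entryWeight L a c b * x c) • ratioSeries x L 1 c =
        ∑ c ∈ Ioo a b, ((1 + L) * x c) • ratioSeries x L 1 c := by
      refine sum_congr rfl fun c hc => ?_
      rw [mem_Ioo] at hc
      simp [entryWeight, hc, hc.2.ne]
    rw [this]
    simp [entryWeight, hb.ne]
    abel
  rw [hsum a' h]
  induction a', h using Nat.le_induction with
  | base =>
    have e : Ioo a (a + 1) = ∅ := by ext c; simp only [mem_Ioo, notMem_empty, iff_false]; omega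
    rw [ratioSeries_one_succ_sub, Nat.succ_eq_add_one, e, sum_empty, add_zero]
  | succ b hb ih =>
    have hb' : a < b := hb
    have e : Ioo a (b + 1) = insert b (Ioo a b) := by
      ext c; simp only [mem_Ioo, mem_insert]; omega
    rw [e, sum_insert (by simp)]
    have h1 := ratioSeries_one_succ_sub x L b
    simp only [smul_eq_C_mul, map_mul, map_add, map_one] at *
    linear_combination h1 + ih

/-- Product formula for the coefficient determinant of consecutive ratio series. -/
theorem coeffDet_ratioSeries (m d s : ℕ) :
    coeffDet (fun i : Fin m => ratioSeries x L d (i + s)) =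
      ∏ e ∈ range m, ∏ i ∈ range (m - (e + 1)), (x (i + s) + L * x (i + s + (d + e))) := by
  induction m generalizing d with
  | zero => simp [coeffDet]
  | succ m ih =>
    rw [coeffDet_succ _ (fun i : Fin m =>
        (x (i + s) + L * x (i + s + d)) • ratioSeries x L (d + 1) (i + s)),
      coeffDet_smul, ih, prod_range_succ', mul_comm]
    · congr 1
      · refine prod_congr rfl fun e _ => ?_
        rw [Nat.add_sub_add_right]
        simp only [add_assoc, add_comm 1 e]
      · simp [Finset.prod_range]
    · exact fun i => constantCoeff_ratioSeries x L _ _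
    · intro i
      have := ratioSeries_succ_sub x L d (i + s)
      simpa [add_right_comm] using this

/-- Expansion of the determinant over interlacing strictly increasing sequences. -/
theorem coeffDet_interlace {m : ℕ} (a : Fin (m + 1) → ℕ) (ha : StrictMono a) :
    coeffDet (fun i => ratioSeries x L 1 (a i)) =
      ∑ b ∈ Fintype.piFinset (fun i : Fin m => Icc (a i.castSucc) (a i.succ)) with StrictMono b,
        (∏ i : Fin m, entryWeight L (a i.castSucc) (b i) (a i.succ) * x (b i)) *
          coeffDet (fun i => ratioSeries x L 1 (b i)) := by
  rw [coeffDet_succ _ (fun i : Fin m => ∑ c ∈ Icc (a i.castSucc) (a i.succ),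
      (entryWeight L (a i.castSucc) c (a i.succ) * x c) • ratioSeries x L 1 c), coeffDet_sum,
    sum_filter]
  · refine sum_congr rfl fun b hb => ?_
    rw [coeffDet_smul]
    split_ifs with hs
    · rfl
    · have hb' : ∀ i, a i.castSucc ≤ b i ∧ b i ≤ a i.succ := by simpa using hb
      have hmono : Monotone b := by
        intro i j hij
        rcases hij.eq_or_lt with rfl | hij
        · rfl
        · exact ((hb' i).2.trans (ha.monotone (by
            rw [Fin.le_def]; simpa using hij))).trans (hb' j).1
      have hinj : ¬ Function.Injective b := fun h => hs (hmono.strictMono_of_injective h)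
      simp only [Function.Injective, not_forall] at hinj
      obtain ⟨i, j, hij, hne⟩ := hinj
      rw [coeffDet_eq_zero _ hne (by simp [hij]), mul_zero]
  · exact fun i => constantCoeff_ratioSeries x L _ _
  · exact fun i => ratioSeries_sub x L (ha (Fin.castSucc_lt_succ))

end CoefficientDeterminant

section Triangles

open Finset

/-- A monotone triangle with `m` columns: column `j` has entries `β j i` for `j + i < m`, is
strictly increasing, and interlaces with column `j + 1`. Other entries are `0`. -/
def IsTriangle (m : ℕ) (β : ℕ → ℕ → ℕ) : Prop :=
  (∀ j i, m ≤ j + i → β j i = 0) ∧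
  (∀ j i, j + i + 1 < m → β j i ≤ β (j + 1) i ∧ β (j + 1) i ≤ β j (i + 1)) ∧
  (∀ j i, j + i + 1 < m → β j i < β j (i + 1))

/-- Prepend a column to a triangle. -/
def consColumn {m : ℕ} (a : Fin m → ℕ) (β : ℕ → ℕ → ℕ) : ℕ → ℕ → ℕ
  | 0, i => if h : i < m then a ⟨i, h⟩ else 0
  | j + 1, i => β j i

theorem consColumn_injective {m : ℕ} (a : Fin m → ℕ) : Function.Injective (consColumn a) :=
  fun _ _ h => funext fun j => congrFun h (j + 1)

theorem isTriangle_consColumn {m : ℕ} {a : Fin (m + 1) → ℕ} (ha : StrictMono a)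
    {β : ℕ → ℕ → ℕ} (hβ : IsTriangle m β)
    (hab : ∀ i : Fin m, a i.castSucc ≤ β 0 i ∧ β 0 i ≤ a i.succ) :
    IsTriangle (m + 1) (consColumn a β) := by
  obtain ⟨h0, h1, h2⟩ := hβ
  refine ⟨fun j i h => ?_, fun j i h => ?_, fun j i h => ?_⟩
  · cases j with
    | zero => exact dif_neg (by omega)
    | succ j => exact h0 j i (by omega)
  · cases j with
    | zero =>
      have := hab ⟨i, by omega⟩
      simpa [consColumn, show i < m + 1 by omega, show i < m by omega] using this
    | succ j => exact h1 j i (by omega)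
  · cases j with
    | zero =>
      simp only [consColumn, show i < m + 1 by omega, show i + 1 < m + 1 by omega, dite_true]
      exact ha (by simp)
    | succ j => exact h2 j i (by omega)

theorem IsTriangle.tail {m : ℕ} {β : ℕ → ℕ → ℕ} (hβ : IsTriangle (m + 1) β) :
    IsTriangle m (fun j => β (j + 1)) :=
  ⟨fun j i h => hβ.1 (j + 1) i (by omega), fun j i h => hβ.2.1 (j + 1) i (by omega),
    fun j i h => hβ.2.2 (j + 1) i (by omega)⟩

theorem IsTriangle.consColumn_tail {m : ℕ} {β : ℕ → ℕ → ℕ} (hβ : IsTriangle m β)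
    {a : Fin m → ℕ} (ha : ∀ i : Fin m, β 0 i = a i) :
    consColumn a (fun j => β (j + 1)) = β := by
  funext j i
  cases j with
  | zero =>
    by_cases h : i < m
    · simp [consColumn, h, ← ha]
    · simp [consColumn, h, hβ.1 0 i (by omega)]
  | succ j => rfl

variable {R : Type*} [CommRing R] (x : ℕ → R) (L : R)

/-- The weight of a triangle; entries of the first column contribute no variable. -/
def triangleWeight (m : ℕ) (β : ℕ → ℕ → ℕ) : R :=
  ∏ j ∈ range m, ∏ i ∈ range (m - (j + 1)),
    entryWeight L (β j i) (β (j + 1) i) (β j (i + 1)) * x (β (j + 1) i)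

theorem triangleWeight_consColumn {m : ℕ} (a : Fin (m + 1) → ℕ) (b : Fin m → ℕ)
    (β : ℕ → ℕ → ℕ) (hb : ∀ i : Fin m, β 0 i = b i) :
    triangleWeight x L (m + 1) (consColumn a β) =
      (∏ i : Fin m, entryWeight L (a i.castSucc) (b i) (a i.succ) * x (b i)) *
        triangleWeight x L m β := by
  rw [triangleWeight, prod_range_succ', mul_comm]
  congr 1
  · simp only [zero_add, Nat.add_sub_cancel, Finset.prod_range]
    refine prod_congr rfl fun i _ => ?_
    have := i.2
    simp [consColumn, hb, show (i : ℕ) < m + 1 by omega, Fin.succ, Fin.castSucc, Fin.castAdd,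
      Fin.castLE]
  · refine prod_congr rfl fun j _ => ?_
    rw [Nat.add_sub_add_right]
    rfl

/-- Triangles with prescribed first column form a finite set, and their weights add up to a
coefficient determinant. -/
theorem exists_triangles_sum_eq_coeffDet (m : ℕ) (a : Fin m → ℕ) (ha : StrictMono a) :
    ∃ S : Finset (ℕ → ℕ → ℕ), (∀ β, β ∈ S ↔ IsTriangle m β ∧ ∀ i : Fin m, β 0 i = a i) ∧
      ∑ β ∈ S, triangleWeight x L m β = coeffDet fun i => ratioSeries x L 1 (a i) := by
  induction m with
  | zero =>
    refine ⟨{fun _ _ => 0}, fun β => ?_, by simp [triangleWeight, coeffDet]⟩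
    simp only [mem_singleton, IsTriangle]
    constructor
    · rintro rfl
      simp
    · exact fun h => funext fun j => funext fun i => h.1.1 j i (Nat.zero_le _)
  | succ m ih =>
    choose! S hS hsum using ih
    set B := {b ∈ Fintype.piFinset fun i : Fin m => Icc (a i.castSucc) (a i.succ) |
      StrictMono b} with hB
    have hBmem : ∀ b, b ∈ B ↔ (∀ i, a i.castSucc ≤ b i ∧ b i ≤ a i.succ) ∧ StrictMono b := by
      simp [hB]
    refine ⟨(B.biUnion S).image (consColumn a), fun β => ?_, ?_⟩
    · simp only [mem_image, mem_biUnion]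
      constructor
      · rintro ⟨γ, ⟨b, hb, hγ⟩, rfl⟩
        obtain ⟨hb, hmono⟩ := (hBmem b).1 hb
        obtain ⟨hγ, h0⟩ := (hS b hmono γ).1 hγ
        exact ⟨isTriangle_consColumn ha hγ fun i => by rw [h0]; exact hb i,
          fun i => dif_pos i.2⟩
      · rintro ⟨hβ, h0⟩
        have hmono : StrictMono fun i : Fin m => β 1 i := by
          cases m with
          | zero => exact fun i => i.elim0
          | succ m =>
            refine Fin.strictMono_iff_lt_succ.2 fun i => ?_
            have := i.2
            simpa using hβ.2.2 1 i (by omega)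
        refine ⟨fun j => β (j + 1), ⟨fun i : Fin m => β 1 i, (hBmem _).2 ⟨fun i => ?_, hmono⟩,
          (hS _ hmono _).2 ⟨hβ.tail, fun i => rfl⟩⟩, hβ.consColumn_tail h0⟩
        have := i.2
        simpa [← h0] using hβ.2.1 0 i (by omega)
    · rw [sum_image (consColumn_injective a).injOn, sum_biUnion, coeffDet_interlace x L a ha]
      · refine sum_congr rfl fun b hb => ?_
        have hmono := ((hBmem b).1 hb).2
        rw [← hsum b hmono, mul_sum]
        exact sum_congr rfl fun γ hγ =>
          triangleWeight_consColumn x L a b γ ((hS b hmono γ).1 hγ).2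
      · intro b hb b' hb' hne
        refine disjoint_left.2 fun γ hγ hγ' => hne (funext fun i => ?_)
        rw [← ((hS b ((hBmem b).1 hb).2 γ).1 hγ).2 i,
          ← ((hS b' ((hBmem b').1 hb').2 γ).1 hγ').2 i]

end Triangles

section ArrayStatistics

open Finset

/-- The positions `(i, j)` with `j ≥ 1` in the staircase of order `n`. -/
def innerPositions (n : ℕ) : Finset (ℕ × ℕ) :=
  {p ∈ Icc 1 n ×ˢ Icc 1 n | p.2 ≤ n - p.1}

theorem mem_innerPositions {n : ℕ} {p : ℕ × ℕ} :
    p ∈ innerPositions n ↔ 1 ≤ p.1 ∧ 1 ≤ p.2 ∧ p.1 + p.2 ≤ n := by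
  simp only [innerPositions, mem_filter, mem_product, mem_Icc]
  omega

theorem prod_innerPositions {M : Type*} [CommMonoid M] (n : ℕ) (f : ℕ → ℕ → M) :
    ∏ p ∈ innerPositions n, f p.1 p.2 =
      ∏ j ∈ range n, ∏ i ∈ range (n - (j + 1)), f (i + 1) (j + 1) := by
  rw [prod_sigma']
  refine prod_bij' (fun p _ => ⟨p.2 - 1, p.1 - 1⟩) (fun q _ => (q.2 + 1, q.1 + 1))
    (fun p hp => ?_) (fun q hq => ?_) (fun p hp => ?_) (fun q hq => ?_) (fun p hp => ?_)
  · rw [mem_innerPositions] at hp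
    simp only [mem_sigma, mem_range]
    omega
  · simp only [mem_sigma, mem_range] at hq
    rw [mem_innerPositions]
    dsimp only
    omega
  · rw [mem_innerPositions] at hp
    ext <;> dsimp only <;> omega
  · simp
  · rw [mem_innerPositions] at hp
    simp only [show p.1 - 1 + 1 = p.1 by omega, show p.2 - 1 + 1 = p.2 by omega]

theorem Ccnt_eq_succ {n : ℕ} {α : ℕ → ℕ → ℕ} (hα : IsMT n α) {k : ℕ} (hk : k ∈ Icc 1 n) :
    Ccnt n α k = #{p ∈ innerPositions n | α p.1 p.2 = k} + 1 := by
  rw [Ccnt, ← card_insert_of_notMem (a := (k, 0))]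
  · congr 1
    ext ⟨i, j⟩
    rw [mem_Icc] at hk
    simp only [mem_filter, mem_product, mem_Icc, mem_range, mem_insert, mem_innerPositions,
      Prod.mk.injEq]
    rcases Nat.eq_zero_or_pos j with rfl | hj
    · constructor
      · rintro ⟨⟨⟨h1, h2⟩, -⟩, -, h⟩
        rw [hα.2.1 i h1 h2] at h
        exact Or.inl ⟨h, rfl⟩
      · rintro (⟨rfl, -⟩ | h)
        · exact ⟨⟨hk, by omega⟩, by omega, hα.2.1 _ hk.1 hk.2⟩
        · omega
    · constructor
      · rintro ⟨h, h', h''⟩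
        exact Or.inr ⟨by omega, h''⟩
      · rintro (h | ⟨h, h'⟩)
        · omega
        · exact ⟨by omega, by omega, h'⟩
  · simp [mem_innerPositions]

variable {R : Type*} [CommRing R] (x : ℕ → R) (L : R)

theorem triangleWeight_eq_of_isMT {n : ℕ} {α : ℕ → ℕ → ℕ} (hα : IsMT n α) :
    triangleWeight x L n (fun j i => α (i + 1) j) =
      L ^ Ecnt n α * (1 + L) ^ Ncnt n α * ∏ k ∈ Icc 1 n, x k ^ (Ccnt n α k - 1) := by
  have hx : ∏ p ∈ innerPositions n, x (α p.1 p.2) =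
      ∏ k ∈ Icc 1 n, x k ^ (Ccnt n α k - 1) := by
    rw [← prod_fiberwise_of_maps_to (t := Icc 1 n) (g := fun p => α p.1 p.2)]
    · refine prod_congr rfl fun k hk => ?_
      rw [Ccnt_eq_succ hα hk, Nat.add_sub_cancel]
      exact prod_eq_pow_card fun p hp => by rw [(mem_filter.1 hp).2]
    · intro p hp
      rw [mem_innerPositions] at hp
      have := hα.2.2.1 p.1 p.2 (by omega) (by omega) (by omega)
      rw [mem_Icc]
      omega
  have hw := prod_innerPositions n fun i j =>
    entryWeight L (α i (j - 1)) (α i j) (α (i + 1) (j - 1)) * x (α i j)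
  rw [triangleWeight]
  simp only [Nat.add_sub_cancel] at hw
  rw [← hw, prod_mul_distrib, hx]
  simp only [entryWeight, prod_mul_distrib, ← prod_filter, prod_const, innerPositions,
    filter_filter]
  rfl

theorem isTriangle_of_isMT {n : ℕ} {α : ℕ → ℕ → ℕ} (hα : IsMT n α) :
    IsTriangle n (fun j i => α (i + 1) j) := by
  obtain ⟨h0, -, -, h3, h4, h5⟩ := hα
  exact ⟨fun j i h => h0 _ _ (by omega),
    fun j i h => ⟨h3 _ _ (by omega) (by omega) (by omega),
      h5 (i + 1) (j + 1) (by omega) (by omega) (by omega) (by omega)⟩,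
    fun j i h => h4 _ _ (by omega) (by omega) (by omega)⟩

theorem IsTriangle.bounds {n : ℕ} {β : ℕ → ℕ → ℕ} (hβ : IsTriangle n β)
    (h0 : ∀ i, i < n → β 0 i = i + 1) (j i : ℕ) (h : j + i < n) :
    i + 1 ≤ β j i ∧ β j i ≤ i + 1 + j := by
  induction j generalizing i with
  | zero => simp [h0 i (by omega)]
  | succ j ih =>
    have h1 := hβ.2.1 j i (by omega)
    have h2 := ih i (by omega)
    have h3 := ih (i + 1) (by omega)
    omega

theorem isMT_of_isTriangle {n : ℕ} {β : ℕ → ℕ → ℕ} (hβ : IsTriangle n β)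
    (h0 : ∀ i, i < n → β 0 i = i + 1) :
    IsMT n (fun i j => if i = 0 then 0 else β j (i - 1)) := by
  refine ⟨fun i j h => ?_, fun i h1 h2 => ?_, fun i j h1 h2 h3 => ?_, fun i j h1 h2 h3 => ?_,
    fun i j h1 h2 h3 => ?_, fun i j h1 h2 h3 h4 => ?_⟩
  · dsimp only
    rcases Nat.eq_zero_or_pos i with rfl | hi
    · rfl
    · rw [if_neg (by omega)]
      exact hβ.1 _ _ (by omega)
  · dsimp only
    rw [if_neg (by omega), h0 _ (by omega)]
    omega
  · dsimp only
    rw [if_neg (by omega)]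
    have := hβ.bounds h0 j (i - 1) (by omega)
    omega
  · dsimp only
    rw [if_neg (by omega), if_neg (by omega)]
    exact (hβ.2.1 j (i - 1) (by omega)).1
  · dsimp only
    rw [if_neg (by omega), if_neg (by omega)]
    obtain ⟨i, rfl⟩ := Nat.exists_eq_add_of_le' h1
    exact hβ.2.2 j i (by omega)
  · dsimp only
    rw [if_neg (by omega), if_neg (by omega)]
    obtain ⟨i, rfl⟩ := Nat.exists_eq_add_of_le' h1
    obtain ⟨j, rfl⟩ := Nat.exists_eq_add_of_le' h3
    exact (hβ.2.1 j i (by omega)).2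

theorem bijOn_isMT_isTriangle (n : ℕ) :
    Set.BijOn (fun (α : ℕ → ℕ → ℕ) j i => α (i + 1) j) {α | IsMT n α}
      {β | IsTriangle n β ∧ ∀ i : Fin n, β 0 i = i + 1} := by
  refine ⟨fun α hα => ⟨isTriangle_of_isMT hα, fun i => hα.2.1 _ (by omega) (by omega)⟩,
    fun α hα α' hα' h => ?_, fun β hβ => ?_⟩
  · funext i j
    cases i with
    | zero => rw [hα.1 0 j (by omega), hα'.1 0 j (by omega)]
    | succ i => exact congrFun (congrFun h j) i
  · exact ⟨_, isMT_of_isTriangle hβ.1 fun i hi => hβ.2 ⟨i, hi⟩, by simp⟩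

end ArrayStatistics

theorem prod_pairs_lt {M : Type*} [CommMonoid M] (n : ℕ) (f : ℕ → ℕ → M) :
    ∏ p ∈ (Finset.Icc 1 n ×ˢ Finset.Icc 1 n).filter (fun p => p.1 < p.2), f p.1 p.2 =
      ∏ e ∈ Finset.range n, ∏ i ∈ Finset.range (n - (e + 1)), f (i + 1) (i + 1 + (1 + e)) := by
  rw [Finset.prod_sigma']
  refine Finset.prod_bij' (fun p _ => ⟨p.2 - p.1 - 1, p.1 - 1⟩)
    (fun q _ => (q.2 + 1, q.2 + 1 + (1 + q.1)))
    (fun p hp => ?_) (fun q hq => ?_) (fun p hp => ?_) (fun q hq => ?_) (fun p hp => ?_)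
  · simp only [Finset.mem_filter, Finset.mem_product, Finset.mem_Icc] at hp
    simp only [Finset.mem_sigma, Finset.mem_range]
    omega
  · simp only [Finset.mem_sigma, Finset.mem_range] at hq
    simp only [Finset.mem_filter, Finset.mem_product, Finset.mem_Icc]
    omega
  · simp only [Finset.mem_filter, Finset.mem_product, Finset.mem_Icc] at hp
    ext <;> dsimp only <;> omega
  · refine Sigma.ext ?_ (heq_of_eq ?_) <;> dsimp only <;> omega
  · simp only [Finset.mem_filter, Finset.mem_product, Finset.mem_Icc] at hp
    simp only [show p.1 - 1 + 1 = p.1 by omega,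
      show p.1 + (1 + (p.2 - p.1 - 1)) = p.2 by omega]

/-- The tournament generating function expanded as a sum over ASM arrays, in the
polynomial ring `ℤ[λ, x_1, …, x_n]` (realized inside `MvPolynomial (Option ℕ) ℤ`,
with `X none = λ` and `X (some k) = x_k`):
`∏_{1≤i<j≤n} (x_i + λ x_j) = Σ_{α ∈ MT_n} λ^{E(α)} (1+λ)^{N(α)} ∏_k x_k^{C_k(α)-1}`. -/
theorem stmt14 (n : ℕ) (hn : 1 ≤ n) :
    (∏ p ∈ (Finset.Icc 1 n ×ˢ Finset.Icc 1 n).filter (fun p => p.1 < p.2),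
        (MvPolynomial.X (some p.1) +
          MvPolynomial.X none * MvPolynomial.X (some p.2) :
            MvPolynomial (Option ℕ) ℤ)) =
      ∑ᶠ α ∈ {α : ℕ → ℕ → ℕ | IsMT n α},
        MvPolynomial.X none ^ Ecnt n α *
          (1 + MvPolynomial.X none) ^ Ncnt n α *
          ∏ k ∈ Finset.Icc 1 n, MvPolynomial.X (some k) ^ (Ccnt n α k - 1) := by
  obtain ⟨S, hS, hsum⟩ := exists_triangles_sum_eq_coeffDet
    (fun k => (MvPolynomial.X (some k) : MvPolynomial (Option ℕ) ℤ)) (MvPolynomial.X none) n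
    (fun i : Fin n => (i : ℕ) + 1) (fun i j hij => by simpa using hij)
  have hset : {β | IsTriangle n β ∧ ∀ i : Fin n, β 0 i = i + 1} =
      (S : Set (ℕ → ℕ → ℕ)) := by
    ext β
    exact (hS β).symm
  have hbij := bijOn_isMT_isTriangle n
  rw [hset] at hbij
  rw [finsum_mem_eq_of_bijOn (s := {α | IsMT n α}) _ hbij
      fun α hα => (triangleWeight_eq_of_isMT (fun k => MvPolynomial.X (some k)) _ hα).symm,
    finsum_mem_coe_finset, hsum, coeffDet_ratioSeries]
  exact prod_pairs_lt n fun i j => MvPolynomial.X (some i) +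
    MvPolynomial.X none * MvPolynomial.X (some j)
end

section
/- For every integer n ≥ 1, 2^{binomial(n,2)} = Σ_{A} 2^{N(A)}, where the sum is over all n×n alternating sign matrices A and N(A) denotes the number of entries of A equal to −1. -/
open scoped Classical

/-- An `n × n` alternating sign matrix: entries in `{-1,0,1}`, all row and column
sums equal to 1, and all partial row and column sums equal to 0 or 1. -/
def IsASM (n : ℕ) (A : Fin n → Fin n → ℤ) : Prop :=
  (∀ i j, A i j = -1 ∨ A i j = 0 ∨ A i j = 1) ∧
  (∀ i, ∑ j, A i j = 1) ∧
  (∀ j, ∑ i, A i j = 1) ∧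
  (∀ i k, (∑ j ∈ Finset.Iic k, A i j) = 0 ∨ (∑ j ∈ Finset.Iic k, A i j) = 1) ∧
  (∀ j k, (∑ i ∈ Finset.Iic k, A i j) = 0 ∨ (∑ i ∈ Finset.Iic k, A i j) = 1)

/-- The number of `-1` entries of a matrix. -/
def negCount (n : ℕ) (A : Fin n → Fin n → ℤ) : ℕ :=
  (Finset.univ.filter (fun p : Fin n × Fin n => A p.1 p.2 = -1)).card

namespace AlternatingSign

/-- The matrix of binomial coefficients `(k i).choose j`. -/
def binomMatrix {m : ℕ} (k : Fin m → ℕ) : Matrix (Fin m) (Fin m) ℤ :=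
  Matrix.of fun i j => ((k i).choose j : ℤ)

/-- Summation weight on an interval: endpoints count once, interior points twice. -/
def trapezoidWeight (a b x : ℕ) : ℤ := if x = a ∨ x = b then 1 else 2

/-- The trapezoidal antiderivative of `x ↦ x.choose j`. -/
def trapezoidPrimitive (j x : ℕ) : ℤ := 2 * (x.choose (j + 1) : ℤ) + (x.choose j : ℤ)

theorem trapezoidPrimitive_succ (j x : ℕ) :
    trapezoidPrimitive j (x + 1) =
      trapezoidPrimitive j x + ((x.choose j : ℤ) + ((x + 1).choose j : ℤ)) := by
  unfold trapezoidPrimitive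
  rw [Nat.choose_succ_succ x j]
  push_cast
  ring

theorem sum_trapezoidWeight_mul_choose (j : ℕ) {a b : ℕ} (hab : a < b) :
    ∑ x ∈ Finset.Icc a b, trapezoidWeight a b x * (x.choose j : ℤ) =
      trapezoidPrimitive j b - trapezoidPrimitive j a := by
  have hw : ∀ x ∈ Finset.Icc a b, trapezoidWeight a b x * (x.choose j : ℤ) =
      (if x < b then (x.choose j : ℤ) else 0) + (if a < x then (x.choose j : ℤ) else 0) := by
    intro x hx
    rw [Finset.mem_Icc] at hx
    unfold trapezoidWeight
    split_ifs <;> omega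
  rw [Finset.sum_congr rfl hw]
  clear hw
  rw [Finset.sum_add_distrib, ← Finset.sum_filter, ← Finset.sum_filter]
  have h1 : (Finset.Icc a b).filter (fun x => x < b) = Finset.Ico a b := by
    ext; simp; omega
  have h2 : (Finset.Icc a b).filter (fun x => a < x) = Finset.Ico (a + 1) (b + 1) := by
    ext; simp; omega
  rw [h1, h2, ← Finset.sum_Ico_add' (fun x => (x.choose j : ℤ)) a b 1, ← Finset.sum_add_distrib,
    ← Finset.sum_Ico_sub (trapezoidPrimitive j) hab.le]
  refine Finset.sum_congr rfl fun x _ => ?_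
  rw [trapezoidPrimitive_succ]
  ring

theorem det_trapezoidPrimitive_sub {m : ℕ} (k : Fin (m + 1) → ℕ) :
    (Matrix.of fun i j : Fin m =>
      trapezoidPrimitive j (k i.succ) - trapezoidPrimitive j (k i.castSucc)).det =
      2 ^ m * (binomMatrix k).det := by
  let P : Matrix (Fin (m + 1)) (Fin (m + 1)) ℤ :=
    Matrix.of fun i => Fin.cons 1 fun j : Fin m => trapezoidPrimitive j (k i)
  let D : Matrix (Fin (m + 1)) (Fin (m + 1)) ℤ :=
    Matrix.of (Fin.cons (P 0) fun i : Fin m => P i.succ - P i.castSucc)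
  let U : Matrix (Fin (m + 1)) (Fin (m + 1)) ℤ :=
    Matrix.of fun l => Fin.cons (if l = 0 then 1 else 0) fun j : Fin m =>
      (if l = j.succ then 2 else 0) + (if l = j.castSucc then 1 else 0)
  have hPD : P.det = D.det := by
    refine Matrix.det_eq_of_forall_row_eq_smul_add_pred (fun _ => 1) (fun j => rfl) fun i j => ?_
    simp [D]
  have hPU : P = binomMatrix k * U := by
    ext i j
    refine Fin.cases ?_ (fun j => ?_) j
    · simp [P, U, binomMatrix, Matrix.mul_apply]
    · simp [P, U, binomMatrix, Matrix.mul_apply, mul_add, Finset.sum_add_distrib,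
        trapezoidPrimitive, mul_comm]
  have hU : U.det = 2 ^ m := by
    have hdiag : ∀ j : Fin m, U j.succ j.succ = 2 := fun j => by
      simp [U, (Fin.castSucc_lt_succ (i := j)).ne']
    rw [Matrix.det_of_isUpperTriangular, Fin.prod_univ_succ]
    · simp only [hdiag]
      simp [U]
    · intro i j hij
      refine Fin.cases ?_ (fun j hij => ?_) j hij
      · intro hij
        simp [U, (show (0 : Fin (m + 1)) < i from hij).ne']
      · have hij' : (j : ℕ) + 1 < i := hij
        simp only [U, Matrix.of_apply, Fin.cons_succ, Fin.ext_iff, Fin.val_succ, Fin.val_castSucc]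
        split_ifs <;> omega
  rw [mul_comm, ← hU, ← Matrix.det_mul, ← hPU, hPD, Matrix.det_succ_column_zero,
    Fin.sum_univ_succ]
  simp [D, P, Matrix.submatrix]

theorem det_binomMatrix_fin (n : ℕ) : (binomMatrix fun i : Fin n => (i : ℕ)).det = 1 := by
  rw [Matrix.det_of_isLowerTriangular]
  · simp [binomMatrix]
  · intro i j hij
    have hij' : (i : ℕ) < j := hij
    simp [binomMatrix, Nat.choose_eq_zero_of_lt hij']

theorem sum_piFinset_trapezoidWeight_mul_det {N m : ℕ} {k : Fin (m + 1) → Fin N}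
    (hk : StrictMono k) :
    ∑ l ∈ Fintype.piFinset fun i : Fin m => Finset.Icc (k i.castSucc) (k i.succ),
      (∏ i, trapezoidWeight (k i.castSucc) (k i.succ) (l i)) *
        (binomMatrix fun i => (l i : ℕ)).det =
      2 ^ m * (binomMatrix fun i => (k i : ℕ)).det := by
  rw [← det_trapezoidPrimitive_sub]
  have h := (Matrix.detRowAlternating (R := ℤ) (n := Fin m)).toMultilinearMap.map_sum_finset
    (fun (i : Fin m) (x : Fin N) => trapezoidWeight (k i.castSucc) (k i.succ) x •
      fun j : Fin m => ((x : ℕ).choose j : ℤ))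
    (fun i : Fin m => Finset.Icc (k i.castSucc) (k i.succ))
  simp only [MultilinearMap.map_smul_univ] at h
  refine h.symm.trans (congrArg Matrix.det ?_)
  ext i j
  rw [Matrix.of_apply, ← sum_trapezoidWeight_mul_choose j (hk Fin.castSucc_lt_succ),
    ← Fin.map_valEmbedding_Icc, Finset.sum_map, Finset.sum_apply]
  rfl

section Rows

variable {N : ℕ}

/-- The integer-valued indicator vector of a set of columns. -/
def indicatorRow (S : Finset (Fin N)) (j : Fin N) : ℤ := if j ∈ S then 1 else 0

/-- The row condition for alternating sign matrices. -/
def IsAlternatingRow (r : Fin N → ℤ) : Prop :=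
  (∀ k, ∑ j ∈ Finset.Iic k, r j = 0 ∨ ∑ j ∈ Finset.Iic k, r j = 1) ∧ ∑ j, r j = 1

/-- The sets `S'` such that the row `1_S - 1_{S'}` is alternating. -/
noncomputable def interlacingSets (S : Finset (Fin N)) : Finset (Finset (Fin N)) :=
  Finset.univ.filter fun S' => IsAlternatingRow fun j => indicatorRow S j - indicatorRow S' j

theorem sum_indicatorRow (S : Finset (Fin N)) : ∑ j, indicatorRow S j = S.card := by
  simp [indicatorRow]

theorem sum_Iic_indicatorRow_image {m : ℕ} {k : Fin m → Fin N} (hk : StrictMono k) (x : Fin N) :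
    ∑ j ∈ Finset.Iic x, indicatorRow (Finset.univ.image k) j =
      ∑ i, if k i ≤ x then 1 else 0 := by
  simp only [indicatorRow, Finset.sum_boole]
  rw [← Finset.card_image_of_injective _ hk.injective]
  congr 2
  ext y
  simp only [Finset.mem_filter, Finset.mem_Iic, Finset.mem_image, Finset.mem_univ, true_and]
  constructor
  · rintro ⟨h, i, rfl⟩
    exact ⟨i, h, rfl⟩
  · rintro ⟨i, h, rfl⟩
    exact ⟨h, i, rfl⟩

theorem le_iff_lt_sum {m : ℕ} {k : Fin m → Fin N} (hk : StrictMono k) (x : Fin N) (i : Fin m) :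
    k i ≤ x ↔ ((i : ℕ) : ℤ) < ∑ i, if k i ≤ x then 1 else 0 := by
  rw [Finset.sum_boole, Nat.cast_lt]
  constructor
  · intro h
    have : Finset.Iic i ⊆ Finset.univ.filter fun i => k i ≤ x := fun j hj => by
      simpa using (hk.monotone (Finset.mem_Iic.1 hj)).trans h
    simpa using Finset.card_le_card this
  · intro h
    by_contra hx
    have : (Finset.univ.filter fun i => k i ≤ x) ⊆ Finset.Iio i := fun j hj => by
      rw [Finset.mem_Iio, ← hk.lt_iff_lt]
      exact (Finset.mem_filter.1 hj).2.trans_lt (not_le.1 hx)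
    have := Finset.card_le_card this
    simp at this
    omega

theorem sum_le_eq_of_strictMono {m : ℕ} {k : Fin m → Fin N} (hk : StrictMono k) (i : Fin m) :
    (∑ j, if k j ≤ k i then 1 else 0 : ℤ) = (i : ℕ) + 1 := by
  simp only [hk.le_iff_le, Finset.sum_boole]
  rw [show (Finset.univ.filter fun j => j ≤ i) = Finset.Iic i by ext; simp, Fin.card_Iic]
  push_cast
  rfl

theorem image_mem_interlacingSets_iff {m : ℕ} {k : Fin (m + 1) → Fin N} {l : Fin m → Fin N}
    (hk : StrictMono k) (hl : StrictMono l) :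
    Finset.univ.image l ∈ interlacingSets (Finset.univ.image k) ↔
      ∀ i, k i.castSucc ≤ l i ∧ l i ≤ k i.succ := by
  simp only [interlacingSets, Finset.mem_filter, Finset.mem_univ, true_and, IsAlternatingRow,
    Finset.sum_sub_distrib, sum_indicatorRow, sum_Iic_indicatorRow_image hk,
    sum_Iic_indicatorRow_image hl, Finset.card_image_of_injective _ hk.injective,
    Finset.card_image_of_injective _ hl.injective, Finset.card_univ, Fintype.card_fin]
  constructor
  · rintro ⟨h, -⟩ i
    constructor
    · rw [le_iff_lt_sum hk, Fin.val_castSucc]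
      have := h (l i)
      rw [sum_le_eq_of_strictMono hl] at this
      omega
    · rw [le_iff_lt_sum hl]
      have := h (k i.succ)
      rw [sum_le_eq_of_strictMono hk, Fin.val_succ] at this
      omega
  · refine fun h => ⟨fun x => ?_, by push_cast; ring⟩
    have h1 : (∑ i : Fin m, if k i.succ ≤ x then 1 else 0 : ℤ) ≤
        ∑ i, if l i ≤ x then 1 else 0 := Finset.sum_le_sum fun i _ => by
      have := (h i).2
      split_ifs <;> grind
    have h2 : (∑ i, if l i ≤ x then 1 else 0 : ℤ) ≤
        ∑ i : Fin m, if k i.castSucc ≤ x then 1 else 0 := Finset.sum_le_sum fun i _ => by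
      have := (h i).1
      split_ifs <;> grind
    have h3 := Fin.sum_univ_succ fun i => (if k i ≤ x then 1 else 0 : ℤ)
    have h4 := Fin.sum_univ_castSucc fun i => (if k i ≤ x then 1 else 0 : ℤ)
    split_ifs at h3 h4 <;> omega

theorem card_of_mem_interlacingSets {S S' : Finset (Fin N)} (h : S' ∈ interlacingSets S) :
    S.card = S'.card + 1 := by
  have := (Finset.mem_filter.1 h).2.2
  rw [Finset.sum_sub_distrib, sum_indicatorRow, sum_indicatorRow] at this
  omega

theorem prod_trapezoidWeight_eq {m : ℕ} {k : Fin (m + 1) → Fin N} {l : Fin m → Fin N}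
    (hk : StrictMono k) (hl : StrictMono l) (h : ∀ i, k i.castSucc ≤ l i ∧ l i ≤ k i.succ) :
    ∏ i, trapezoidWeight (k i.castSucc) (k i.succ) (l i) =
      2 ^ (Finset.univ.image l \ Finset.univ.image k).card := by
  have hmem : ∀ i, l i ∈ Finset.univ.image k ↔ l i = k i.castSucc ∨ l i = k i.succ := by
    intro i
    constructor
    · intro hi
      obtain ⟨j, -, hj⟩ := Finset.mem_image.1 hi
      rcases le_or_gt j i.castSucc with hji | hji
      · exact Or.inl (le_antisymm (hj ▸ hk.monotone hji) (h i).1)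
      · exact Or.inr (le_antisymm (h i).2 (hj ▸ hk.monotone (Fin.castSucc_lt_iff_succ_le.1 hji)))
    · rintro (hi | hi) <;> rw [hi] <;> exact Finset.mem_image_of_mem _ (Finset.mem_univ _)
  have himage : Finset.univ.image l \ Finset.univ.image k =
      (Finset.univ.filter fun i => l i ∉ Finset.univ.image k).image l := by
    ext x
    simp only [Finset.mem_sdiff, Finset.mem_image, Finset.mem_filter, Finset.mem_univ, true_and]
    grind
  rw [himage, Finset.card_image_of_injective _ hl.injective, ← Finset.prod_const,
    Finset.prod_filter]
  refine Finset.prod_congr rfl fun i _ => ?_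
  have := hmem i
  simp only [trapezoidWeight, Fin.val_inj, ← this]
  split_ifs <;> simp_all

theorem sum_interlacingSets {m : ℕ} {k : Fin (m + 1) → Fin N} (hk : StrictMono k)
    (f : Finset (Fin N) → ℤ) (c : ℤ)
    (hf : ∀ l : Fin m → Fin N, StrictMono l →
      f (Finset.univ.image l) = c * (binomMatrix fun i => (l i : ℕ)).det) :
    ∑ S' ∈ interlacingSets (Finset.univ.image k),
      2 ^ (S' \ Finset.univ.image k).card * f S' =
      c * 2 ^ m * (binomMatrix fun i => (k i : ℕ)).det := by
  rw [mul_assoc, ← sum_piFinset_trapezoidWeight_mul_det hk, Finset.mul_sum]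
  have hsub : (Fintype.piFinset fun i : Fin m => Finset.Icc (k i.castSucc) (k i.succ)).filter
      StrictMono ⊆ _ := Finset.filter_subset _ _
  rw [← Finset.sum_subset hsub]
  · symm
    refine Finset.sum_nbij (fun l => Finset.univ.image l) ?_ ?_ ?_ ?_
    · intro l hl
      simp only [Finset.mem_filter, Fintype.mem_piFinset, Finset.mem_Icc] at hl
      exact (image_mem_interlacingSets_iff hk hl.2).2 hl.1
    · intro l hl l' hl' heq
      have hl := (Finset.mem_filter.1 hl).2
      have hl' := (Finset.mem_filter.1 hl').2
      refine (hl.range_inj hl').1 ?_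
      simpa using congrArg (fun s : Finset (Fin N) => (s : Set (Fin N))) heq
    · intro S' hS'
      have hS' : S' ∈ interlacingSets (Finset.univ.image k) := hS'
      have hcard := card_of_mem_interlacingSets hS'
      rw [Finset.card_image_of_injective _ hk.injective, Finset.card_univ, Fintype.card_fin,
        Nat.add_right_cancel_iff] at hcard
      have himage : Finset.univ.image (S'.orderEmbOfFin hcard.symm) = S' := by simp
      have hmono := (S'.orderEmbOfFin hcard.symm).strictMono
      refine ⟨S'.orderEmbOfFin hcard.symm, ?_, himage⟩
      rw [← himage, image_mem_interlacingSets_iff hk hmono] at hS'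
      simpa using ⟨hS', hmono⟩
    · intro l hl
      simp only [Finset.mem_filter, Fintype.mem_piFinset, Finset.mem_Icc] at hl
      rw [hf l hl.2, prod_trapezoidWeight_eq hk hl.2 hl.1]
      ring
  · intro l hl hl'
    simp only [Finset.mem_filter, Fintype.mem_piFinset, Finset.mem_Icc] at hl hl'
    have hmono : Monotone l := by
      intro i j hij
      rcases hij.eq_or_lt with rfl | hij
      · exact le_rfl
      · exact (hl i).2.trans ((hk.monotone (Fin.succ_le_castSucc_iff.2 hij)).trans (hl j).1)
    have hinj : ¬ Function.Injective l := fun hinj => hl' ⟨hl, hmono.strictMono_of_injective hinj⟩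
    simp only [Function.Injective, not_forall] at hinj
    obtain ⟨i, j, hij, hne⟩ := hinj
    rw [Matrix.det_zero_of_row_eq hne, mul_zero, mul_zero]
    ext x
    simp [binomMatrix, hij]

/-- The first `m` rows of a matrix with the alternating sign conditions whose column sums are the
indicator vector of `S`. -/
def IsPartialASM (m : ℕ) (S : Finset (Fin N)) (A : Fin m → Fin N → ℤ) : Prop :=
  (∀ i j, A i j = -1 ∨ A i j = 0 ∨ A i j = 1) ∧
  (∀ i, IsAlternatingRow (A i)) ∧
  (∀ j (k : ℕ), (∑ i : Fin m, if (i : ℕ) < k then A i j else 0) = 0 ∨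
    (∑ i : Fin m, if (i : ℕ) < k then A i j else 0) = 1) ∧
  ∀ j, ∑ i, A i j = indicatorRow S j

/-- The finite set of matrices satisfying `IsPartialASM m S`, built row by row. -/
noncomputable def partialASMs : (m : ℕ) → Finset (Fin N) → Finset (Fin m → Fin N → ℤ)
  | 0, S => if S = ∅ then {Fin.elim0} else ∅
  | m + 1, S => (interlacingSets S).biUnion fun S' => (partialASMs m S').image fun A =>
      Fin.snoc (α := fun _ => Fin N → ℤ) A fun j => indicatorRow S j - indicatorRow S' j

theorem indicatorRow_injective : Function.Injective (indicatorRow (N := N)) := by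
  intro S S' h
  ext j
  have := congrFun h j
  unfold indicatorRow at this
  split_ifs at this <;> simp_all

theorem isPartialASM_snoc {m : ℕ} {S S' : Finset (Fin N)} {A : Fin m → Fin N → ℤ}
    (hA : IsPartialASM m S' A) (hS : S' ∈ interlacingSets S) :
    IsPartialASM (m + 1) S (Fin.snoc (α := fun _ => Fin N → ℤ) A
      fun j => indicatorRow S j - indicatorRow S' j) := by
  obtain ⟨hentry, hrow, hpartial, hsum⟩ := hA
  refine ⟨fun i => ?_, fun i => ?_, fun j k => ?_, fun j => ?_⟩
  · refine Fin.lastCases ?_ (fun i => ?_) i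
    · intro j
      simp only [Fin.snoc_last, indicatorRow]
      split_ifs <;> simp
    · simpa using hentry i
  · refine Fin.lastCases ?_ (fun i => ?_) i
    · simpa using (Finset.mem_filter.1 hS).2
    · simpa using hrow i
  · simp only [Fin.sum_univ_castSucc, Fin.snoc_castSucc, Fin.snoc_last, Fin.val_castSucc,
      Fin.val_last]
    by_cases hk : m < k
    · have : ∀ i : Fin m, (i : ℕ) < k := fun i => i.2.trans hk
      simp only [this, hk, if_true, hsum, indicatorRow]
      split_ifs <;> simp
    · simpa [hk] using hpartial j k
  · simp [Fin.sum_univ_castSucc, hsum]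

theorem exists_eq_snoc_of_isPartialASM {m : ℕ} {S : Finset (Fin N)}
    {A : Fin (m + 1) → Fin N → ℤ} (hA : IsPartialASM (m + 1) S A) :
    ∃ S' ∈ interlacingSets S, ∃ B, IsPartialASM m S' B ∧
      Fin.snoc (α := fun _ => Fin N → ℤ) B (fun j => indicatorRow S j - indicatorRow S' j) = A := by
  obtain ⟨hentry, hrow, hpartial, hsum⟩ := hA
  let S' : Finset (Fin N) := Finset.univ.filter fun j => ∑ i : Fin m, A i.castSucc j = 1
  have hS' : ∀ j, ∑ i : Fin m, A i.castSucc j = indicatorRow S' j := by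
    intro j
    have := hpartial j m
    simp only [Fin.sum_univ_castSucc, Fin.val_castSucc, Fin.is_lt, if_true, Fin.val_last,
      lt_irrefl, if_false, add_zero] at this
    simp only [indicatorRow, S', Finset.mem_filter, Finset.mem_univ, true_and]
    split_ifs <;> tauto
  have hlast : (fun j => indicatorRow S j - indicatorRow S' j) = A (Fin.last m) := by
    ext j
    rw [← hsum, ← hS', Fin.sum_univ_castSucc]
    ring
  refine ⟨S', ?_, Fin.init A, ⟨fun i j => hentry _ _, fun i => hrow _, fun j k => ?_, hS'⟩, ?_⟩
  · simpa [interlacingSets, hlast] using hrow (Fin.last m)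
  · have := hpartial j (min k m)
    simpa [Fin.sum_univ_castSucc, Fin.init] using this
  · rw [hlast]
    exact Fin.snoc_init_self A

theorem mem_partialASMs {m : ℕ} {S : Finset (Fin N)} {A : Fin m → Fin N → ℤ} :
    A ∈ partialASMs m S ↔ IsPartialASM m S A := by
  induction m generalizing S with
  | zero =>
    have h : (∀ j, 0 = indicatorRow S j) ↔ S = ∅ := by
      rw [← indicatorRow_injective.eq_iff, funext_iff]
      simp [indicatorRow, eq_comm]
    simp only [partialASMs, IsPartialASM, Finset.univ_eq_empty, Finset.sum_empty, h]
    split_ifs with hS <;> simp [hS, Subsingleton.elim A Fin.elim0]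
  | succ m ih =>
    simp only [partialASMs, Finset.mem_biUnion, Finset.mem_image, ih]
    constructor
    · rintro ⟨S', hS', B, hB, rfl⟩
      exact isPartialASM_snoc hB hS'
    · exact exists_eq_snoc_of_isPartialASM

/-- The number of entries `-1` of a rectangular matrix, counted by rows. -/
def rowNegCount {m : ℕ} (A : Fin m → Fin N → ℤ) : ℕ :=
  ∑ i, (Finset.univ.filter fun j => A i j = -1).card

theorem rowNegCount_snoc {m : ℕ} (A : Fin m → Fin N → ℤ) (S S' : Finset (Fin N)) :
    rowNegCount (Fin.snoc (α := fun _ => Fin N → ℤ) A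
      fun j => indicatorRow S j - indicatorRow S' j) = rowNegCount A + (S' \ S).card := by
  have : (Finset.univ.filter fun j => indicatorRow S j - indicatorRow S' j = -1) = S' \ S := by
    ext j
    simp only [Finset.mem_filter, Finset.mem_univ, true_and, Finset.mem_sdiff]
    unfold indicatorRow
    split_ifs <;> simp_all
  simp [rowNegCount, Fin.sum_univ_castSucc, this]

theorem sum_partialASMs_succ (m : ℕ) (S : Finset (Fin N)) :
    ∑ A ∈ partialASMs (m + 1) S, (2 : ℤ) ^ rowNegCount A =
      ∑ S' ∈ interlacingSets S,
        2 ^ (S' \ S).card * ∑ A ∈ partialASMs m S', (2 : ℤ) ^ rowNegCount A := by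
  rw [partialASMs, Finset.sum_biUnion]
  · refine Finset.sum_congr rfl fun S' _ => ?_
    rw [Finset.sum_image fun A _ B _ h => (Fin.snoc_injective2 h).1, Finset.mul_sum]
    refine Finset.sum_congr rfl fun A _ => ?_
    rw [rowNegCount_snoc, pow_add, mul_comm]
  · intro S₁ _ S₂ _ hne
    rw [Function.onFun, Finset.disjoint_left]
    intro A h₁ h₂
    obtain ⟨B₁, -, rfl⟩ := Finset.mem_image.1 h₁
    obtain ⟨B₂, -, h⟩ := Finset.mem_image.1 h₂
    refine hne (indicatorRow_injective (funext fun j => ?_))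
    have := congrFun (Fin.snoc_injective2 h).2 j
    linarith

theorem sum_partialASMs_image {m : ℕ} {k : Fin m → Fin N} (hk : StrictMono k) :
    ∑ A ∈ partialASMs m (Finset.univ.image k), (2 : ℤ) ^ rowNegCount A =
      2 ^ m.choose 2 * (binomMatrix fun i => (k i : ℕ)).det := by
  induction m with
  | zero => simp [partialASMs, rowNegCount]
  | succ m ih =>
    rw [sum_partialASMs_succ, sum_interlacingSets hk _ (2 ^ m.choose 2) fun l hl => ih hl,
      Nat.choose_succ_succ' m 1, Nat.choose_one_right, pow_add]
    ring

end Rows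

theorem isASM_iff_isPartialASM_univ {n : ℕ} {A : Fin n → Fin n → ℤ} :
    IsASM n A ↔ IsPartialASM n Finset.univ A := by
  have hIic : ∀ j (k : Fin n), (∑ i : Fin n, if (i : ℕ) < k + 1 then A i j else 0) =
      ∑ i ∈ Finset.Iic k, A i j := by
    intro j k
    rw [← Finset.sum_filter]
    refine Finset.sum_congr (Finset.ext fun i => ?_) fun _ _ => rfl
    simp only [Finset.mem_filter, Finset.mem_univ, true_and, Finset.mem_Iic, Fin.le_def,
      Nat.lt_succ_iff]
  constructor
  · rintro ⟨hentry, hrow, hcol, hrow', hcol'⟩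
    refine ⟨hentry, fun i => ⟨hrow' i, hrow i⟩, fun j k => ?_, fun j => ?_⟩
    · rcases Nat.eq_zero_or_pos k with rfl | hk
      · simp
      · rcases le_or_gt k n with hkn | hkn
        · obtain ⟨k, rfl⟩ := Nat.exists_eq_succ_of_ne_zero hk.ne'
          have := hcol' j ⟨k, hkn⟩
          rwa [← hIic] at this
        · have : ∀ i : Fin n, (i : ℕ) < k := fun i => i.2.trans hkn
          simp [this, hcol]
    · simp [hcol, indicatorRow]
  · rintro ⟨hentry, hrow, hpartial, hsum⟩
    refine ⟨hentry, fun i => (hrow i).2, fun j => ?_, fun i => (hrow i).1, fun j k => ?_⟩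
    · simp [hsum, indicatorRow]
    · simpa only [hIic] using hpartial j (k + 1)

theorem negCount_eq_rowNegCount {n : ℕ} (A : Fin n → Fin n → ℤ) :
    negCount n A = rowNegCount A := by
  simp only [negCount, rowNegCount, Finset.card_filter]
  exact Fintype.sum_prod_type _

end AlternatingSign

open AlternatingSign

/-- The 2-enumeration of alternating sign matrices:
`2^(binomial(n,2)) = Σ_A 2^(N(A))`, the sum being over all `n × n` ASMs `A`. -/
theorem stmt16 (n : ℕ) (hn : 1 ≤ n) :
    2 ^ (n.choose 2) =
      ∑ᶠ A ∈ {A : Fin n → Fin n → ℤ | IsASM n A}, 2 ^ (negCount n A) := by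
  have hset : {A : Fin n → Fin n → ℤ | IsASM n A} =
      ↑(partialASMs n (Finset.univ : Finset (Fin n))) := by
    ext A
    simp [mem_partialASMs, isASM_iff_isPartialASM_univ]
  have h := sum_partialASMs_image (strictMono_id : StrictMono (id : Fin n → Fin n))
  simp only [Finset.image_id, id, det_binomMatrix_fin, mul_one] at h
  rw [hset, finsum_mem_coe_finset]
  simp only [negCount_eq_rowNegCount]
  exact_mod_cast h.symm
end

section
/- For every integer n ≥ 1, the number of order ideals of the full tetrahedral poset T_n (with all six colors of edges) satisfies |J(T_n)| · ∏_{1 ≤ i ≤ j ≤ k ≤ n−1} (i+j+k−2) = ∏_{1 ≤ i ≤ j ≤ k ≤ n−1} (i+j+k−1); equivalently, |J(T_n)| equals the number of totally symmetric plane partitions inside an (n−1)×(n−1)×(n−1) box, which is ∏_{1 ≤ i ≤ j ≤ k ≤ n−1} (i+j+k−1)/(i+j+k−2). -/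
open scoped Classical

noncomputable section

/-- `V3 n` is the set `{(a,b,c) ∈ ℤ≥0³ : a + b + c ≤ n - 2}`. -/
def V3 (n : ℕ) : Finset (ℤ × ℤ × ℤ) :=
  ((Finset.Icc (0:ℤ) (n:ℤ) ×ˢ Finset.Icc (0:ℤ) (n:ℤ) ×ˢ Finset.Icc (0:ℤ) (n:ℤ)).filter
    (fun p => p.1 + p.2.1 + p.2.2 ≤ (n:ℤ) - 2))

/-- The six edge vectors. -/
def vr : ℤ × ℤ × ℤ := (1,0,0)
def vg : ℤ × ℤ × ℤ := (0,1,0)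
def vy : ℤ × ℤ × ℤ := (0,0,1)
def vb : ℤ × ℤ × ℤ := (-1,1,0)
def vo : ℤ × ℤ × ℤ := (-1,0,1)
def vs : ℤ × ℤ × ℤ := (0,1,-1)

/-- One step: add a vector of `S`, staying inside `W`. -/
def step3 (S : Set (ℤ × ℤ × ℤ)) (W : Finset (ℤ × ℤ × ℤ)) (u v : ℤ × ℤ × ℤ) : Prop :=
  u ∈ W ∧ v ∈ W ∧ ∃ e ∈ S, v = u + e

/-- The order relation of `T_n(S)`: reflexive-transitive closure of `step3`,
restricted to `W`. -/
def le3 (S : Set (ℤ × ℤ × ℤ)) (W : Finset (ℤ × ℤ × ℤ)) (u v : ℤ × ℤ × ℤ) : Prop :=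
  u ∈ W ∧ v ∈ W ∧ Relation.ReflTransGen (step3 S W) u v

/-- An order ideal: a downward closed subset of `W`. -/
def IsIdeal3 (S : Set (ℤ × ℤ × ℤ)) (W : Finset (ℤ × ℤ × ℤ))
    (I : Finset (ℤ × ℤ × ℤ)) : Prop :=
  I ⊆ W ∧ ∀ u v : ℤ × ℤ × ℤ, le3 S W u v → v ∈ I → u ∈ I

/-- The set of all order ideals of `T_n(S)`. -/
def ideals3 (S : Set (ℤ × ℤ × ℤ)) (W : Finset (ℤ × ℤ × ℤ)) :
    Finset (Finset (ℤ × ℤ × ℤ)) :=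
  W.powerset.filter (fun I => IsIdeal3 S W I)

/-- The rank generating function `F(J(T_n(S)),q) = Σ_{I} q^{|I|}`. -/
def genF3 (S : Set (ℤ × ℤ × ℤ)) (W : Finset (ℤ × ℤ × ℤ)) : Polynomial ℤ :=
  ∑ I ∈ ideals3 S W, Polynomial.X ^ I.card

/-- A plane partition in the box `{1,…,m}³`: a subset of the box that is downward
closed in each coordinate (within positive coordinates). -/
def IsPP (m : ℕ) (π : Set (ℕ × ℕ × ℕ)) : Prop :=
  (∀ p ∈ π, (1 ≤ p.1 ∧ p.1 ≤ m) ∧ (1 ≤ p.2.1 ∧ p.2.1 ≤ m) ∧ (1 ≤ p.2.2 ∧ p.2.2 ≤ m)) ∧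
  (∀ i j k i' j' k', (i, j, k) ∈ π → 1 ≤ i' → i' ≤ i → 1 ≤ j' → j' ≤ j →
    1 ≤ k' → k' ≤ k → (i', j', k') ∈ π)

/-- Totally symmetric: closed under all permutations of the three coordinates. -/
def IsTS (π : Set (ℕ × ℕ × ℕ)) : Prop :=
  ∀ i j k, (i, j, k) ∈ π →
    (i, k, j) ∈ π ∧ (j, i, k) ∈ π ∧ (j, k, i) ∈ π ∧ (k, i, j) ∈ π ∧ (k, j, i) ∈ π

/-- Self-complementary in the `2n`-box:
`(i,j,k) ∈ π ↔ (2n+1-i, 2n+1-j, 2n+1-k) ∉ π`. -/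
def IsSC (n : ℕ) (π : Set (ℕ × ℕ × ℕ)) : Prop :=
  ∀ i j k, 1 ≤ i → i ≤ 2 * n → 1 ≤ j → j ≤ 2 * n → 1 ≤ k → k ≤ 2 * n →
    ((i, j, k) ∈ π ↔ (2 * n + 1 - i, 2 * n + 1 - j, 2 * n + 1 - k) ∉ π)

/-- A totally symmetric self-complementary plane partition in a `2n×2n×2n` box. -/
def IsTSSCPP (n : ℕ) (π : Set (ℕ × ℕ × ℕ)) : Prop :=
  IsPP (2 * n) π ∧ IsTS π ∧ IsSC n π

/-- A totally symmetric plane partition in an `m×m×m` box. -/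
def IsTSPP (m : ℕ) (π : Set (ℕ × ℕ × ℕ)) : Prop :=
  IsPP m π ∧ IsTS π

/-- The index set `{(i,j,k) : 1 ≤ i ≤ j ≤ k ≤ m}`. -/
def tripleIdx (m : ℕ) : Finset (ℕ × ℕ × ℕ) :=
  ((Finset.Icc 1 m ×ˢ Finset.Icc 1 m ×ˢ Finset.Icc 1 m).filter
    (fun t => t.1 ≤ t.2.1 ∧ t.2.1 ≤ t.2.2))

end

open ExteriorAlgebra in
/-- The top-degree coefficient, normalized to be one on `e_{m-1} ⋯ e_0`. -/
noncomputable def topForm (m : ℕ) : ExteriorAlgebra ℚ (Fin m → ℚ) →ₗ[ℚ] ℚ :=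
  liftAlternating fun i =>
    if h : i = m then
      (Pi.basisFun ℚ (Fin m)).det.domDomCongr (Fin.revPerm.trans (finCongr h.symm)) else 0

theorem topForm_ιMulti_of_ne {m i : ℕ} (h : i ≠ m) (v : Fin i → Fin m → ℚ) :
    topForm m (ExteriorAlgebra.ιMulti ℚ i v) = 0 := by
  simp [topForm, ExteriorAlgebra.liftAlternating_apply_ιMulti, h]

theorem topForm_ιMulti {m : ℕ} (v : Fin m → Fin m → ℚ) :
    topForm m (ExteriorAlgebra.ιMulti ℚ m v) =
      (Pi.basisFun ℚ (Fin m)).det fun i => v i.rev := by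
  simp only [topForm, ExteriorAlgebra.liftAlternating_apply_ιMulti, dite_true]
  rfl

theorem topForm_map {m : ℕ} (f : (Fin m → ℚ) →ₗ[ℚ] (Fin m → ℚ))
    (z : ExteriorAlgebra ℚ (Fin m → ℚ)) :
    topForm m (ExteriorAlgebra.map f z) = LinearMap.det f * topForm m z := by
  suffices h : topForm m ∘ₗ (ExteriorAlgebra.map f).toLinearMap = LinearMap.det f • topForm m from
    LinearMap.congr_fun h z
  apply ExteriorAlgebra.lhom_ext
  intro i
  ext v
  simp only [LinearMap.compAlternatingMap_apply, LinearMap.comp_apply, AlgHom.toLinearMap_apply,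
    ExteriorAlgebra.map_apply_ιMulti, LinearMap.smul_apply, smul_eq_mul]
  by_cases h : i = m
  · subst h
    rw [topForm_ιMulti, topForm_ιMulti, ← Module.Basis.det_comp]
    rfl
  · rw [topForm_ιMulti_of_ne h, topForm_ιMulti_of_ne h, mul_zero]

theorem topForm_of_mem_pow {m i : ℕ} (h : i ≠ m) {z : ExteriorAlgebra ℚ (Fin m → ℚ)}
    (hz : z ∈ LinearMap.range (ExteriorAlgebra.ι ℚ : (Fin m → ℚ) →ₗ[ℚ] _) ^ i) :
    topForm m z = 0 := by
  have hz' : z ∈ Submodule.span ℚ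
      (Set.range (ExteriorAlgebra.ιMulti ℚ i : (Fin i → Fin m → ℚ) → _)) := by
    rw [ExteriorAlgebra.ιMulti_span_fixedDegree]
    exact hz
  clear hz
  induction hz' using Submodule.span_induction with
  | mem x hx =>
    obtain ⟨v, rfl⟩ := hx
    exact topForm_ιMulti_of_ne h v
  | zero => simp
  | add x y _ _ hx hy => rw [map_add, hx, hy, add_zero]
  | smul a x _ hx => rw [map_smul, hx, smul_zero]

/-- The standard basis vector, with value zero out of range. -/
def stdVec (m t : ℕ) : Fin m → ℚ := fun i => if (i : ℕ) = t then 1 else 0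

theorem stdVec_coe {m : ℕ} (i : Fin m) : stdVec m i = Pi.basisFun ℚ (Fin m) i := by
  ext j
  simp [stdVec, Pi.single_apply, Fin.ext_iff]

/-- The generator of the exterior algebra attached to a standard basis vector. -/
noncomputable def gen (m t : ℕ) : ExteriorAlgebra ℚ (Fin m → ℚ) :=
  ExteriorAlgebra.ι ℚ (stdVec m t)

/-- The decreasing product `e_{r-1} ⋯ e_0`. -/
noncomputable def descProd (m : ℕ) : ℕ → ExteriorAlgebra ℚ (Fin m → ℚ)
  | 0 => 1
  | r + 1 => gen m r * descProd m r

theorem descProd_eq (m r : ℕ) :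
    descProd m r = (List.ofFn fun i : Fin r => gen m (i.rev : ℕ)).prod := by
  induction r with
  | zero => simp [descProd]
  | succ r ih =>
    rw [descProd, ih, List.ofFn_succ, List.prod_cons]
    congr 3
    ext i
    congr 1
    simp

theorem topForm_descProd (m : ℕ) : topForm m (descProd m m) = 1 := by
  have h : descProd m m = ExteriorAlgebra.ιMulti ℚ m fun i => stdVec m (i.rev : ℕ) := by
    rw [descProd_eq, ExteriorAlgebra.ιMulti_apply]
    rfl
  rw [h, topForm_ιMulti]
  simp only [Fin.rev_rev, stdVec_coe]
  exact Module.Basis.det_self _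
theorem ι_mul_ι_comm_neg {M : Type*} [AddCommGroup M] [Module ℚ M] (x y : M) :
    ExteriorAlgebra.ι ℚ x * ExteriorAlgebra.ι ℚ y =
      -(ExteriorAlgebra.ι ℚ y * ExteriorAlgebra.ι ℚ x) :=
  eq_neg_of_add_eq_zero_left (ExteriorAlgebra.ι_add_mul_swap x y)

theorem descProd_mul_ι (m r : ℕ) (x : Fin m → ℚ) :
    descProd m r * ExteriorAlgebra.ι ℚ x =
      (-1 : ℚ) ^ r • (ExteriorAlgebra.ι ℚ x * descProd m r) := by
  induction r with
  | zero => simp [descProd]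
  | succ r ih =>
    rw [descProd, mul_assoc, ih, mul_smul_comm, ← mul_assoc, gen, ι_mul_ι_comm_neg, pow_succ,
      mul_smul, neg_mul, smul_neg, neg_smul, one_smul, smul_neg, mul_assoc]

/-- The increasing product `(1 + μ_r) (1 + μ_{r+1}) ⋯` of `k` factors, with `μ_t = (-1)^t e_t`. -/
noncomputable def ascProd (m : ℕ) : ℕ → ℕ → ExteriorAlgebra ℚ (Fin m → ℚ)
  | _, 0 => 1
  | r, k + 1 => (1 + (-1 : ℚ) ^ r • gen m r) * ascProd m (r + 1) k

theorem gen_mul_descProd_mul_gen (m r : ℕ) : gen m r * (descProd m r * gen m r) = 0 := by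
  rw [gen, descProd_mul_ι, mul_smul_comm, ← mul_assoc, ExteriorAlgebra.ι_sq_zero, zero_mul,
    smul_zero]

/-- The coordinate projection killing `e_r`. -/
def killCoord (m r : ℕ) : (Fin m → ℚ) →ₗ[ℚ] (Fin m → ℚ) where
  toFun w i := if (i : ℕ) = r then 0 else w i
  map_add' v w := by ext i; by_cases h : (i : ℕ) = r <;> simp [h]
  map_smul' a w := by ext i; by_cases h : (i : ℕ) = r <;> simp [h]

theorem killCoord_stdVec {m r t : ℕ} (h : t ≠ r) : killCoord m r (stdVec m t) = stdVec m t := by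
  ext i
  simp only [killCoord, stdVec, LinearMap.coe_mk, AddHom.coe_mk]
  grind

theorem det_killCoord {m r : ℕ} (h : r < m) : LinearMap.det (killCoord m r) = 0 := by
  by_contra hd
  have hinj := (LinearMap.equivOfDetNeZero (killCoord m r) hd).injective
  have : stdVec m r = 0 := hinj (by
    ext i
    simp only [LinearMap.equivOfDetNeZero, killCoord]
    simpa using fun h => by simp [stdVec, h])
  have := congrFun this ⟨r, h⟩
  simp [stdVec] at this

theorem map_killCoord_gen {m r t : ℕ} (h : t ≠ r) :
    ExteriorAlgebra.map (killCoord m r) (gen m t) = gen m t := by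
  rw [gen, ExteriorAlgebra.map_apply_ι, killCoord_stdVec h]

theorem map_killCoord_descProd {m r k : ℕ} (h : k ≤ r) :
    ExteriorAlgebra.map (killCoord m r) (descProd m k) = descProd m k := by
  induction k with
  | zero => simp [descProd]
  | succ k ih => rw [descProd, map_mul, map_killCoord_gen (by omega), ih (by omega)]

theorem map_killCoord_ascProd {m r s k : ℕ} (h : r < s) :
    ExteriorAlgebra.map (killCoord m r) (ascProd m s k) = ascProd m s k := by
  induction k generalizing s with
  | zero => simp [ascProd]
  | succ k ih =>
    rw [ascProd, map_mul, ih (by omega), map_add, map_one, map_smul,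
      map_killCoord_gen (by omega)]

theorem map_killCoord_list {m r : ℕ} {l : List ℕ} (h : r ∉ l) :
    ExteriorAlgebra.map (killCoord m r) (l.map (gen m)).prod = (l.map (gen m)).prod := by
  induction l with
  | nil => simp
  | cons a l ih =>
    simp only [List.mem_cons, not_or] at h
    rw [List.map_cons, List.prod_cons, map_mul, ih h.2, map_killCoord_gen (Ne.symm h.1)]

theorem topForm_list_mul_descProd_mul_ascProd {m k r : ℕ} (hr : r + k = m) {l : List ℕ}
    (hl : l.Pairwise (· > ·)) (hlr : ∀ t ∈ l, r ≤ t) (hlm : ∀ t ∈ l, t < m) :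
    topForm m ((l.map (gen m)).prod * descProd m r * ascProd m r k) = 1 := by
  induction k generalizing r l with
  | zero =>
    have : l = [] := List.eq_nil_iff_forall_not_mem.2 fun t ht => by
      have := hlr t ht; have := hlm t ht; omega
    subst this
    obtain rfl : r = m := by omega
    simpa [ascProd] using topForm_descProd r
  | succ k ih =>
    by_cases hmem : r ∈ l
    · have hne : l ≠ [] := List.ne_nil_of_mem hmem
      obtain ⟨l', a, rfl⟩ : ∃ l' a, l = l' ++ [a] :=
        ⟨l.dropLast, l.getLast hne, (List.dropLast_append_getLast hne).symm⟩
      rw [List.pairwise_append] at hl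
      have ha : a = r := by
        rcases List.mem_append.1 hmem with h | h
        · have h1 := hl.2.2 r h a (by simp)
          have h2 := hlr a (by simp)
          omega
        · simpa using (List.mem_singleton.1 h).symm
      subst ha
      have key := ih (r := a + 1) (by omega) hl.1
        (fun t ht => hl.2.2 t ht a (by simp)) fun t ht => hlm t (by simp [ht])
      rw [← key]
      congr 1
      simp only [List.map_append, List.prod_append, List.map_cons, List.map_nil, List.prod_cons,
        List.prod_nil, mul_one, ascProd, descProd]
      have h0 := gen_mul_descProd_mul_gen m a
      simp only [mul_add, add_mul, one_mul, smul_mul_assoc, mul_smul_comm, mul_assoc]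
        at h0 ⊢
      rw [add_eq_left]
      rw [← mul_assoc (descProd m a), ← mul_assoc (gen m a), h0]
      simp
    · have key := ih (r := r + 1) (by omega) hl
        (fun t ht => lt_of_le_of_ne (hlr t ht) (by rintro rfl; exact hmem ht)) hlm
      rw [← key]
      have hz : topForm m ((l.map (gen m)).prod * descProd m r * ascProd m (r + 1) k) = 0 := by
        have := topForm_map (killCoord m r)
          ((l.map (gen m)).prod * descProd m r * ascProd m (r + 1) k)
        rwa [det_killCoord (by omega), zero_mul, map_mul (ExteriorAlgebra.map _),
          map_mul (ExteriorAlgebra.map _), map_killCoord_list hmem, map_killCoord_descProd le_rfl,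
          map_killCoord_ascProd (by omega)] at this
      have h1 : (-1 : ℚ) ^ r • (descProd m r * gen m r) = descProd m (r + 1) := by
        rw [gen, descProd_mul_ι, smul_smul, ← mul_pow]
        simp [descProd, gen]
      rw [← h1, ascProd, add_mul, mul_add, map_add, one_mul, hz, zero_add]
      simp only [smul_mul_assoc, mul_smul_comm, mul_assoc]

theorem topForm_list_mul_ascProd {m : ℕ} {l : List ℕ}
    (hl : l.Pairwise (· > ·)) (hlm : ∀ t ∈ l, t < m) :
    topForm m ((l.map (gen m)).prod * ascProd m 0 m) = 1 := by
  simpa [descProd] using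
    topForm_list_mul_descProd_mul_ascProd (zero_add m) hl (fun _ _ => Nat.zero_le _) hlm

/-- `ê_K`, which is `e_{K-1}` for positive `K` and `1` for `K = 0`. -/
noncomputable def hat (m K : ℕ) : ExteriorAlgebra ℚ (Fin m → ℚ) :=
  if K = 0 then 1 else gen m (K - 1)

/-- The indicator vector of the indices at least `κ`. -/
def tailVec (m κ : ℕ) : Fin m → ℚ := fun i => if κ ≤ (i : ℕ) then 1 else 0

theorem sum_Ioc_hat (m κ p : ℕ) (h : κ ≤ p) :
    ∑ K ∈ Finset.Ioc κ p, hat m K = ExteriorAlgebra.ι ℚ (tailVec m κ - tailVec m p) := by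
  have : tailVec m κ - tailVec m p = ∑ K ∈ Finset.Ioc κ p, stdVec m (K - 1) := by
    ext i
    rw [Finset.sum_apply]
    simp only [Pi.sub_apply, tailVec, stdVec]
    by_cases hi : κ ≤ (i : ℕ) ∧ (i : ℕ) < p
    · rw [Finset.sum_eq_single ((i : ℕ) + 1)]
      · simp [hi.1, hi.2]
      · intro b hb hne
        rw [Finset.mem_Ioc] at hb
        rw [if_neg (by omega)]
      · intro hb
        simp only [Finset.mem_Ioc] at hb
        omega
    · rw [Finset.sum_eq_zero]
      · grind
      · intro b hb
        rw [Finset.mem_Ioc] at hb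
        rw [if_neg (by omega)]
  rw [this, map_sum]
  refine Finset.sum_congr rfl fun K hK => ?_
  rw [Finset.mem_Ioc] at hK
  rw [hat, if_neg (by omega), gen]

theorem tailVec_self (m : ℕ) : tailVec m m = 0 := by
  ext i
  simp [tailVec]

/-- The strict summation operator `e_t ↦ ∑_{t' > t} e_{t'}`. -/
def sumOp (m : ℕ) : (Fin m → ℚ) →ₗ[ℚ] (Fin m → ℚ) where
  toFun w i := ∑ j : Fin (i : ℕ), w ⟨j, j.2.trans i.2⟩
  map_add' v w := by ext i; simp [Finset.sum_add_distrib]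
  map_smul' a w := by ext i; simp [Finset.mul_sum]

/-- The vector of binomial coefficients `C(t, p)`. -/
def binVec (m p : ℕ) : Fin m → ℚ := fun i => ((i : ℕ).choose p : ℚ)

theorem sum_range_choose_eq (n p : ℕ) : ∑ j ∈ Finset.range n, j.choose p = n.choose (p + 1) := by
  induction n with
  | zero => simp
  | succ n ih => rw [Finset.sum_range_succ, ih, Nat.choose_succ_succ', add_comm]

theorem sumOp_binVec (m p : ℕ) : sumOp m (binVec m p) = binVec m (p + 1) := by
  ext i
  simp only [sumOp, binVec, LinearMap.coe_mk, AddHom.coe_mk]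
  rw [Fin.sum_univ_eq_sum_range (fun j => ((j.choose p : ℕ) : ℚ)), ← sum_range_choose_eq]
  push_cast
  rfl

theorem sumOp_stdVec (m t : ℕ) : sumOp m (stdVec m t) = tailVec m (t + 1) := by
  ext i
  simp only [sumOp, stdVec, tailVec, LinearMap.coe_mk, AddHom.coe_mk]
  rw [Fin.sum_univ_eq_sum_range (fun j => if j = t then (1 : ℚ) else 0)]
  rw [Finset.sum_ite_eq']
  simp

theorem binVec_zero (m : ℕ) : binVec m 0 = tailVec m 0 := by
  ext i
  simp [binVec, tailVec]

/-- The values allowed below `p` and above the entry `c` of the preceding row. -/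
def gap (c p : ℕ) : Finset ℕ := Finset.Icc (if c = 0 then 0 else c + 1) p

theorem sum_gap_pos {m c p : ℕ} (hc : c ≠ 0) (h : c ≤ p) :
    ∑ K ∈ gap c p, hat m K = ExteriorAlgebra.ι ℚ (tailVec m c - tailVec m p) := by
  rw [← sum_Ioc_hat _ _ _ h, gap, if_neg hc]
  congr 1
  ext K
  simp

theorem sum_gap_zero (m p : ℕ) :
    ∑ K ∈ gap 0 p, hat m K = 1 + ExteriorAlgebra.ι ℚ (tailVec m 0 - tailVec m p) := by
  rw [← sum_Ioc_hat _ _ _ (Nat.zero_le p), gap, if_pos rfl, ← Finset.sum_erase_add _ _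
    (show 0 ∈ Finset.Icc 0 p by simp), add_comm]
  congr 1

/-- The ordered product of the gap sums along a row, with initial bound `p`. -/
noncomputable def gapProd (m : ℕ) : ℕ → List ℕ → ExteriorAlgebra ℚ (Fin m → ℚ)
  | _, [] => 1
  | p, c :: l => (∑ K ∈ gap c p, hat m K) * gapProd m c l

theorem map_sumOp_hat (m c : ℕ) : ExteriorAlgebra.map (sumOp m) (hat m c) =
    if c = 0 then 1 else ExteriorAlgebra.ι ℚ (tailVec m c) := by
  unfold hat
  split_ifs with h
  · simp
  · rw [gen, ExteriorAlgebra.map_apply_ι, sumOp_stdVec, Nat.sub_add_cancel (by omega)]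

theorem gapProd_zero {m : ℕ} {l : List ℕ} (h : ∀ c ∈ l, c = 0) : gapProd m 0 l = 1 := by
  induction l with
  | nil => rfl
  | cons c l ih =>
    obtain rfl : c = 0 := h c (by simp)
    rw [gapProd, ih fun c hc => h c (by simp [hc]), sum_gap_zero]
    simp

theorem list_map_hat_zero {m : ℕ} {l : List ℕ} (h : ∀ c ∈ l, c = 0) :
    (l.map (hat m)).prod = 1 := by
  refine List.prod_eq_one fun x hx => ?_
  obtain ⟨c, hc, rfl⟩ := List.mem_map.1 hx
  simp [hat, h c hc]

theorem mul_gapProd {m p : ℕ} {l : List ℕ} (hl : (p :: l).Pairwise (· ≥ ·)) (h0 : 0 ∈ l)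
    {X : ExteriorAlgebra ℚ (Fin m → ℚ)} (hX : X * ExteriorAlgebra.ι ℚ (tailVec m p) = 0) :
    X * gapProd m p l = X * (ExteriorAlgebra.map (sumOp m) (l.map (hat m)).prod *
      (1 + ExteriorAlgebra.ι ℚ (binVec m 0))) := by
  induction l generalizing p X with
  | nil => simp at h0
  | cons c l ih =>
    rw [List.pairwise_cons] at hl
    rw [List.map_cons, List.prod_cons, map_mul, map_sumOp_hat, gapProd]
    split_ifs with hc
    · subst hc
      have hz : ∀ c ∈ l, c = 0 := fun c hc => by
        have := (List.pairwise_cons.1 hl.2).1 c hc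
        omega
      rw [gapProd_zero hz, list_map_hat_zero hz, sum_gap_zero, map_sub, binVec_zero]
      simp [mul_add, mul_sub, hX]
    · rw [sum_gap_pos hc (hl.1 c (by simp)), map_sub, ← mul_assoc, mul_sub, hX, sub_zero,
        ih hl.2 (by grind) (by rw [mul_assoc, ExteriorAlgebra.ι_sq_zero, mul_zero])]
      simp only [mul_assoc]

theorem gapProd_eq {m : ℕ} {l : List ℕ} (hl : (m :: l).Pairwise (· ≥ ·)) (h0 : 0 ∈ l) :
    gapProd m m l = ExteriorAlgebra.map (sumOp m) (l.map (hat m)).prod *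
      (1 + ExteriorAlgebra.ι ℚ (binVec m 0)) := by
  simpa using mul_gapProd hl h0 (X := 1) (by simp [tailVec_self])

/-- The product `ê_{K_0} ê_{K_1} ⋯` attached to a row. -/
noncomputable def rowProd (m : ℕ) {q : ℕ} (K : Fin q → ℕ) : ExteriorAlgebra ℚ (Fin m → ℚ) :=
  ((List.ofFn K).map (hat m)).prod

/-- The rows that can follow the row `κ`, with initial bound `p`. -/
def nextRows {q : ℕ} (p : ℕ) (κ : Fin q → ℕ) : Finset (Fin q → ℕ) :=
  Fintype.piFinset fun c => gap (κ c) ((Fin.cons p κ : Fin (q + 1) → ℕ) c.castSucc)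

theorem gapProd_ofFn (m : ℕ) {q : ℕ} (p : ℕ) (κ : Fin q → ℕ) :
    gapProd m p (List.ofFn κ) = (List.ofFn fun c => ∑ K ∈
      gap (κ c) ((Fin.cons p κ : Fin (q + 1) → ℕ) c.castSucc), hat m K).prod := by
  induction q generalizing p with
  | zero => simp [gapProd]
  | succ q ih =>
    rw [List.ofFn_succ, gapProd, ih, List.ofFn_succ, List.prod_cons]
    congr 3
    ext c
    congr 2
    rw [← Fin.succ_castSucc, Fin.cons_succ]
    exact congrFun (Fin.cons_self_tail κ) _

theorem sum_nextRows (m : ℕ) {q : ℕ} (p : ℕ) (κ : Fin q → ℕ) :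
    ∑ K ∈ nextRows p κ, rowProd m K = gapProd m p (List.ofFn κ) := by
  rw [gapProd_ofFn]
  have := (MultilinearMap.mkPiAlgebraFin ℚ q (ExteriorAlgebra ℚ (Fin m → ℚ))).map_sum_finset
    (fun _ K => hat m K)
    (fun c => gap (κ c) ((Fin.cons p κ : Fin (q + 1) → ℕ) c.castSucc))
  simp only [MultilinearMap.mkPiAlgebraFin_apply] at this
  rw [this]
  refine Finset.sum_congr rfl fun K _ => ?_
  rw [rowProd, List.map_ofFn]
  rfl

/-- The product `(1 + λ_{d-1}) ⋯ (1 + λ_0)`. -/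
noncomputable def binProd (m : ℕ) : ℕ → ExteriorAlgebra ℚ (Fin m → ℚ)
  | 0 => 1
  | d + 1 => (1 + ExteriorAlgebra.ι ℚ (binVec m d)) * binProd m d

theorem binProd_succ' (m d : ℕ) : binProd m (d + 1) =
    ExteriorAlgebra.map (sumOp m) (binProd m d) * (1 + ExteriorAlgebra.ι ℚ (binVec m 0)) := by
  induction d with
  | zero => simp [binProd]
  | succ d ih =>
    conv_lhs => rw [binProd, ih]
    rw [binProd, map_mul, map_add, map_one, ExteriorAlgebra.map_apply_ι, sumOp_binVec, mul_assoc]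

theorem topForm_rowProd_mul_ascProd {m q : ℕ} {K : Fin q → ℕ}
    (hK : (List.ofFn K).Pairwise fun x y => y = 0 ∨ y < x) (hm : ∀ c, K c ≤ m) :
    topForm m (rowProd m K * ascProd m 0 m) = 1 := by
  have hfilter : ∀ l : List ℕ, (l.map (hat m)).prod =
      (((l.filter (· ≠ 0)).map (· - 1)).map (gen m)).prod := by
    intro l
    induction l with
    | nil => simp
    | cons c l ih =>
      by_cases hc : c = 0
      · subst hc
        simpa [hat] using ih
      · rw [List.map_cons, List.prod_cons, ih, List.filter_cons_of_pos (by simpa using hc)]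
        simp [hat, hc]
  rw [rowProd, hfilter]
  apply topForm_list_mul_ascProd
  · rw [List.pairwise_map, List.pairwise_filter]
    refine hK.imp fun {x y} h hx hy => ?_
    simp only [ne_eq, decide_eq_true_eq] at hx hy
    omega
  · intro t ht
    simp only [List.mem_map, List.mem_filter, List.mem_ofFn] at ht
    obtain ⟨_, ⟨⟨c, rfl⟩, hc⟩, rfl⟩ := ht
    have := hm c
    simp at hc
    omega

/-- The layers `C ≥ d` of an order ideal, in natural-number coordinates; the total size is
bounded only through the first coordinate, which suffices once `d = 0`. -/
structure IsPartialIdeal (m d : ℕ) (I : Finset (ℕ × ℕ × ℕ)) : Prop where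
  bound : ∀ A B C, (A, B, C) ∈ I → A < m ∧ d ≤ C ∧ C < m
  red : ∀ A B C, (A + 1, B, C) ∈ I → (A, B, C) ∈ I
  orange : ∀ A B C, (A, B, C + 1) ∈ I → d ≤ C → (A + 1, B, C) ∈ I
  silver : ∀ A B C, (A, B + 1, C) ∈ I → (A, B, C + 1) ∈ I

namespace IsPartialIdeal

variable {m d : ℕ} {I : Finset (ℕ × ℕ × ℕ)}

theorem red_iterate (hI : IsPartialIdeal m d I) {A B C : ℕ} (k : ℕ) (h : (A + k, B, C) ∈ I) :
    (A, B, C) ∈ I := by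
  induction k with
  | zero => exact h
  | succ k ih => exact ih (hI.red _ _ _ h)

theorem silver_iterate (hI : IsPartialIdeal m d I) {A B C : ℕ} (k : ℕ) (h : (A, B + k, C) ∈ I) :
    (A, B, C + k) ∈ I := by
  induction k generalizing B with
  | zero => exact h
  | succ k ih => exact hI.silver _ _ _ (ih (B := B + 1) (by rwa [add_assoc, add_comm 1]))

theorem orange_iterate (hI : IsPartialIdeal m d I) {A B C : ℕ} (hC : d ≤ C) (k : ℕ)
    (h : (A, B, C + k) ∈ I) : (A + k, B, C) ∈ I := by
  induction k generalizing C with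
  | zero => exact h
  | succ k ih =>
    exact hI.orange _ _ _ (ih (C := C + 1) (by omega) (by rwa [add_assoc, add_comm 1])) hC

theorem snd_add_lt (hI : IsPartialIdeal m d I) {A B C : ℕ} (h : (A, B, C) ∈ I) : B + C < m := by
  have := (hI.bound _ _ _ (hI.silver_iterate (B := 0) B (by rwa [zero_add]))).2.2
  omega

end IsPartialIdeal

/-- The partial ideals consisting of the layers `C ≥ d`. -/
noncomputable def partialIdeals (m d : ℕ) : Finset (Finset (ℕ × ℕ × ℕ)) :=
  (Finset.range m ×ˢ Finset.range m ×ˢ Finset.range m).powerset.filter (IsPartialIdeal m d)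

theorem mem_partialIdeals {m d : ℕ} {I : Finset (ℕ × ℕ × ℕ)} :
    I ∈ partialIdeals m d ↔ IsPartialIdeal m d I := by
  refine ⟨fun h => (Finset.mem_filter.1 h).2, fun h => Finset.mem_filter.2 ⟨?_, h⟩⟩
  rw [Finset.mem_powerset]
  rintro ⟨A, B, C⟩ hp
  have h1 := h.bound _ _ _ hp
  have h2 := h.snd_add_lt hp
  simp only [Finset.mem_product, Finset.mem_range]
  omega

/-- The height of the column of `I` over `(B, C)`. -/
noncomputable def colHeight (I : Finset (ℕ × ℕ × ℕ)) (C B : ℕ) : ℕ := sInf {A | (A, B, C) ∉ I}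

theorem mem_iff_lt_colHeight {m d : ℕ} {I : Finset (ℕ × ℕ × ℕ)} (hI : IsPartialIdeal m d I)
    {A B C : ℕ} : (A, B, C) ∈ I ↔ A < colHeight I C B := by
  constructor
  · intro h
    by_contra hlt
    have hne : {A | (A, B, C) ∉ I}.Nonempty :=
      ⟨m, fun hm => (lt_irrefl m) (hI.bound _ _ _ hm).1⟩
    refine Nat.sInf_mem hne (hI.red_iterate (A - sInf {A | (A, B, C) ∉ I}) ?_)
    have hle : sInf {A | (A, B, C) ∉ I} ≤ A := not_lt.1 hlt
    rwa [Nat.add_sub_cancel' hle]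
  · intro h
    by_contra hn
    exact Nat.notMem_of_lt_sInf h hn

theorem mem_nextRows {m : ℕ} {κ K : ℕ → ℕ} :
    (fun c : Fin (m + 1) => K c) ∈ nextRows m (fun c : Fin (m + 1) => κ c) ↔
      K 0 ≤ m ∧ (∀ B < m, K (B + 1) ≤ κ B) ∧ ∀ B ≤ m, κ B ≠ 0 → κ B < K B := by
  simp only [nextRows, Fintype.mem_piFinset, gap, Finset.mem_Icc]
  constructor
  · intro h
    refine ⟨by simpa using (h 0).2, fun B hB => ?_, fun B hB hne => ?_⟩
    · have := (h (Fin.succ ⟨B, hB⟩)).2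
      rw [← Fin.succ_castSucc, Fin.cons_succ] at this
      simpa using this
    · have := (h ⟨B, by omega⟩).1
      rw [if_neg hne] at this
      exact this
  · rintro ⟨h0, h1, h2⟩ c
    constructor
    · split_ifs with hc
      · exact Nat.zero_le _
      · exact h2 c (by omega) hc
    · refine Fin.cases ?_ (fun c => ?_) c
      · simpa using h0
      · rw [← Fin.succ_castSucc, Fin.cons_succ]
        simpa using h1 c c.2

theorem sum_partialIdeals_succ {M : Type*} [AddCommMonoid M] {m d : ℕ} (hd : d < m)
    (f : (Fin (m + 1) → ℕ) → M) :
    ∑ I ∈ partialIdeals m d, f (fun c => colHeight I d c) =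
      ∑ I ∈ partialIdeals m (d + 1),
        ∑ K ∈ nextRows m (fun c : Fin (m + 1) => colHeight I (d + 1) c), f K := by
  rw [Finset.sum_sigma']
  have hmem : ∀ (I : Finset (ℕ × ℕ × ℕ)) (A B C : ℕ),
      (A, B, C) ∈ I.filter (fun p => d + 1 ≤ p.2.2) ↔ (A, B, C) ∈ I ∧ d + 1 ≤ C := by simp
  have hcol : ∀ I, colHeight (I.filter fun p => d + 1 ≤ p.2.2) (d + 1) = colHeight I (d + 1) := by
    intro I
    ext B
    simp [colHeight]
  refine Finset.sum_bij
    (fun I _ => ⟨I.filter fun p => d + 1 ≤ p.2.2, fun c : Fin (m + 1) => colHeight I d c⟩)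
    ?_ ?_ ?_ (fun _ _ => rfl)
  · intro I hI
    rw [mem_partialIdeals] at hI
    rw [Finset.mem_sigma, mem_partialIdeals]
    refine ⟨⟨fun A B C h => ?_, fun A B C h => ?_, fun A B C h hC => ?_, fun A B C h => ?_⟩, ?_⟩
    · rw [hmem] at h
      have := hI.bound _ _ _ h.1
      omega
    · rw [hmem] at h ⊢
      exact ⟨hI.red _ _ _ h.1, h.2⟩
    · rw [hmem] at h ⊢
      exact ⟨hI.orange _ _ _ h.1 (by omega), hC⟩
    · rw [hmem] at h ⊢
      exact ⟨hI.silver _ _ _ h.1, by omega⟩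
    · simp only [hcol]
      refine mem_nextRows.2 ⟨?_, fun B _ => ?_, fun B _ hne => ?_⟩
      · by_contra hlt
        have := hI.bound _ _ _ ((mem_iff_lt_colHeight hI).2 (not_le.1 hlt))
        omega
      · by_contra hlt
        have := hI.silver _ _ _ ((mem_iff_lt_colHeight hI).2 (not_le.1 hlt))
        exact lt_irrefl _ ((mem_iff_lt_colHeight hI).1 this)
      · have h1 : (colHeight I (d + 1) B - 1, B, d + 1) ∈ I :=
          (mem_iff_lt_colHeight hI).2 (by omega)
        have h2 := (mem_iff_lt_colHeight hI).1 (hI.orange _ _ _ h1 le_rfl)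
        omega
  · intro I hI J hJ h
    rw [mem_partialIdeals] at hI hJ
    simp only [Sigma.mk.injEq, heq_eq_eq] at h
    ext ⟨A, B, C⟩
    rcases lt_trichotomy C d with hC | rfl | hC
    · constructor
      · intro h'; have := hI.bound _ _ _ h'; omega
      · intro h'; have := hJ.bound _ _ _ h'; omega
    · by_cases hB : B < m + 1
      · rw [mem_iff_lt_colHeight hI, mem_iff_lt_colHeight hJ]
        have := congrFun h.2 ⟨B, hB⟩
        simp only at this
        rw [this]
      · constructor
        · intro h'; have := hI.snd_add_lt h'; omega
        · intro h'; have := hJ.snd_add_lt h'; omega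
    · have h1 := hmem I A B C
      have h2 := hmem J A B C
      rw [h.1] at h1
      have h3 : d + 1 ≤ C := hC
      tauto
  · rintro ⟨I, K'⟩ hIK
    rw [Finset.mem_sigma, mem_partialIdeals] at hIK
    obtain ⟨hI, hK⟩ := hIK
    simp only at hI hK
    obtain ⟨K, rfl, hK0⟩ : ∃ K : ℕ → ℕ, K' = (fun c : Fin (m + 1) => K c) ∧ ∀ B, m < B → K B = 0 :=
      ⟨fun B => if h : B < m + 1 then K' ⟨B, h⟩ else 0, by ext c; beta_reduce; rw [dif_pos c.2],
        fun B hB => by simp [show ¬ B < m + 1 by omega]⟩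
    obtain ⟨h0, h1, h2⟩ := mem_nextRows.1 hK
    have hcol0 : ∀ B, colHeight I (d + 1) B ≠ 0 → B + (d + 1) < m := fun B hB =>
      hI.snd_add_lt ((mem_iff_lt_colHeight hI).2 (Nat.pos_of_ne_zero hB))
    have h1' : ∀ B, K (B + 1) ≤ colHeight I (d + 1) B := fun B => by
      by_cases hB : B < m
      · exact h1 B hB
      · rw [hK0 _ (by omega)]
        exact Nat.zero_le _
    have h2' : ∀ B, colHeight I (d + 1) B ≠ 0 → colHeight I (d + 1) B < K B := fun B hB =>
      h2 B (by have := hcol0 B hB; omega) hB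
    have hKm : ∀ B, K B ≤ m := fun B => by
      rcases B with _ | B
      · exact h0
      · refine (h1' B).trans ?_
        by_contra hlt
        have := hI.bound _ _ _ ((mem_iff_lt_colHeight hI).2 (not_le.1 hlt))
        omega
    have hKB : ∀ B, K B ≠ 0 → B < m := fun B hB => by
      rcases B with _ | B
      · omega
      · have := hcol0 B (by have := h1' B; omega)
        omega
    let L := (Finset.range m ×ˢ Finset.range m ×ˢ Finset.range m).filter
      fun p => p.2.2 = d ∧ p.1 < K p.2.1
    have hL : ∀ A B C, (A, B, C) ∈ I ∪ L ↔ (A, B, C) ∈ I ∨ (C = d ∧ A < K B) := by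
      intro A B C
      simp only [L, Finset.mem_union, Finset.mem_filter, Finset.mem_product, Finset.mem_range]
      have := hKm B
      have := hKB B
      constructor
      · rintro (h | h)
        · exact Or.inl h
        · exact Or.inr h.2
      · rintro (h | h)
        · exact Or.inl h
        · exact Or.inr ⟨by omega, h⟩
    have hnot : ∀ A B C, (A, B, C) ∈ I → d + 1 ≤ C := fun A B C h => (hI.bound _ _ _ h).2.1
    have hIL : IsPartialIdeal m d (I ∪ L) := by
      refine ⟨fun A B C h => ?_, fun A B C h => ?_, fun A B C h hC => ?_, fun A B C h => ?_⟩ <;>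
        rw [hL] at h
      · have := hKm B
        rcases h with h | h
        · have := hI.bound _ _ _ h
          omega
        · omega
      · rw [hL]
        rcases h with h | h
        · exact Or.inl (hI.red _ _ _ h)
        · right; omega
      · rw [hL]
        rcases h with h | h
        · rcases eq_or_lt_of_le hC with rfl | hC
          · right
            have h3 := (mem_iff_lt_colHeight hI).1 h
            have h4 := h2' B (by omega)
            exact ⟨rfl, by omega⟩
          · exact Or.inl (hI.orange _ _ _ h hC)
        · omega
      · rw [hL]
        rcases h with h | h
        · exact Or.inl (hI.silver _ _ _ h)
        · left
          obtain ⟨rfl, h⟩ := h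
          rw [mem_iff_lt_colHeight hI]
          exact h.trans_le (h1' B)
    refine ⟨I ∪ L, mem_partialIdeals.2 hIL, ?_⟩
    have e1 : (I ∪ L).filter (fun p => d + 1 ≤ p.2.2) = I := by
      ext ⟨A, B, C⟩
      rw [hmem, hL]
      constructor
      · rintro ⟨h | h, hC⟩
        · exact h
        · omega
      · exact fun h => ⟨Or.inl h, hnot _ _ _ h⟩
    have e2 : ∀ B, colHeight (I ∪ L) d B = K B := by
      intro B
      refine eq_of_forall_lt_iff fun A => ?_
      rw [← mem_iff_lt_colHeight hIL, hL]
      constructor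
      · rintro (h | h)
        · have := hnot _ _ _ h
          omega
        · exact h.2
      · exact fun h => Or.inr ⟨rfl, h⟩
    simp only [e1, e2]

theorem colHeight_add_le {m d : ℕ} {I : Finset (ℕ × ℕ × ℕ)} (hI : IsPartialIdeal m d I)
    {B C k : ℕ} (hC : d ≤ C) (h : colHeight I C (B + k) ≠ 0) :
    colHeight I C (B + k) + k ≤ colHeight I C B := by
  have h1 : (colHeight I C (B + k) - 1, B + k, C) ∈ I := (mem_iff_lt_colHeight hI).2 (by omega)
  have h2 := (mem_iff_lt_colHeight hI).1 (hI.orange_iterate hC k (hI.silver_iterate k h1))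
  omega

theorem pairwise_row {m d : ℕ} {I : Finset (ℕ × ℕ × ℕ)} (hI : IsPartialIdeal m d I) :
    (List.ofFn fun c : Fin (m + 1) => colHeight I d c).Pairwise fun x y => y = 0 ∨ y < x := by
  rw [List.pairwise_ofFn]
  intro i j hij
  by_cases h : colHeight I d j = 0
  · exact Or.inl h
  · right
    have hij' : (i : ℕ) < j := hij
    obtain ⟨k, hk⟩ := Nat.exists_eq_add_of_le hij'.le
    have := colHeight_add_le hI le_rfl (B := i) (k := k) (by rwa [← hk])
    rw [← hk] at this
    omega

theorem colHeight_le {m d : ℕ} {I : Finset (ℕ × ℕ × ℕ)} (hI : IsPartialIdeal m d I) (C B : ℕ) :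
    colHeight I C B ≤ m := by
  by_contra hlt
  have := hI.bound _ _ _ ((mem_iff_lt_colHeight hI).2 (not_le.1 hlt))
  omega

theorem sum_rowProd_partialIdeals (m k : ℕ) (hk : k ≤ m) :
    ∑ I ∈ partialIdeals m (m - k), rowProd m (fun c : Fin (m + 1) => colHeight I (m - k) c) =
      binProd m k := by
  induction k with
  | zero =>
    have hempty : partialIdeals m (m - 0) = {∅} := by
      ext I
      rw [mem_partialIdeals, Finset.mem_singleton]
      constructor
      · intro hI
        refine Finset.eq_empty_of_forall_notMem ?_
        rintro ⟨A, B, C⟩ h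
        have := hI.bound _ _ _ h
        omega
      · rintro rfl
        constructor <;> simp
    rw [hempty, Finset.sum_singleton, binProd, rowProd]
    refine list_map_hat_zero fun c hc => ?_
    obtain ⟨i, rfl⟩ := List.mem_ofFn.1 hc
    simp [colHeight]
  | succ k ih =>
    obtain ⟨d, hd⟩ : ∃ d, m - k = d + 1 := ⟨m - (k + 1), by omega⟩
    have hd' : m - (k + 1) = d := by omega
    rw [hd] at ih
    rw [hd', sum_partialIdeals_succ (by omega) (rowProd m), binProd_succ', ← ih (by omega), map_sum,
      Finset.sum_mul]
    refine Finset.sum_congr rfl fun I hI => ?_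
    rw [mem_partialIdeals] at hI
    rw [sum_nextRows, gapProd_eq, rowProd]
    · rw [List.pairwise_cons]
      refine ⟨fun c hc => ?_, (pairwise_row hI).imp fun h => by omega⟩
      obtain ⟨i, rfl⟩ := List.mem_ofFn.1 hc
      exact colHeight_le hI _ _
    · refine List.mem_ofFn.2 ⟨Fin.last m, ?_⟩
      by_contra hne
      have := hI.snd_add_lt ((mem_iff_lt_colHeight hI).2 (Nat.pos_of_ne_zero hne))
      simp at this

theorem card_partialIdeals_eq_topForm (m : ℕ) :
    ((partialIdeals m 0).card : ℚ) = topForm m (binProd m m * ascProd m 0 m) := by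
  have h := sum_rowProd_partialIdeals m m le_rfl
  rw [Nat.sub_self] at h
  rw [← h, Finset.sum_mul, map_sum, Finset.sum_congr rfl
    (fun I hI => topForm_rowProd_mul_ascProd (pairwise_row (mem_partialIdeals.1 hI))
      fun c => colHeight_le (mem_partialIdeals.1 hI) _ _)]
  simp

theorem mem_V3 {n : ℕ} {a b c : ℤ} :
    (a, b, c) ∈ V3 n ↔ 0 ≤ a ∧ 0 ≤ b ∧ 0 ≤ c ∧ a + b + c ≤ (n : ℤ) - 2 := by
  simp only [V3, Finset.mem_filter, Finset.mem_product, Finset.mem_Icc]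
  omega

theorem isIdeal3_iff {S : Set (ℤ × ℤ × ℤ)} {W I : Finset (ℤ × ℤ × ℤ)} :
    IsIdeal3 S W I ↔ I ⊆ W ∧ ∀ u ∈ W, ∀ e ∈ S, u + e ∈ I → u ∈ I := by
  constructor
  · rintro ⟨h1, h2⟩
    exact ⟨h1, fun u hu e he hue => h2 u (u + e)
      ⟨hu, h1 hue, Relation.ReflTransGen.single ⟨hu, h1 hue, e, he, rfl⟩⟩ hue⟩
  · rintro ⟨h1, h2⟩
    refine ⟨h1, ?_⟩
    rintro u v ⟨-, -, h⟩ hv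
    induction h using Relation.ReflTransGen.head_induction_on with
    | refl => exact hv
    | head hstep _ ih =>
      obtain ⟨hu, -, e, he, rfl⟩ := hstep
      exact h2 _ hu e he ih

/-- The embedding of natural-number triples into integer triples. -/
def natTriple : ℕ × ℕ × ℕ ↪ ℤ × ℤ × ℤ where
  toFun p := (p.1, p.2.1, p.2.2)
  inj' p q h := by
    simp only [Prod.mk.injEq, Nat.cast_inj] at h
    exact Prod.ext h.1 (Prod.ext h.2.1 h.2.2)

theorem mem_map_natTriple {J : Finset (ℕ × ℕ × ℕ)} {A B C : ℕ} :
    ((A : ℤ), (B : ℤ), (C : ℤ)) ∈ J.map natTriple ↔ (A, B, C) ∈ J :=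
  Finset.mem_map' natTriple (a := (A, B, C))

theorem isIdeal3_map_natTriple {n : ℕ} (hn : 1 ≤ n) {J : Finset (ℕ × ℕ × ℕ)} :
    IsIdeal3 {vr, vg, vy, vb, vo, vs} (V3 n) (J.map natTriple) ↔ IsPartialIdeal (n - 1) 0 J := by
  rw [isIdeal3_iff]
  constructor
  · rintro ⟨h1, h2⟩
    have hV : ∀ A B C, (A, B, C) ∈ J → A + B + C + 1 < n := fun A B C h => by
      have := mem_V3.1 (h1 (mem_map_natTriple.2 h))
      omega
    refine ⟨fun A B C h => ?_, fun A B C h => ?_, fun A B C h _ => ?_, fun A B C h => ?_⟩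
    · have := hV _ _ _ h
      omega
    · have hlt := hV _ _ _ h
      refine mem_map_natTriple.1 (h2 _ (mem_V3.2 (by omega)) vr (by simp) ?_)
      rw [← mem_map_natTriple] at h
      simpa [vr] using h
    · have hlt := hV _ _ _ h
      refine mem_map_natTriple.1 (h2 _ (mem_V3.2 (by omega)) vo (by simp) ?_)
      rw [← mem_map_natTriple] at h
      simpa [vo] using h
    · have hlt := hV _ _ _ h
      refine mem_map_natTriple.1 (h2 _ (mem_V3.2 (by omega)) vs (by simp) ?_)
      rw [← mem_map_natTriple] at h
      simpa [vs] using h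
  · intro hJ
    constructor
    · intro p hp
      obtain ⟨⟨A, B, C⟩, h, rfl⟩ := Finset.mem_map.1 hp
      have h1 := hJ.silver_iterate (B := 0) B (by rwa [zero_add])
      have h2 := hJ.orange_iterate (C := 0) (Nat.zero_le _) (C + B) (by rwa [zero_add])
      have := hJ.bound _ _ _ h2
      exact mem_V3.2 (by dsimp only; omega)
    · rintro ⟨a, b, c⟩ hu e he h
      obtain ⟨ha, hb, hc, -⟩ := mem_V3.1 hu
      lift a to ℕ using ha
      lift b to ℕ using hb
      lift c to ℕ using hc
      rw [mem_map_natTriple]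
      obtain ⟨⟨A, B, C⟩, hmem, heq⟩ := Finset.mem_map.1 h
      replace heq : ((A : ℤ), (B : ℤ), (C : ℤ)) = ((a : ℤ), (b : ℤ), (c : ℤ)) + e := heq
      rcases he with rfl | rfl | rfl | rfl | rfl | rfl <;>
        simp only [vr, vg, vy, vb, vo, vs, Prod.mk_add_mk, Prod.mk.injEq] at heq <;>
        obtain ⟨hA, hB, hC⟩ := heq
      · obtain ⟨rfl, rfl, rfl⟩ : A = a + 1 ∧ B = b ∧ C = c := by omega
        exact hJ.red _ _ _ hmem
      · obtain ⟨rfl, rfl, rfl⟩ : A = a ∧ B = b + 1 ∧ C = c := by omega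
        exact hJ.red _ _ _ (hJ.orange _ _ _ (hJ.silver _ _ _ hmem) (Nat.zero_le _))
      · obtain ⟨rfl, rfl, rfl⟩ : A = a ∧ B = b ∧ C = c + 1 := by omega
        exact hJ.red _ _ _ (hJ.orange _ _ _ hmem (Nat.zero_le _))
      · obtain ⟨rfl, rfl, rfl⟩ : a = A + 1 ∧ B = b + 1 ∧ C = c := by omega
        exact hJ.orange _ _ _ (hJ.silver _ _ _ hmem) (Nat.zero_le _)
      · obtain ⟨rfl, rfl, rfl⟩ : a = A + 1 ∧ B = b ∧ C = c + 1 := by omega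
        exact hJ.orange _ _ _ hmem (Nat.zero_le _)
      · obtain ⟨rfl, rfl, rfl⟩ : A = a ∧ B = b + 1 ∧ c = C + 1 := by omega
        exact hJ.silver _ _ _ hmem

theorem card_ideals3 {n : ℕ} (hn : 1 ≤ n) :
    (ideals3 {vr, vg, vy, vb, vo, vs} (V3 n)).card = (partialIdeals (n - 1) 0).card := by
  symm
  refine Finset.card_bij (fun J _ => J.map natTriple) ?_ ?_ ?_
  · intro J hJ
    rw [mem_partialIdeals, ← isIdeal3_map_natTriple hn] at hJ
    exact Finset.mem_filter.2 ⟨Finset.mem_powerset.2 hJ.1, hJ⟩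
  · exact fun J _ J' _ h => Finset.map_injective _ h
  · intro I hI
    have hI' := (Finset.mem_filter.1 hI).2
    obtain ⟨J, rfl⟩ : ∃ J : Finset (ℕ × ℕ × ℕ), J.map natTriple = I := by
      refine ⟨I.preimage natTriple natTriple.injective.injOn, ?_⟩
      ext ⟨a, b, c⟩
      rw [Finset.mem_map]
      constructor
      · rintro ⟨p, hp, hpe⟩
        rw [← hpe]
        exact Finset.mem_preimage.1 hp
      · intro h
        obtain ⟨ha, hb, hc, -⟩ := mem_V3.1 (hI'.1 h)
        lift a to ℕ using ha
        lift b to ℕ using hb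
        lift c to ℕ using hc
        exact ⟨(a, b, c), Finset.mem_preimage.2 h, rfl⟩
    exact ⟨J, mem_partialIdeals.2 ((isIdeal3_map_natTriple hn).1 hI'), rfl⟩

theorem IsPartialIdeal.mem_of_sorted_le {m : ℕ} {I : Finset (ℕ × ℕ × ℕ)}
    (hI : IsPartialIdeal m 0 I) {a b c a' b' c' : ℕ} (h : (a - b, c - 1, b - c) ∈ I)
    (hab : b ≤ a) (hbc : c ≤ b) (hab' : b' ≤ a') (hbc' : c' ≤ b') (hc' : 1 ≤ c')
    (ha : a' ≤ a) (hb : b' ≤ b) (hc : c' ≤ c) : (a' - b', c' - 1, b' - c') ∈ I := by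
  have h1 : (a - b, c' - 1, b - c') ∈ I := by
    have := hI.silver_iterate (A := a - b) (B := c' - 1) (C := b - c) (c - c')
      (by rwa [show c' - 1 + (c - c') = c - 1 by omega])
    rwa [show b - c + (c - c') = b - c' by omega] at this
  have h2 : (a - b', c' - 1, b' - c') ∈ I := by
    have := hI.orange_iterate (A := a - b) (B := c' - 1) (C := b' - c') (Nat.zero_le _) (b - b')
      (by rwa [show b' - c' + (b - b') = b - c' by omega])
    rwa [show a - b + (b - b') = a - b' by omega] at this
  exact hI.red_iterate (a - a') (by rwa [show a' - b' + (a - a') = a - b' by omega])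

/-- The sorted coordinates of the points of a totally symmetric plane partition. -/
noncomputable def tsppIdeal (m : ℕ) (π : Set (ℕ × ℕ × ℕ)) : Finset (ℕ × ℕ × ℕ) :=
  (Finset.range m ×ˢ Finset.range m ×ˢ Finset.range m).filter
    fun p => (p.1 + p.2.1 + p.2.2 + 1, p.2.1 + p.2.2 + 1, p.2.1 + 1) ∈ π

theorem mem_tsppIdeal {m : ℕ} {π : Set (ℕ × ℕ × ℕ)} (hπ : IsPP m π) {A B C : ℕ} :
    (A, B, C) ∈ tsppIdeal m π ↔ (A + B + C + 1, B + C + 1, B + 1) ∈ π := by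
  simp only [tsppIdeal, Finset.mem_filter, Finset.mem_product, Finset.mem_range,
    and_iff_right_iff_imp]
  intro h
  have := hπ.1 _ h
  omega

theorem isPartialIdeal_tsppIdeal {m : ℕ} {π : Set (ℕ × ℕ × ℕ)} (hπ : IsPP m π) :
    IsPartialIdeal m 0 (tsppIdeal m π) := by
  refine ⟨fun A B C h => ?_, fun A B C h => ?_, fun A B C h _ => ?_, fun A B C h => ?_⟩ <;>
    rw [mem_tsppIdeal hπ] at h
  · have := hπ.1 _ h
    omega
  all_goals
    rw [mem_tsppIdeal hπ]
    exact hπ.2 _ _ _ _ _ _ h (by omega) (by omega) (by omega) (by omega) (by omega) (by omega)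

theorem IsTS.mem_iff_sorted {π : Set (ℕ × ℕ × ℕ)} (hπ : IsTS π) (i j k : ℕ) :
    (i, j, k) ∈ π ↔ (max i (max j k), i + j + k - max i (max j k) - min i (min j k),
      min i (min j k)) ∈ π := by
  have key : ∀ i j k, (i, j, k) ∈ π → ∀ a b c, ((a, b, c) = (i, j, k) ∨ (a, b, c) = (i, k, j) ∨
      (a, b, c) = (j, i, k) ∨ (a, b, c) = (j, k, i) ∨ (a, b, c) = (k, i, j) ∨
      (a, b, c) = (k, j, i)) → (a, b, c) ∈ π := by
    intro i j k h a b c habc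
    have := hπ i j k h
    rcases habc with h' | h' | h' | h' | h' | h' <;> rw [h'] <;> tauto
  constructor
  · intro h
    refine key _ _ _ h _ _ _ ?_
    simp only [Prod.mk.injEq]
    omega
  · intro h
    refine key _ _ _ h _ _ _ ?_
    simp only [Prod.mk.injEq]
    omega

theorem card_tspp (m : ℕ) :
    Nat.card {π : Set (ℕ × ℕ × ℕ) // IsTSPP m π} = (partialIdeals m 0).card := by
  rw [← Nat.card_eq_finsetCard]
  refine Nat.card_congr (Equiv.ofBijective
    (fun π => ⟨tsppIdeal m π.1, mem_partialIdeals.2 (isPartialIdeal_tsppIdeal π.2.1)⟩) ⟨?_, ?_⟩)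
  · rintro ⟨π, hπ, hs⟩ ⟨π', hπ', hs'⟩ h
    simp only [Subtype.mk.injEq] at h ⊢
    have hsort : ∀ a b c, c ≤ b → b ≤ a → ((a, b, c) ∈ π ↔ (a, b, c) ∈ π') := by
      intro a b c hcb hba
      rcases c with _ | c
      · constructor
        · intro h'; have := (hπ.1 _ h').2.2.1; simp at this
        · intro h'; have := (hπ'.1 _ h').2.2.1; simp at this
      · have h1 := mem_tsppIdeal hπ (A := a - b) (B := c) (C := b - (c + 1))
        have h2 := mem_tsppIdeal hπ' (A := a - b) (B := c) (C := b - (c + 1))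
        rw [h] at h1
        rw [show a - b + c + (b - (c + 1)) + 1 = a by omega,
          show c + (b - (c + 1)) + 1 = b by omega] at h1 h2
        exact h1.symm.trans h2
    ext ⟨i, j, k⟩
    rw [hs.mem_iff_sorted, hs'.mem_iff_sorted]
    exact hsort _ _ _ (by omega) (by omega)
  · rintro ⟨I, hI⟩
    rw [mem_partialIdeals] at hI
    let π : Set (ℕ × ℕ × ℕ) := {p | 1 ≤ min p.1 (min p.2.1 p.2.2) ∧
      (max p.1 (max p.2.1 p.2.2) -
        (p.1 + p.2.1 + p.2.2 - max p.1 (max p.2.1 p.2.2) - min p.1 (min p.2.1 p.2.2)),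
        min p.1 (min p.2.1 p.2.2) - 1,
        (p.1 + p.2.1 + p.2.2 - max p.1 (max p.2.1 p.2.2) - min p.1 (min p.2.1 p.2.2)) -
          min p.1 (min p.2.1 p.2.2)) ∈ I}
    have hmem : ∀ i j k a b c, max i (max j k) = a → min i (min j k) = c → i + j + k = a + b + c →
        ((i, j, k) ∈ π ↔ 1 ≤ c ∧ (a - b, c - 1, b - c) ∈ I) := by
      rintro i j k a b c rfl rfl h
      simp only [π, Set.mem_ofPred_eq]
      rw [show i + j + k - max i (max j k) - min i (min j k) = b by omega]
    have hsorted : ∀ i j k : ℕ, ∃ a b c : ℕ, max i (max j k) = a ∧ min i (min j k) = c ∧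
        i + j + k = a + b + c ∧ b ≤ a ∧ c ≤ b := fun i j k => by
      refine ⟨max i (max j k), i + j + k - max i (max j k) - min i (min j k), min i (min j k),
        rfl, rfl, ?_, ?_, ?_⟩ <;> omega
    have hPP : IsPP m π := by
      constructor
      · rintro ⟨i, j, k⟩ hp
        obtain ⟨a, b, c, ha, hc, h, hba, hcb⟩ := hsorted i j k
        obtain ⟨hc1, hp⟩ := (hmem i j k a b c ha hc h).1 hp
        have h1 := hI.mem_of_sorted_le hp hba hcb (a' := a) (b' := 1) (c' := 1) (by omega)
          (by omega) (by omega) (by omega) (by omega) (by omega)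
        have := hI.bound _ _ _ h1
        simp only
        omega
      · intro i j k i' j' k' hp hi hi' hj hj' hk hk'
        obtain ⟨a, b, c, ha, hc, h, hba, hcb⟩ := hsorted i j k
        obtain ⟨a', b', c', ha', hc', h', hba', hcb'⟩ := hsorted i' j' k'
        obtain ⟨hc1, hp⟩ := (hmem i j k a b c ha hc h).1 hp
        refine (hmem i' j' k' a' b' c' ha' hc' h').2 ⟨by omega, ?_⟩
        exact hI.mem_of_sorted_le hp hba hcb hba' hcb' (by omega) (by omega) (by omega) (by omega)
    have hTS : IsTS π := by
      intro i j k hp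
      obtain ⟨a, b, c, ha, hc, h, hba, hcb⟩ := hsorted i j k
      rw [hmem i j k a b c ha hc h] at hp
      refine ⟨?_, ?_, ?_, ?_, ?_⟩ <;>
        exact (hmem _ _ _ a b c (by omega) (by omega) (by omega)).2 hp
    refine ⟨⟨π, hPP, hTS⟩, Subtype.ext ?_⟩
    ext ⟨A, B, C⟩
    rw [mem_tsppIdeal hPP, hmem _ _ _ (A + B + C + 1) (B + C + 1) (B + 1) (by omega) (by omega)
      (by omega), show A + B + C + 1 - (B + C + 1) = A by omega, show B + 1 - 1 = B by omega,
      show B + C + 1 - (B + 1) = C by omega]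
    simp

section Gaussian

variable {M : Type*} [AddCommGroup M] [Module ℚ M]

open ExteriorAlgebra

theorem ι_mul_ι_mem_center (x y : M) :
    ι ℚ x * ι ℚ y ∈ Subalgebra.center ℚ (ExteriorAlgebra ℚ M) := by
  rw [Subalgebra.mem_center_iff]
  intro z
  induction z using ExteriorAlgebra.induction with
  | algebraMap r => exact Algebra.commutes r _
  | ι z =>
    rw [← mul_assoc, ι_mul_ι_comm_neg z x, neg_mul, mul_assoc, ι_mul_ι_comm_neg z y, mul_neg,
      neg_neg, mul_assoc]
  | mul a b ha hb => rw [mul_assoc, hb, ← mul_assoc, ha, mul_assoc]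
  | add a b ha hb => rw [add_mul, mul_add, ha, hb]

/-- The product of two vectors, as a central element of the exterior algebra. -/
noncomputable def centralPair (x y : M) : Subalgebra.center ℚ (ExteriorAlgebra ℚ M) :=
  ⟨ι ℚ x * ι ℚ y, ι_mul_ι_mem_center x y⟩

theorem coe_centralPair (x y : M) : (centralPair x y : ExteriorAlgebra ℚ M) = ι ℚ x * ι ℚ y := rfl

theorem centralPair_sq (x y : M) : centralPair x y ^ 2 = 0 := by
  apply Subtype.ext
  push_cast
  rw [coe_centralPair, sq, mul_assoc, ← mul_assoc (ι ℚ y), ι_mul_ι_comm_neg y x]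
  simp only [neg_mul, mul_assoc, ι_sq_zero, mul_zero, neg_zero]

theorem centralPair_sum_smul_left {α : Type*} (s : Finset α) (a : α → ℚ) (x : α → M) (y : M) :
    centralPair (∑ i ∈ s, a i • x i) y = ∑ i ∈ s, centralPair (x i) (a i • y) := by
  apply Subtype.ext
  push_cast
  simp only [coe_centralPair, map_sum, Finset.sum_mul, map_smul, smul_mul_assoc, mul_smul_comm]

theorem centralPair_sum_right {α : Type*} (s : Finset α) (x : M) (y : α → M) :
    centralPair x (∑ i ∈ s, y i) = ∑ i ∈ s, centralPair x (y i) := by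
  apply Subtype.ext
  push_cast
  simp only [coe_centralPair, map_sum, Finset.mul_sum]

theorem prod_one_add_eq_exp {R : Type*} [CommRing R] [Algebra ℚ R] {α : Type*} (s : Finset α)
    (w : α → R) (hw : ∀ i ∈ s, w i ^ 2 = 0) :
    ∏ i ∈ s, (1 + w i) = IsNilpotent.exp (∑ i ∈ s, w i) := by
  induction s using Finset.induction_on with
  | empty => simp
  | insert i s hi ih =>
    have hi2 : w i ^ 2 = 0 := hw i (by simp)
    have hs : ∀ j ∈ s, w j ^ 2 = 0 := fun j hj => hw j (by simp [hj])
    rw [Finset.prod_insert hi, Finset.sum_insert hi, ih hs,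
      IsNilpotent.exp_add_of_commute (Commute.all _ _) ⟨2, hi2⟩
        (isNilpotent_sum fun j hj => ⟨2, hs j hj⟩), IsNilpotent.exp_eq_sum hi2]
    simp [Finset.sum_range_succ]

theorem one_add_mul_mul_one_add (x y s : M) :
    (1 + ι ℚ (x + y)) * (1 + ι ℚ ((2 : ℚ) • s)) * (1 + ι ℚ (x - y)) =
      (1 + ι ℚ ((2 : ℚ) • (s + x))) * (1 + ι ℚ y * ι ℚ ((4 : ℚ) • s + (2 : ℚ) • x)) := by
  have r1 := ι_mul_ι_comm_neg y x
  have r2 := ι_mul_ι_comm_neg s x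
  have r3 := ι_mul_ι_comm_neg s y
  have r1' : ∀ z, ι ℚ y * (ι ℚ x * z) = -(ι ℚ x * (ι ℚ y * z)) := fun z => by
    rw [← mul_assoc, r1, neg_mul, mul_assoc]
  have r2' : ∀ z, ι ℚ s * (ι ℚ x * z) = -(ι ℚ x * (ι ℚ s * z)) := fun z => by
    rw [← mul_assoc, r2, neg_mul, mul_assoc]
  have r3' : ∀ z, ι ℚ s * (ι ℚ y * z) = -(ι ℚ y * (ι ℚ s * z)) := fun z => by
    rw [← mul_assoc, r3, neg_mul, mul_assoc]
  have q : ∀ u : M, ∀ z, ι ℚ u * (ι ℚ u * z) = 0 := fun u z => by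
    rw [← mul_assoc, ι_sq_zero, zero_mul]
  simp only [map_add, map_sub, map_smul, mul_add, add_mul, mul_sub, mul_one, one_mul,
    smul_mul_assoc, mul_smul_comm, mul_assoc, r1, r2, r3, r1', r2', r3', q, ι_sq_zero,
    mul_neg, smul_neg, smul_zero, mul_zero, neg_zero, smul_add]
  module

end Gaussian

section SkewForm

open Polynomial ExteriorAlgebra

/-- The form `∑ g_r (2 ∑_{p < r} f_p + f_r)` on polynomials `f = ∑ f_p X^p`, `g = ∑ g_r X^r`. -/
noncomputable def skewForm (f g : ℚ[X]) : ℚ :=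
  g.sum fun r c => c * (2 * ∑ p ∈ Finset.range r, f.coeff p + f.coeff r)

theorem skewForm_eq (f : ℚ[X]) {g : ℚ[X]} {m : ℕ} (hg : g.natDegree < m) :
    skewForm f g = ∑ r ∈ Finset.range m,
      g.coeff r * (2 * ∑ p ∈ Finset.range r, f.coeff p + f.coeff r) :=
  sum_over_range' g (f := fun r c => c * (2 * ∑ p ∈ Finset.range r, f.coeff p + f.coeff r))
    (fun _ => zero_mul _) m hg

/-- The vector of the `p`-th coefficients of the even-indexed members of `q`. -/
noncomputable def evenPart (m : ℕ) (q : ℕ → ℚ[X]) (p : ℕ) : Fin m → ℚ :=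
  fun j => if Even (j : ℕ) then (q j).coeff p else 0

/-- The vector of the `p`-th coefficients of the odd-indexed members of `q`. -/
noncomputable def oddPart (m : ℕ) (q : ℕ → ℚ[X]) (p : ℕ) : Fin m → ℚ :=
  fun j => if Even (j : ℕ) then 0 else (q j).coeff p

/-- The signed coefficient matrix of the family `q`. -/
noncomputable def coeffMatrix (m : ℕ) (q : ℕ → ℚ[X]) : Matrix (Fin m) (Fin m) ℚ :=
  Matrix.of fun j t => (-1) ^ (j : ℕ) * (-1) ^ (t : ℕ) * (q j).coeff t

theorem det_coeffMatrix {m : ℕ} {q : ℕ → ℚ[X]} (hdeg : ∀ j, (q j).natDegree ≤ j) :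
    (coeffMatrix m q).det = ∏ j ∈ Finset.range m, (q j).coeff j := by
  rw [Matrix.det_of_isLowerTriangular, ← Fin.prod_univ_eq_prod_range (fun j => (q j).coeff j)]
  · refine Finset.prod_congr rfl fun j _ => ?_
    rw [coeffMatrix, Matrix.of_apply, ← mul_pow]
    simp
  · intro i j hij
    have hij' : (i : ℕ) < j := by simpa using hij
    rw [coeffMatrix, Matrix.of_apply,
      coeff_eq_zero_of_natDegree_lt ((hdeg i).trans_lt hij'), mul_zero]

theorem toLin'_stdVec {m : ℕ} (N : Matrix (Fin m) (Fin m) ℚ) {t : ℕ} (ht : t < m) :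
    Matrix.toLin' N (stdVec m t) = fun i => N i ⟨t, ht⟩ := by
  rw [show stdVec m t = Pi.single ⟨t, ht⟩ 1 from ?_]
  · rw [Matrix.toLin'_apply, Matrix.mulVec_single_one]
    rfl
  · ext i
    simp [stdVec, Pi.single_apply, Fin.ext_iff]

theorem coeffMatrix_binVec {m : ℕ} {q : ℕ → ℚ[X]} (hdeg : ∀ j, (q j).natDegree ≤ j)
    (hsym : ∀ j, (q j).comp (-1 - X) = (-1 : ℚ) ^ j • q j) (p : ℕ) :
    Matrix.toLin' (coeffMatrix m q) (binVec m p) = evenPart m q p + oddPart m q p := by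
  ext j
  have h1 : (evenPart m q p + oddPart m q p) j = (q j).coeff p := by
    by_cases h : Even (j : ℕ) <;> simp [evenPart, oddPart, h]
  have h2 : ((q j).comp (-1 - X)).coeff p =
      ∑ t ∈ Finset.range m, (-1) ^ t * (q j).coeff t * (t.choose p : ℚ) := by
    rw [comp, eval₂_eq_sum_range' C ((hdeg j).trans_lt j.2), finsetSum_coeff]
    refine Finset.sum_congr rfl fun t _ => ?_
    rw [show (-1 - X : ℚ[X]) = C (-1) * (1 + X) by simp; ring, mul_pow, ← C_pow, ← mul_assoc,
      ← C_mul, coeff_C_mul, coeff_one_add_X_pow]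
    ring
  rw [h1, Matrix.toLin'_apply, Matrix.mulVec, dotProduct]
  have h3 : ∀ t : Fin m, coeffMatrix m q j t * binVec m p t =
      (-1) ^ (j : ℕ) * ((-1) ^ (t : ℕ) * (q j).coeff t * ((t : ℕ).choose p : ℚ)) := by
    intro t
    simp only [coeffMatrix, Matrix.of_apply, binVec]
    ring
  simp only [h3]
  rw [← Finset.mul_sum, Fin.sum_univ_eq_sum_range
    (fun t => (-1) ^ t * (q j).coeff t * (t.choose p : ℚ)), ← h2, hsym, coeff_smul, smul_eq_mul,
    ← mul_assoc, ← mul_pow]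
  simp

theorem coeffMatrix_stdVec {m : ℕ} (q : ℕ → ℚ[X]) {p : ℕ} (hp : p < m) :
    Matrix.toLin' (coeffMatrix m q) ((-1 : ℚ) ^ p • stdVec m p) =
      evenPart m q p - oddPart m q p := by
  rw [map_smul, toLin'_stdVec _ hp]
  ext j
  have h : (-1 : ℚ) ^ p * (-1) ^ p = 1 := by rw [← mul_pow]; simp
  simp only [coeffMatrix, Matrix.of_apply, Pi.smul_apply, smul_eq_mul, Pi.sub_apply, evenPart,
    oddPart]
  split_ifs with hj
  · rw [hj.neg_one_pow]
    linear_combination (q j).coeff p * h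
  · rw [(Nat.not_even_iff_odd.mp hj).neg_one_pow]
    linear_combination -(q j).coeff p * h

theorem ascProd_succ_right (m r k : ℕ) :
    ascProd m r (k + 1) = ascProd m r k * (1 + (-1 : ℚ) ^ (r + k) • gen m (r + k)) := by
  induction k generalizing r with
  | zero => simp [ascProd]
  | succ k ih => rw [ascProd, ih, ascProd, mul_assoc, add_right_comm, add_assoc]

/-- The quadratic factor contributed by the `r`-th coefficients of `q`. -/
noncomputable def pairFactor (m : ℕ) (q : ℕ → ℚ[X]) (r : ℕ) :
    Subalgebra.center ℚ (ExteriorAlgebra ℚ (Fin m → ℚ)) :=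
  centralPair (oddPart m q r)
    ((4 : ℚ) • ∑ p ∈ Finset.range r, evenPart m q p + (2 : ℚ) • evenPart m q r)

theorem map_binProd_mul_ascProd {m : ℕ} {q : ℕ → ℚ[X]} (hdeg : ∀ j, (q j).natDegree ≤ j)
    (hsym : ∀ j, (q j).comp (-1 - X) = (-1 : ℚ) ^ j • q j) {r : ℕ} (hr : r ≤ m) :
    ExteriorAlgebra.map (Matrix.toLin' (coeffMatrix m q)) (binProd m r * ascProd m 0 r) =
      (1 + ι ℚ ((2 : ℚ) • ∑ p ∈ Finset.range r, evenPart m q p)) *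
        ((∏ i ∈ Finset.range r, (1 + pairFactor m q i) : Subalgebra.center ℚ _) :
          ExteriorAlgebra ℚ (Fin m → ℚ)) := by
  induction r with
  | zero => simp [binProd, ascProd]
  | succ r ih =>
    have hc := Subalgebra.mem_center_iff.mp
      (∏ i ∈ Finset.range r, (1 + pairFactor m q i)).2
    rw [binProd, ascProd_succ_right, zero_add, mul_assoc, ← mul_assoc (binProd m r), map_mul,
      map_mul, ih (by lia), map_add, map_add, map_one, map_apply_ι, gen, ← map_smul (ι ℚ),
      map_apply_ι, coeffMatrix_binVec hdeg hsym, coeffMatrix_stdVec q (by lia), hc,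
      mul_assoc, ← hc, ← mul_assoc, ← mul_assoc, one_add_mul_mul_one_add, Finset.prod_range_succ,
      Finset.sum_range_succ, mul_assoc, hc]
    rw [mul_comm (∏ i ∈ Finset.range r, (1 + pairFactor m q i))]
    push_cast
    rw [pairFactor, coe_centralPair, ← hc]

end SkewForm

section Evaluation

open Polynomial ExteriorAlgebra

/-- The vector with coordinates `2 * skewForm (q j) g` at even `j`, and `0` at odd `j`. -/
noncomputable def skewVec (m : ℕ) (q : ℕ → ℚ[X]) (g : ℚ[X]) : Fin m → ℚ :=
  fun j => if Even (j : ℕ) then 2 * skewForm (q j) g else 0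

theorem skewVec_eq {m : ℕ} (q : ℕ → ℚ[X]) {g : ℚ[X]} (hg : g.natDegree < m) :
    skewVec m q g = ∑ r ∈ Finset.range m, g.coeff r •
      ((4 : ℚ) • ∑ p ∈ Finset.range r, evenPart m q p + (2 : ℚ) • evenPart m q r) := by
  ext j
  simp only [Finset.sum_apply, Pi.smul_apply, Pi.add_apply, smul_eq_mul, skewVec, evenPart]
  split_ifs with hj
  · rw [skewForm_eq _ hg, Finset.mul_sum]
    exact Finset.sum_congr rfl fun r _ => by ring
  · simp

theorem oddPart_eq (m : ℕ) (q : ℕ → ℚ[X]) (r : ℕ) :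
    oddPart m q r =
      ∑ b ∈ Finset.range (m / 2), (q (2 * b + 1)).coeff r • stdVec m (2 * b + 1) := by
  ext j
  simp only [oddPart, Finset.sum_apply, Pi.smul_apply, smul_eq_mul, stdVec, mul_ite, mul_one,
    mul_zero]
  split_ifs with hj
  · refine (Finset.sum_eq_zero fun b _ => if_neg ?_).symm
    rintro h
    rw [h] at hj
    exact absurd hj (by simp)
  · obtain ⟨b, hb⟩ := Nat.not_even_iff_odd.mp hj
    rw [Finset.sum_eq_single b, if_pos hb, hb]
    · intro c _ hc
      exact if_neg (by lia)
    · intro h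
      have := j.2
      exact absurd (Finset.mem_range.mpr (by lia)) h

theorem prod_one_add_pairFactor {m : ℕ} {q : ℕ → ℚ[X]} (hdeg : ∀ j, (q j).natDegree ≤ j) :
    ∏ r ∈ Finset.range m, (1 + pairFactor m q r) = ∏ b ∈ Finset.range (m / 2),
      (1 + centralPair (stdVec m (2 * b + 1)) (skewVec m q (q (2 * b + 1)))) := by
  rw [prod_one_add_eq_exp _ (pairFactor m q) fun r _ => centralPair_sq _ _,
    prod_one_add_eq_exp _ _ fun b _ => centralPair_sq _ _]
  congr 1
  simp only [pairFactor, oddPart_eq, centralPair_sum_smul_left]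
  rw [Finset.sum_comm]
  refine Finset.sum_congr rfl fun b hb => ?_
  rw [← centralPair_sum_right, skewVec_eq]
  have := Finset.mem_range.mp hb
  exact (hdeg _).trans_lt (by lia)

theorem coe_prod_centralPair_mem {M : Type*} [AddCommGroup M] [Module ℚ M] (t : Finset ℕ)
    (x y : ℕ → M) :
    ((∏ b ∈ t, centralPair (x b) (y b) : Subalgebra.center ℚ _) : ExteriorAlgebra ℚ M) ∈
      LinearMap.range (ι ℚ : M →ₗ[ℚ] _) ^ (2 * t.card) := by
  induction t using Finset.induction_on with
  | empty => simp
  | insert b t hb ih =>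
    rw [Finset.prod_insert hb, Finset.card_insert_of_notMem hb, mul_add, mul_one, add_comm,
      pow_add, sq]
    exact Submodule.mul_mem_mul
      (Submodule.mul_mem_mul (LinearMap.mem_range_self _ _) (LinearMap.mem_range_self _ _)) ih

theorem coe_prod_one_add {M : Type*} [AddCommGroup M] [Module ℚ M] (t : Finset ℕ) (x y : ℕ → M) :
    ((∏ b ∈ t, (1 + centralPair (x b) (y b)) : Subalgebra.center ℚ _) : ExteriorAlgebra ℚ M) =
      ∑ u ∈ t.powerset,
        ((∏ b ∈ u, centralPair (x b) (y b) : Subalgebra.center ℚ _) : ExteriorAlgebra ℚ M) := by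
  rw [Finset.prod_one_add]
  push_cast
  rfl

theorem topForm_one_add_mul_prod_even {k : ℕ} (s : Fin (2 * k) → ℚ) (x y : ℕ → Fin (2 * k) → ℚ) :
    topForm (2 * k) ((1 + ι ℚ s) * ((∏ b ∈ Finset.range k, (1 + centralPair (x b) (y b)) :
      Subalgebra.center ℚ _) : ExteriorAlgebra ℚ (Fin (2 * k) → ℚ))) =
    topForm (2 * k) ((∏ b ∈ Finset.range k, centralPair (x b) (y b) :
      Subalgebra.center ℚ _) : ExteriorAlgebra ℚ (Fin (2 * k) → ℚ)) := by
  rw [coe_prod_one_add, Finset.mul_sum, map_sum, Finset.sum_eq_single (Finset.range k)]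
  · rw [add_mul, one_mul, map_add, add_eq_left]
    refine topForm_of_mem_pow (i := 1 + 2 * (Finset.range k).card) (by lia) ?_
    rw [pow_add, pow_one]
    exact Submodule.mul_mem_mul (LinearMap.mem_range_self _ _) (coe_prod_centralPair_mem _ _ _)
  · intro t ht htk
    have hlt : t.card < k := by
      simpa using Finset.card_lt_card
        (Finset.ssubset_iff_subset_ne.mpr ⟨Finset.mem_powerset.mp ht, htk⟩)
    rw [add_mul, one_mul, map_add,
      topForm_of_mem_pow (by lia) (coe_prod_centralPair_mem t _ _), zero_add]
    refine topForm_of_mem_pow (i := 1 + 2 * t.card) (by lia) ?_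
    rw [pow_add, pow_one]
    exact Submodule.mul_mem_mul (LinearMap.mem_range_self _ _) (coe_prod_centralPair_mem _ _ _)
  · simp

theorem topForm_one_add_mul_prod_odd {k : ℕ} (s : Fin (2 * k + 1) → ℚ)
    (x y : ℕ → Fin (2 * k + 1) → ℚ) :
    topForm (2 * k + 1) ((1 + ι ℚ s) * ((∏ b ∈ Finset.range k, (1 + centralPair (x b) (y b)) :
      Subalgebra.center ℚ _) : ExteriorAlgebra ℚ (Fin (2 * k + 1) → ℚ))) =
    topForm (2 * k + 1) (ι ℚ s * ((∏ b ∈ Finset.range k, centralPair (x b) (y b) :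
      Subalgebra.center ℚ _) : ExteriorAlgebra ℚ (Fin (2 * k + 1) → ℚ))) := by
  rw [coe_prod_one_add, Finset.mul_sum, map_sum, Finset.sum_eq_single (Finset.range k)]
  · rw [add_mul, one_mul, map_add, topForm_of_mem_pow (by lia) (coe_prod_centralPair_mem _ _ _),
      zero_add]
  · intro t ht htk
    have hlt : t.card < k := by
      simpa using Finset.card_lt_card
        (Finset.ssubset_iff_subset_ne.mpr ⟨Finset.mem_powerset.mp ht, htk⟩)
    rw [add_mul, one_mul, map_add,
      topForm_of_mem_pow (by lia) (coe_prod_centralPair_mem t _ _), zero_add]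
    refine topForm_of_mem_pow (i := 1 + 2 * t.card) (by lia) ?_
    rw [pow_add, pow_one]
    exact Submodule.mul_mem_mul (LinearMap.mem_range_self _ _) (coe_prod_centralPair_mem _ _ _)
  · simp

/-- The `j`-th column of the triangular matrix attached to the family `q`. -/
noncomputable def triCol (m : ℕ) (q : ℕ → ℚ[X]) (j : ℕ) : Fin m → ℚ :=
  if Even j then
    if j + 1 < m then skewVec m q (q (j + 1))
    else (2 : ℚ) • ∑ p ∈ Finset.range m, evenPart m q p
  else stdVec m j

/-- The triangular matrix attached to the family `q`. -/
noncomputable def triMatrix (m : ℕ) (q : ℕ → ℚ[X]) : Matrix (Fin m) (Fin m) ℚ :=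
  Matrix.of fun i j => triCol m q j i

theorem toLin'_triMatrix_stdVec {m : ℕ} (q : ℕ → ℚ[X]) {j : ℕ} (hj : j < m) :
    Matrix.toLin' (triMatrix m q) (stdVec m j) = triCol m q j := by
  rw [toLin'_stdVec _ hj]
  rfl

theorem det_triMatrix {m : ℕ} {q : ℕ → ℚ[X]}
    (htri : ∀ a b, b < a → skewForm (q (2 * a)) (q (2 * b + 1)) = 0) :
    (triMatrix m q).det = ∏ j ∈ Finset.range m, if Even j then
      if j + 1 < m then 2 * skewForm (q j) (q (j + 1))
      else 2 * ∑ p ∈ Finset.range m, (q j).coeff p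
    else 1 := by
  rw [Matrix.det_of_isUpperTriangular, ← Fin.prod_univ_eq_prod_range (fun j => if Even j then
      if j + 1 < m then 2 * skewForm (q j) (q (j + 1))
      else 2 * ∑ p ∈ Finset.range m, (q j).coeff p
    else 1)]
  · refine Finset.prod_congr rfl fun j _ => ?_
    rw [triMatrix, Matrix.of_apply, triCol]
    split_ifs with h1 h2
    · simp [skewVec, h1]
    · simp [evenPart, h1]
    · simp [stdVec]
  · intro i j hij
    have hij' : (j : ℕ) < i := by simpa using hij
    have := i.2
    rw [triMatrix, Matrix.of_apply, triCol]
    split_ifs with h1 h2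
    · rw [skewVec]
      split_ifs with h3
      · obtain ⟨a, ha⟩ := h3.two_dvd
        obtain ⟨b, hb⟩ := h1.two_dvd
        rw [ha, hb, htri a b (by lia), mul_zero]
      · rfl
    · lia
    · rw [stdVec, if_neg (by lia)]

theorem map_triMatrix_descProd {m k : ℕ} (q : ℕ → ℚ[X]) (hk : 2 * k ≤ m) :
    ExteriorAlgebra.map (Matrix.toLin' (triMatrix m q)) (descProd m (2 * k)) =
      ((∏ b ∈ Finset.range k, centralPair (stdVec m (2 * b + 1)) (skewVec m q (q (2 * b + 1))) :
        Subalgebra.center ℚ _) : ExteriorAlgebra ℚ (Fin m → ℚ)) := by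
  induction k with
  | zero => simp [descProd]
  | succ k ih =>
    rw [mul_add, mul_one, descProd, descProd, map_mul, map_mul, ih (by lia), gen, gen,
      map_apply_ι, map_apply_ι, toLin'_triMatrix_stdVec q (by lia),
      toLin'_triMatrix_stdVec q (by lia), triCol, if_neg (by simp), triCol, if_pos (by simp),
      if_pos (by lia), ← mul_assoc, Finset.prod_range_succ, mul_comm (∏ b ∈ _, _)]
    rfl

theorem prod_range_two_mul {R : Type*} [CommMonoid R] (f : ℕ → R) (k : ℕ) :
    ∏ j ∈ Finset.range (2 * k), f j = ∏ b ∈ Finset.range k, f (2 * b) * f (2 * b + 1) := by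
  induction k with
  | zero => simp
  | succ k ih =>
    rw [mul_add, mul_one, Finset.prod_range_succ, Finset.prod_range_succ, ih,
      Finset.prod_range_succ, mul_assoc]

theorem card_partialIdeals_mul_prod_coeff {m : ℕ} {q : ℕ → ℚ[X]}
    (hdeg : ∀ j, (q j).natDegree ≤ j)
    (hsym : ∀ j, (q j).comp (-1 - X) = (-1 : ℚ) ^ j • q j) :
    ((partialIdeals m 0).card : ℚ) * ∏ j ∈ Finset.range m, (q j).coeff j =
      topForm m ((1 + ι ℚ ((2 : ℚ) • ∑ p ∈ Finset.range m, evenPart m q p)) *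
        ((∏ b ∈ Finset.range (m / 2),
          (1 + centralPair (stdVec m (2 * b + 1)) (skewVec m q (q (2 * b + 1)))) :
        Subalgebra.center ℚ _) : ExteriorAlgebra ℚ (Fin m → ℚ))) := by
  rw [← prod_one_add_pairFactor hdeg, ← map_binProd_mul_ascProd hdeg hsym le_rfl, topForm_map,
    LinearMap.det_toLin', det_coeffMatrix hdeg, card_partialIdeals_eq_topForm, mul_comm]

theorem card_partialIdeals_even {q : ℕ → ℚ[X]} (hdeg : ∀ j, (q j).natDegree ≤ j)
    (hsym : ∀ j, (q j).comp (-1 - X) = (-1 : ℚ) ^ j • q j)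
    (htri : ∀ a b, b < a → skewForm (q (2 * a)) (q (2 * b + 1)) = 0) (k : ℕ) :
    ((partialIdeals (2 * k) 0).card : ℚ) * ∏ j ∈ Finset.range (2 * k), (q j).coeff j =
      ∏ b ∈ Finset.range k, 2 * skewForm (q (2 * b)) (q (2 * b + 1)) := by
  rw [card_partialIdeals_mul_prod_coeff hdeg hsym, Nat.mul_div_cancel_left k two_pos,
    topForm_one_add_mul_prod_even, ← map_triMatrix_descProd q le_rfl, topForm_map,
    topForm_descProd, mul_one, LinearMap.det_toLin', det_triMatrix htri, prod_range_two_mul]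
  refine Finset.prod_congr rfl fun b hb => ?_
  have := Finset.mem_range.mp hb
  rw [if_pos (by simp), if_pos (by lia), if_neg (by simp), mul_one]

theorem card_partialIdeals_odd {q : ℕ → ℚ[X]} (hdeg : ∀ j, (q j).natDegree ≤ j)
    (hsym : ∀ j, (q j).comp (-1 - X) = (-1 : ℚ) ^ j • q j)
    (htri : ∀ a b, b < a → skewForm (q (2 * a)) (q (2 * b + 1)) = 0) (k : ℕ) :
    ((partialIdeals (2 * k + 1) 0).card : ℚ) * ∏ j ∈ Finset.range (2 * k + 1), (q j).coeff j =
      (∏ b ∈ Finset.range k, 2 * skewForm (q (2 * b)) (q (2 * b + 1))) *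
        (2 * (q (2 * k)).eval 1) := by
  have hψ : ι ℚ ((2 : ℚ) • ∑ p ∈ Finset.range (2 * k + 1), evenPart (2 * k + 1) q p) =
      ExteriorAlgebra.map (Matrix.toLin' (triMatrix (2 * k + 1) q)) (gen (2 * k + 1) (2 * k)) := by
    rw [gen, map_apply_ι, toLin'_triMatrix_stdVec q (by lia), triCol, if_pos (by simp),
      if_neg (by lia)]
  rw [card_partialIdeals_mul_prod_coeff hdeg hsym, show (2 * k + 1) / 2 = k by lia,
    topForm_one_add_mul_prod_odd, ← map_triMatrix_descProd q (by lia), hψ, ← map_mul,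
    ← descProd, topForm_map, topForm_descProd, mul_one, LinearMap.det_toLin',
    det_triMatrix htri, Finset.prod_range_succ, prod_range_two_mul, if_pos (by simp),
    if_neg (by lia), eval_eq_sum_range' ((hdeg (2 * k)).trans_lt (Nat.lt_succ_self _))]
  congr 1
  · refine Finset.prod_congr rfl fun b hb => ?_
    have := Finset.mem_range.mp hb
    rw [if_pos (by simp), if_pos (by lia), if_neg (by simp), mul_one]
  · simp

end Evaluation

section SkewFormValues

open Polynomial

/-- The reciprocal factorial, extended by zero to negative integers. -/
noncomputable def invFact (z : ℤ) : ℚ := if z < 0 then 0 else 1 / (z.toNat.factorial : ℚ)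

theorem invFact_natCast (n : ℕ) : invFact n = 1 / (n.factorial : ℚ) := by
  simp [invFact]

theorem invFact_of_neg {z : ℤ} (hz : z < 0) : invFact z = 0 := if_pos hz

theorem invFact_sub_one (z : ℤ) : invFact (z - 1) = z * invFact z := by
  rcases lt_trichotomy z 0 with hz | rfl | hz
  · rw [invFact_of_neg hz, invFact_of_neg (by lia), mul_zero]
  · rw [invFact_of_neg (by lia), Int.cast_zero, zero_mul]
  · obtain ⟨n, rfl⟩ : ∃ n : ℕ, z = n + 1 := ⟨(z - 1).toNat, by lia⟩
    rw [add_sub_cancel_right, ← Nat.cast_succ, invFact_natCast, invFact_natCast,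
      Nat.factorial_succ]
    have := Nat.factorial_ne_zero n
    push_cast
    field_simp

theorem skewForm_add_right (f g₁ g₂ : ℚ[X]) :
    skewForm f (g₁ + g₂) = skewForm f g₁ + skewForm f g₂ :=
  sum_add_index g₁ g₂ _ (fun _ => zero_mul _) fun _ _ _ => add_mul _ _ _

theorem skewForm_C_mul_X_pow (f : ℚ[X]) (c : ℚ) (r : ℕ) :
    skewForm f (C c * X ^ r) = c * (2 * ∑ p ∈ Finset.range r, f.coeff p + f.coeff r) := by
  rw [C_mul_X_pow_eq_monomial]
  exact sum_monomial_index _ _ (zero_mul _)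

theorem skewForm_C_mul_add_left (c : ℚ) (f₁ f₂ g : ℚ[X]) :
    skewForm (C c * f₁ + f₂) g = c * skewForm f₁ g + skewForm f₂ g := by
  simp only [skewForm_eq _ (Nat.lt_succ_self g.natDegree), coeff_add, coeff_C_mul,
    Finset.sum_add_distrib, ← Finset.mul_sum]
  rw [Finset.mul_sum, ← Finset.sum_add_distrib]
  exact Finset.sum_congr rfl fun r _ => by ring

theorem skewForm_sum_C_mul_left {α : Type*} (s : Finset α) (c : α → ℚ) (f : α → ℚ[X]) (g : ℚ[X]) :
    skewForm (∑ i ∈ s, C (c i) * f i) g = ∑ i ∈ s, c i * skewForm (f i) g := by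
  induction s using Finset.induction_on with
  | empty => simp [skewForm, sum_def]
  | insert i s hi ih =>
    rw [Finset.sum_insert hi, Finset.sum_insert hi, skewForm_C_mul_add_left, ih]

/-- The polynomial `X (1 + X)`, invariant under `X ↦ -1 - X`. -/
noncomputable def symPoly : ℚ[X] := X * (1 + X)

theorem coeff_X_pow_mul_one_add_X_pow (c d N : ℕ) :
    (X ^ c * (1 + X) ^ d : ℚ[X]).coeff N =
      d.factorial * invFact (N - c) * invFact (d + c - N) := by
  rw [coeff_X_pow_mul']
  split_ifs with h
  · obtain ⟨j, rfl⟩ := Nat.exists_eq_add_of_le h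
    rw [Nat.add_sub_cancel_left, coeff_one_add_X_pow,
      show ((c + j : ℕ) : ℤ) - c = (j : ℕ) by push_cast; ring, invFact_natCast]
    rcases le_or_gt j d with hj | hj
    · rw [show (d : ℤ) + c - (c + j : ℕ) = (d - j : ℕ) by lia, invFact_natCast,
        Nat.cast_choose ℚ hj]
      field_simp
    · rw [Nat.choose_eq_zero_of_lt hj, invFact_of_neg (by lia)]
      simp
  · rw [invFact_of_neg (by lia)]
    simp

theorem skewForm_symPoly_pow_X_sub_one_mul (a : ℕ) (P : ℚ[X]) :
    skewForm (symPoly ^ a) ((X - 1) * P) = ((1 + X) ^ (a + 1) * P).coeff (2 * a) := by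
  induction P using Polynomial.induction_on' with
  | add P Q hP hQ => rw [mul_add, skewForm_add_right, hP, hQ, mul_add, coeff_add]
  | monomial r c =>
    have h1 : (X - 1) * monomial r c = C c * X ^ (r + 1) + C (-c) * X ^ r := by
      rw [← C_mul_X_pow_eq_monomial, C_neg]
      ring
    have h2 : (1 + X) ^ (a + 1) * monomial r c = C c * (X ^ r * (1 + X : ℚ[X]) ^ (a + 1)) := by
      rw [← C_mul_X_pow_eq_monomial]
      ring
    have h3 : (symPoly ^ a).coeff (r + 1) + (symPoly ^ a).coeff r =
        (X ^ a * (1 + X : ℚ[X]) ^ (a + 1)).coeff (r + 1) := by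
      rw [show X ^ a * (1 + X : ℚ[X]) ^ (a + 1) = symPoly ^ a + X * symPoly ^ a by
        rw [symPoly, mul_pow]; ring, coeff_add, coeff_X_mul]
    rw [h1, h2, skewForm_add_right, skewForm_C_mul_X_pow, skewForm_C_mul_X_pow, coeff_C_mul,
      Finset.sum_range_succ]
    rw [coeff_X_pow_mul_one_add_X_pow] at h3 ⊢
    push_cast at h3 ⊢
    rw [show (a : ℤ) + 1 + a - (r + 1) = 2 * a - r by ring] at h3
    rw [show (a : ℤ) + 1 + r - 2 * a = r + 1 - a by ring]
    linear_combination c * h3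

/-- Odd-degree polynomials, antisymmetric under `X ↦ -1 - X`. -/
noncomputable def oddPoly : ℕ → ℚ[X]
  | 0 => 2 * X + 1
  | b + 1 => (2 * X + 1) * symPoly ^ b * (symPoly - 2)

/-- The values of `skewForm` at `symPoly ^ a` and `oddPoly b`. -/
noncomputable def skewValue (a b : ℕ) : ℚ :=
  (a + b).factorial * invFact (2 * b - a + 1) * invFact (2 * a - b + 1) *
    (9 * a * b + 7 * a + 7 * b + 5)

theorem skewForm_symPoly_pow_oddPoly (a b : ℕ) :
    skewForm (symPoly ^ a) (oddPoly b) = skewValue a b := by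
  cases b with
  | zero =>
    have h : oddPoly 0 = C 2 * X ^ 1 + C 1 * X ^ 0 := by simp [oddPoly, C_ofNat]
    have hc (N : ℕ) : (symPoly ^ a).coeff N =
        a.factorial * invFact (N - a) * invFact (2 * a - N) := by
      rw [symPoly, mul_pow, coeff_X_pow_mul_one_add_X_pow, two_mul]
    rw [h, skewForm_add_right, skewForm_C_mul_X_pow, skewForm_C_mul_X_pow, Finset.sum_range_one,
      Finset.sum_range_zero, hc, hc, skewValue]
    rcases a with _ | _ | a
    · norm_num [invFact]
    · norm_num [invFact, show Int.toNat 3 = 3 from rfl, Nat.factorial]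
    · rw [invFact_of_neg (z := (0 : ℕ) - _) (by lia), invFact_of_neg (z := (1 : ℕ) - _) (by lia),
        invFact_of_neg (z := 2 * (0 : ℕ) - _ + 1) (by lia)]
      simp
  | succ b =>
    have h : oddPoly (b + 1) = (X - 1) * (C 2 * (X ^ b * (1 + X) ^ (b + 2))
        + X ^ (b + 1) * (1 + X) ^ b) := by
      rw [oddPoly, symPoly, mul_pow, C_ofNat]
      ring
    rw [h, skewForm_symPoly_pow_X_sub_one_mul, mul_add, coeff_add, mul_left_comm, coeff_C_mul,
      mul_left_comm, ← pow_add, mul_left_comm, ← pow_add, coeff_X_pow_mul_one_add_X_pow,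
      coeff_X_pow_mul_one_add_X_pow, skewValue]
    have e1 := invFact_sub_one (2 * a - b)
    have e2 := invFact_sub_one (2 * (b + 1) - a + 1)
    rw [show a + 1 + (b + 2) = (a + (b + 1)) + 2 by ring, show a + 1 + b = a + (b + 1) by ring,
      Nat.factorial_succ, Nat.factorial_succ]
    push_cast at e1 e2 ⊢
    rw [show (2 * a : ℤ) - (b + 1) = 2 * a - b - 1 by ring, e1,
      show (2 * a : ℤ) - b - 1 + 1 = 2 * a - b by ring,
      show (a : ℤ) + (b + 1) + (b + 1) - 2 * a = 2 * (b + 1) - a + 1 - 1 by ring, e2,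
      show (a : ℤ) + (b + 1) + 2 + b - 2 * a = 2 * (b + 1) - a + 1 by ring]
    ring

end SkewFormValues

section HypergeometricSums

/-- The hypergeometric term `(3 a + 2)⁻¹ c(k, a)` of the orthogonal family. -/
noncomputable def hyperTerm (k : ℕ) : ℕ → ℚ
  | 0 => 1
  | a + 1 => hyperTerm k a * (-2 * (2 * k + 3 + 2 * a) * (k - a)) / ((2 * k + 3 + a) * (2 * k - a))

/-- The coefficients of the orthogonal family. -/
noncomputable def evenCoeff (k a : ℕ) : ℚ := (3 * a + 2) * hyperTerm k a

theorem hyperTerm_succ_self (k : ℕ) : hyperTerm k (k + 1) = 0 := by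
  simp [hyperTerm]

theorem hyperTerm_succ {k a : ℕ} (ha : a < k) :
    hyperTerm k (a + 1) * ((2 * k + 3 + a) * (2 * k - a)) =
      hyperTerm k a * (-2 * (2 * k + 3 + 2 * a) * (k - a)) := by
  have h1 : (a : ℚ) < k := by exact_mod_cast ha
  have h2 : (0 : ℚ) ≤ a := by positivity
  rw [hyperTerm, div_mul_cancel₀]
  exact mul_ne_zero (by positivity) (by linarith)

theorem hyperTerm_succ' {k a : ℕ} (ha : a ≤ k) :
    hyperTerm k (a + 1) * ((2 * k + 3 + a) * (2 * k - a)) =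
      hyperTerm k a * (-2 * (2 * k + 3 + 2 * a) * (k - a)) := by
  rcases ha.lt_or_eq with h | rfl
  · exact hyperTerm_succ h
  · rw [hyperTerm_succ_self]
    ring

theorem hyperTerm_ne_zero {k a : ℕ} (ha : a ≤ k) : hyperTerm k a ≠ 0 := by
  induction a with
  | zero => simp [hyperTerm]
  | succ a ih =>
    have h1 : (a : ℚ) + 1 ≤ k := by exact_mod_cast ha
    have h2 : (0 : ℚ) ≤ a := by positivity
    rw [hyperTerm]
    refine div_ne_zero (mul_ne_zero (ih (by lia)) (mul_ne_zero (mul_ne_zero (by norm_num) ?_) ?_))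
      (mul_ne_zero (by positivity) ?_)
    · positivity
    · linarith
    · linarith

theorem evenCoeff_self_ne_zero (k : ℕ) : evenCoeff k k ≠ 0 :=
  mul_ne_zero (by positivity) (hyperTerm_ne_zero le_rfl)

/-- The value of `skewForm` on the orthogonal family. -/
noncomputable def skewSum (k b : ℕ) : ℚ := ∑ a ∈ Finset.range (k + 1), evenCoeff k a * skewValue a b

/-- The antidifference in `a` witnessing the first-order recurrence of `skewSum` in `b`. -/
noncomputable def skewCert (k b a : ℕ) : ℚ :=
  (a + 2 * k + 2) * (a - 2 * k - 1) *
    (-(b + 1) * (3 * b + 5) + (3 * b + 4) * (b + 3) * a / 2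
      + (27 * b ^ 2 + 75 * b + 46) * a ^ 2 / 2) *
    hyperTerm k a * (a + b).factorial * invFact (2 * b + 3 - a) * invFact (2 * a - b - 1)

theorem skewCert_succ_sub {k a : ℕ} (b : ℕ) (ha : a ≤ k) :
    (b + 2) * (2 * k + 1 - b) * (2 * k + 2 + b) / 2 * (evenCoeff k a * skewValue a b) +
      (k - b - 1) * (2 * k + 2 * b + 5) * (b + 1) * (evenCoeff k a * skewValue a (b + 1)) =
      skewCert k b (a + 1) - skewCert k b a := by
  have hd := hyperTerm_succ' ha
  have e1 := invFact_sub_one (2 * b + 3 - a)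
  have e2 := invFact_sub_one (2 * b + 2 - a)
  have e3 := invFact_sub_one (2 * a - b + 1)
  have e4 := invFact_sub_one (2 * a - b)
  rw [show (2 * b + 3 - a : ℤ) - 1 = 2 * b + 2 - a by ring] at e1
  rw [show (2 * b + 2 - a : ℤ) - 1 = 2 * b - a + 1 by ring, e1] at e2
  rw [show (2 * a - b + 1 : ℤ) - 1 = 2 * a - b by ring] at e3
  rw [e3] at e4
  have hf : ((a + b + 1).factorial : ℚ) = (a + b + 1) * (a + b).factorial := by
    rw [Nat.factorial_succ]
    push_cast
    ring
  simp only [evenCoeff, skewValue, skewCert]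
  rw [show a + (b + 1) = a + b + 1 by ring, show a + 1 + b = a + b + 1 by ring, hf]
  push_cast at e1 e2 e3 e4 ⊢
  rw [show (2 * (b + 1) - a + 1 : ℤ) = 2 * b + 3 - a by ring,
    show (2 * a - (b + 1) + 1 : ℤ) = 2 * a - b by ring,
    show (2 * b + 3 - (a + 1) : ℤ) = 2 * b + 2 - a by ring,
    show (2 * (a + 1) - b - 1 : ℤ) = 2 * a - b + 1 by ring, e1, e2, e3, e4]
  linear_combination (-(b + 1) * (3 * b + 5) + (3 * b + 4) * (b + 3) * (a + 1) / 2
      + (27 * b ^ 2 + 75 * b + 46) * (a + 1) ^ 2 / 2) * (a + b + 1) * (a + b).factorial *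
      (2 * b + 3 - a) * invFact (2 * b + 3 - a) * invFact (2 * a - b + 1) * hd

theorem skewSum_recurrence (k b : ℕ) :
    (b + 2) * (2 * k + 1 - b) * (2 * k + 2 + b) / 2 * skewSum k b +
      (k - b - 1) * (2 * k + 2 * b + 5) * (b + 1) * skewSum k (b + 1) = 0 := by
  rw [skewSum, skewSum, Finset.mul_sum, Finset.mul_sum, ← Finset.sum_add_distrib,
    Finset.sum_congr rfl fun a ha => skewCert_succ_sub b (Nat.lt_succ_iff.mp
      (Finset.mem_range.mp ha)), Finset.sum_range_sub, skewCert, skewCert, hyperTerm_succ_self,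
    invFact_of_neg (z := 2 * (0 : ℕ) - b - 1) (by lia)]
  simp

theorem skewValue_zero_right {a : ℕ} (ha : 2 ≤ a) : skewValue a 0 = 0 := by
  rw [skewValue, invFact_of_neg (z := 2 * (0 : ℕ) - a + 1) (by lia)]
  simp

theorem skewSum_eq_zero {k b : ℕ} (hb : b < k) : skewSum k b = 0 := by
  induction b with
  | zero =>
    obtain ⟨k, rfl⟩ := Nat.exists_eq_succ_of_ne_zero hb.ne'
    rw [skewSum, ← Finset.sum_subset (s₁ := {0, 1}) (by intro x; simp; lia)]
    · rw [Finset.sum_pair (by simp)]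
      simp only [evenCoeff, hyperTerm, skewValue]
      norm_num [invFact, show Int.toNat 3 = 3 from rfl, Nat.factorial]
      field_simp
      ring
    · intro a _ ha
      rw [skewValue_zero_right, mul_zero]
      simp at ha
      lia
  | succ b ih =>
    have h := skewSum_recurrence k b
    have hk : (b : ℚ) + 1 < k := by exact_mod_cast hb
    rw [ih (by lia), mul_zero, zero_add] at h
    refine (mul_eq_zero.mp h).resolve_left (mul_ne_zero (mul_ne_zero ?_ ?_) ?_)
    · linarith
    · positivity
    · positivity

theorem skewSum_two_mul_add_one (k : ℕ) : skewSum k (2 * k + 1) = 2 * evenCoeff k k := by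
  rw [skewSum, Finset.sum_eq_single k]
  · rw [skewValue, show (2 * (2 * k + 1 : ℕ) - k + 1 : ℤ) = (3 * k + 3 : ℕ) by push_cast; ring,
      show (2 * k - (2 * k + 1 : ℕ) + 1 : ℤ) = (0 : ℕ) by push_cast; ring, invFact_natCast,
      invFact_natCast, show k + (2 * k + 1) = 3 * k + 1 by ring, Nat.factorial_succ (3 * k + 2),
      Nat.factorial_succ (3 * k + 1)]
    have := Nat.factorial_ne_zero (3 * k + 1)
    push_cast
    field_simp
    ring
  · intro a ha hak
    rw [skewValue, invFact_of_neg (z := 2 * a - (2 * k + 1 : ℕ) + 1)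
      (by have := Finset.mem_range.mp ha; lia)]
    simp
  · simp

theorem skewSum_self_eq {k i : ℕ} (hi : i ≤ k + 1) :
    skewSum k k = skewSum k (k + i) * ∏ j ∈ Finset.range i,
      ((j + 1) / (k + 1 - j) * ((k + j + 1) / (k + j + 2)) *
        (2 * (4 * k + 5 + 2 * j) / (3 * k + 2 + j)) : ℚ) := by
  induction i with
  | zero => simp
  | succ i ih =>
    have h := skewSum_recurrence k (k + i)
    have hk : (i : ℚ) < k + 1 := by exact_mod_cast hi
    have h1 : (k : ℚ) + 1 - i ≠ 0 := by linarith
    rw [ih (by lia), Finset.prod_range_succ, mul_comm (Finset.prod _ _), ← mul_assoc]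
    congr 1
    rw [← add_assoc]
    push_cast at h
    field_simp
    linear_combination 2 * h

theorem prod_range_add_one_div (k : ℕ) :
    ∏ j ∈ Finset.range (k + 1), ((j + 1) / (k + 1 - j) : ℚ) = 1 := by
  rw [Finset.prod_div_distrib, ← Finset.prod_range_reflect, div_eq_one_iff_eq]
  · refine Finset.prod_congr rfl fun j hj => ?_
    have := Finset.mem_range.mp hj
    rw [show k + 1 - 1 - j = k - j by lia, Nat.cast_sub (by lia)]
    ring
  · refine Finset.prod_ne_zero_iff.mpr fun j hj => ?_
    have : (j : ℚ) < k + 1 := by exact_mod_cast Finset.mem_range.mp hj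
    linarith

theorem prod_range_add_div (k i : ℕ) :
    ∏ j ∈ Finset.range i, ((k + j + 1) / (k + j + 2) : ℚ) = (k + 1) / (k + i + 1) := by
  induction i with
  | zero => simp; field_simp
  | succ i ih =>
    rw [Finset.prod_range_succ, ih]
    push_cast
    field_simp
    ring

theorem skewSum_self (k : ℕ) :
    skewSum k k = evenCoeff k k *
      ∏ j ∈ Finset.range (k + 1), (2 * (4 * k + 5 + 2 * j) / (3 * k + 2 + j) : ℚ) := by
  rw [skewSum_self_eq le_rfl, Finset.prod_mul_distrib, Finset.prod_mul_distrib,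
    prod_range_add_one_div, prod_range_add_div, show k + (k + 1) = 2 * k + 1 by ring,
    skewSum_two_mul_add_one]
  push_cast
  field_simp
  ring

end HypergeometricSums

section EvaluationAtTwo

theorem hyperTerm_succ_left {k a : ℕ} (ha : a ≤ k) :
    hyperTerm (k + 1) a * ((k + 1 - a) * (2 * k + 3 + a) * (2 * k + 4 + a) * (2 * k + 1)) =
      hyperTerm k a * ((2 * k + 3 + 2 * a) * (k + 2) * (2 * k + 2 - a) * (2 * k + 1 - a)) := by
  induction a with
  | zero =>
    simp only [hyperTerm]
    push_cast
    ring
  | succ a ih =>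
    have h := ih (by lia)
    have hk := hyperTerm_succ (k := k) (a := a) ha
    have hk1 := hyperTerm_succ (k := k + 1) (a := a) (by lia)
    have ha' : (a : ℚ) + 1 ≤ k := by exact_mod_cast ha
    have ha0 : (0 : ℚ) ≤ a := by positivity
    push_cast at hk1 ⊢
    have n1 : (2 * k : ℚ) - a ≠ 0 := by linarith
    have n2 : (2 * (k + 1) : ℚ) - a ≠ 0 := by linarith
    have n3 : (k : ℚ) + 1 - a ≠ 0 := by linarith
    have n4 : (2 * k : ℚ) + 1 - a ≠ 0 := by linarith
    have n5 : (2 * k : ℚ) + 3 + a ≠ 0 := by positivity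
    have n6 : (2 * k : ℚ) + 4 + a ≠ 0 := by positivity
    have n7 : (2 * k : ℚ) + 1 ≠ 0 := by positivity
    have n8 : (2 * (k + 1) : ℚ) + 3 + a ≠ 0 := by positivity
    rw [← eq_div_iff (by simp [*])] at h hk hk1
    rw [hk1, h, hk]
    field_simp
    ring

/-- The value at `2` of the polynomial with coefficients `evenCoeff k`. -/
noncomputable def evenValue (k : ℕ) : ℚ := ∑ a ∈ Finset.range (k + 1), evenCoeff k a * 2 ^ a

theorem sum_range_evenValue {k n : ℕ} (hn : n ≤ k) :
    ∑ a ∈ Finset.range n, ((2 * k + 1) * (evenCoeff (k + 1) a * 2 ^ a) +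
      2 * (k + 2) * (evenCoeff k a * 2 ^ a)) =
    -((k + 2) * (4 * k + 5) * n / ((2 * k + 3 + n) * (k + 1 - n)) *
      ((2 * k + 1 - n) * hyperTerm k n) * 2 ^ n) := by
  induction n with
  | zero => simp
  | succ n ih =>
    have h := hyperTerm_succ_left (k := k) (a := n) (by lia)
    have hk := hyperTerm_succ (k := k) (a := n) hn
    have ha' : (n : ℚ) + 1 ≤ k := by exact_mod_cast hn
    have ha0 : (0 : ℚ) ≤ n := by positivity
    have n3 : (k : ℚ) + 1 - n ≠ 0 := by linarith
    have n4 : (k : ℚ) - n ≠ 0 := by linarith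
    have n5 : (2 * k : ℚ) + 3 + n ≠ 0 := by positivity
    have n6 : (2 * k : ℚ) + 4 + n ≠ 0 := by positivity
    have n7 : (2 * k : ℚ) + 1 ≠ 0 := by positivity
    have n8 : (k : ℚ) + 1 - (n + 1) ≠ 0 := by linarith
    have n9 : (2 * k : ℚ) + 3 + (n + 1) ≠ 0 := by positivity
    have hk' : (2 * k + 1 - (n + 1)) * hyperTerm k (n + 1) =
        hyperTerm k n * (-2 * (2 * k + 3 + 2 * n) * (k - n)) / (2 * k + 3 + n) := by
      rw [eq_div_iff n5]
      linear_combination hk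
    rw [← eq_div_iff (by simp [*])] at h
    rw [Finset.sum_range_succ, ih (by lia), evenCoeff, evenCoeff, h, pow_succ]
    push_cast
    rw [hk', show (k : ℚ) + 1 - (n + 1) = k - n by ring]
    field_simp
    ring

theorem evenValue_succ (k : ℕ) : (2 * k + 1) * evenValue (k + 1) = -2 * (k + 2) * evenValue k := by
  have h := hyperTerm_succ_left (k := k) (a := k) le_rfl
  have hk := hyperTerm_succ (k := k + 1) (a := k) (by lia)
  have hs := sum_range_evenValue (k := k) le_rfl
  rw [Finset.sum_add_distrib, ← Finset.mul_sum, ← Finset.mul_sum] at hs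
  rw [evenValue, evenValue, Finset.sum_range_succ, Finset.sum_range_succ, Finset.sum_range_succ]
  have n1 : (k : ℚ) + 1 ≠ 0 := by positivity
  rw [show (k : ℚ) + 1 - k = 1 by ring] at h hs
  push_cast at h hk hs
  rw [show (2 * (k + 1) : ℚ) - k = k + 2 by ring, show (k : ℚ) + 1 - k = 1 by ring] at hk
  rw [← eq_div_iff (by positivity)] at h hk
  simp only [evenCoeff] at hs ⊢
  rw [hk, h]
  push_cast
  rw [pow_succ]
  rw [← sub_eq_zero] at hs ⊢
  rw [← hs]
  field_simp
  ring

end EvaluationAtTwo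

section ClosedForms

theorem prod_range_add_one_add (c n : ℕ) :
    ∏ i ∈ Finset.range n, ((c : ℚ) + 1 + i) = (c + n).factorial / c.factorial := by
  induction n with
  | zero => simp [Nat.factorial_ne_zero]
  | succ n ih =>
    rw [Finset.prod_range_succ, ih, ← add_assoc, Nat.factorial_succ]
    push_cast
    ring

theorem prod_range_add_sub (c n : ℕ) :
    ∏ i ∈ Finset.range n, ((c : ℚ) + n - i) = (c + n).factorial / c.factorial := by
  rw [← prod_range_add_one_add, ← Finset.prod_range_reflect]
  refine Finset.prod_congr rfl fun i hi => ?_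
  have := Finset.mem_range.mp hi
  rw [show n - 1 - i = n - (i + 1) by lia, Nat.cast_sub (by lia)]
  push_cast
  ring

theorem prod_range_odd (c n : ℕ) :
    ∏ i ∈ Finset.range n, (2 * (c : ℚ) + 1 + 2 * i) =
      (2 * (c + n)).factorial * c.factorial /
        (2 ^ n * (c + n).factorial * (2 * c).factorial) := by
  induction n with
  | zero =>
    simp only [add_zero, Finset.range_zero, Finset.prod_empty, pow_zero, one_mul]
    field_simp
  | succ n ih =>
    rw [Finset.prod_range_succ, ih, show 2 * (c + (n + 1)) = 2 * (c + n) + 1 + 1 by ring,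
      ← add_assoc c n 1, Nat.factorial_succ (2 * (c + n) + 1), Nat.factorial_succ (2 * (c + n)),
      Nat.factorial_succ (c + n)]
    push_cast
    field_simp
    ring

/-- The ratio of the products over triples bounded by `m` and by `m - 1`. -/
noncomputable def growth (m : ℕ) : ℚ :=
  ∏ i ∈ Finset.range m, ((i + 2 * m) / (2 * i + m) : ℚ)

theorem growth_two_mul_add_one (k : ℕ) :
    growth (2 * k + 1) = 2 ^ (2 * k + 1) * (3 * k + 1).factorial * (2 * k).factorial /
      ((4 * k + 1).factorial * k.factorial) := by
  have h1 := prod_range_add_one_add (4 * k + 1) (2 * k + 1)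
  have h2 := prod_range_odd k (2 * k + 1)
  rw [growth, Finset.prod_div_distrib]
  rw [show 4 * k + 1 + (2 * k + 1) = 6 * k + 2 by ring] at h1
  rw [show 2 * (k + (2 * k + 1)) = 6 * k + 2 by ring,
    show k + (2 * k + 1) = 3 * k + 1 by ring] at h2
  rw [Finset.prod_congr rfl fun (i : ℕ) _ => show (i + 2 * (2 * k + 1 : ℕ) : ℚ) =
      (4 * k + 1 : ℕ) + 1 + i by push_cast; ring, h1,
    Finset.prod_congr rfl fun (i : ℕ) _ => show (2 * i + (2 * k + 1 : ℕ) : ℚ) =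
      2 * k + 1 + 2 * i by push_cast; ring, h2]
  field_simp

theorem growth_two_mul_add_two (k : ℕ) :
    growth (2 * k + 2) = (6 * k + 5).factorial * k.factorial /
      (2 ^ (2 * k + 2) * (4 * k + 3).factorial * (3 * k + 2).factorial) := by
  have h1 := prod_range_add_one_add (4 * k + 3) (2 * k + 2)
  have h2 := prod_range_add_one_add k (2 * k + 2)
  rw [growth, Finset.prod_div_distrib]
  rw [show 4 * k + 3 + (2 * k + 2) = 6 * k + 5 by ring] at h1
  rw [show k + (2 * k + 2) = 3 * k + 2 by ring] at h2
  rw [Finset.prod_congr rfl fun (i : ℕ) _ => show (i + 2 * (2 * k + 2 : ℕ) : ℚ) =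
      (4 * k + 3 : ℕ) + 1 + i by push_cast; ring, h1,
    Finset.prod_congr rfl fun (i : ℕ) _ => show (2 * i + (2 * k + 2 : ℕ) : ℚ) =
      2 * (k + 1 + i) by push_cast; ring, Finset.prod_mul_distrib, h2, Finset.prod_const,
    Finset.card_range]
  field_simp

theorem prod_range_eq_growth_mul_growth (k : ℕ) :
    ∏ j ∈ Finset.range (k + 1), (2 * (4 * k + 5 + 2 * j) / (3 * k + 2 + j) : ℚ) =
      growth (2 * k + 1) * growth (2 * k + 2) := by
  have h1 := prod_range_odd (2 * k + 2) (k + 1)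
  have h2 := prod_range_add_one_add (3 * k + 1) (k + 1)
  rw [show 2 * (2 * k + 2 + (k + 1)) = 6 * k + 5 + 1 by ring,
    show 2 * k + 2 + (k + 1) = 3 * k + 2 + 1 by ring, show 2 * (2 * k + 2) = 4 * k + 3 + 1 by ring,
    Nat.factorial_succ (6 * k + 5), Nat.factorial_succ (3 * k + 2), Nat.factorial_succ (4 * k + 3),
    Nat.factorial_succ (2 * k + 1), Nat.factorial_succ (2 * k)] at h1
  rw [show 3 * k + 1 + (k + 1) = 4 * k + 1 + 1 by ring, Nat.factorial_succ (4 * k + 1)] at h2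
  rw [growth_two_mul_add_one, growth_two_mul_add_two, Finset.prod_div_distrib,
    Finset.prod_mul_distrib, Finset.prod_const, Finset.card_range,
    Finset.prod_congr rfl fun (j : ℕ) _ => show (4 * k + 5 + 2 * j : ℚ) =
      2 * (2 * k + 2 : ℕ) + 1 + 2 * j by push_cast; ring, h1,
    Finset.prod_congr rfl fun (j : ℕ) _ => show (3 * k + 2 + j : ℚ) =
      (3 * k + 1 : ℕ) + 1 + j by push_cast; ring, h2]
  push_cast
  field_simp
  ring

theorem hyperTerm_eq_prod (k a : ℕ) :
    hyperTerm k a = ∏ i ∈ Finset.range a,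
      (-2 * (2 * k + 3 + 2 * i) * (k - i) / ((2 * k + 3 + i) * (2 * k - i)) : ℚ) := by
  induction a with
  | zero => simp [hyperTerm]
  | succ a ih => rw [hyperTerm, Finset.prod_range_succ, ih, mul_div_assoc]

theorem hyperTerm_self (k : ℕ) :
    hyperTerm k k = (-1) ^ k * (4 * k + 2).factorial * (k + 1).factorial * k.factorial *
      k.factorial / ((2 * k + 1).factorial * (3 * k + 2).factorial * (2 * k).factorial) := by
  have h1 := prod_range_odd (k + 1) k
  have h2 := prod_range_add_sub 0 k
  have h3 := prod_range_add_one_add (2 * k + 2) k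
  have h4 := prod_range_add_sub k k
  rw [show 2 * (k + 1 + k) = 4 * k + 2 by ring, show k + 1 + k = 2 * k + 1 by ring,
    show 2 * (k + 1) = 2 * k + 2 by ring] at h1
  rw [show 2 * k + 2 + k = 3 * k + 2 by ring] at h3
  rw [← two_mul k] at h4
  simp only [zero_add, Nat.factorial_zero, Nat.cast_one, div_one, Nat.cast_zero] at h2
  rw [hyperTerm_eq_prod, Finset.prod_div_distrib, Finset.prod_mul_distrib, Finset.prod_mul_distrib,
    Finset.prod_mul_distrib, Finset.prod_const, Finset.card_range, h2,
    Finset.prod_congr rfl fun (j : ℕ) _ => show (2 * k + 3 + 2 * j : ℚ) =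
      2 * (k + 1 : ℕ) + 1 + 2 * j by push_cast; ring, h1,
    Finset.prod_congr rfl fun (j : ℕ) _ => show (2 * k + 3 + j : ℚ) =
      (2 * k + 2 : ℕ) + 1 + j by push_cast; ring, h3,
    Finset.prod_congr rfl fun (j : ℕ) _ => show (2 * k - j : ℚ) = k + k - j by ring, h4,
    show (-2 : ℚ) = -1 * 2 by norm_num, mul_pow]
  field_simp

theorem evenValue_eq (k : ℕ) :
    evenValue k = 2 * (-1) ^ k * 2 ^ (2 * k) * (k + 1).factorial * k.factorial /
      (2 * k).factorial := by
  induction k with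
  | zero => simp [evenValue, evenCoeff, hyperTerm]
  | succ k ih =>
    have h := evenValue_succ k
    rw [ih] at h
    rw [show 2 * (k + 1) = 2 * k + 1 + 1 by ring, Nat.factorial_succ (2 * k + 1),
      Nat.factorial_succ (2 * k), Nat.factorial_succ (k + 1)]
    have h1 : (2 * k + 1 : ℚ) ≠ 0 := by positivity
    apply mul_left_cancel₀ h1
    rw [h, Nat.factorial_succ k]
    push_cast
    field_simp
    ring

theorem two_mul_evenValue (k : ℕ) : 2 * evenValue k = evenCoeff k k * growth (2 * k + 1) := by
  rw [evenValue_eq, evenCoeff, hyperTerm_self, growth_two_mul_add_one,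
    Nat.factorial_succ (4 * k + 1), Nat.factorial_succ (3 * k + 1), Nat.factorial_succ (2 * k)]
  push_cast
  field_simp
  ring

end ClosedForms

section Counting

open Polynomial

/-- Even-degree polynomials, symmetric under `X ↦ -1 - X`. -/
noncomputable def evenPoly (k : ℕ) : ℚ[X] :=
  ∑ a ∈ Finset.range (k + 1), C (evenCoeff k a) * symPoly ^ a

/-- The family of polynomials that block-triangularises the form `skewForm`. -/
noncomputable def skewFamily (j : ℕ) : ℚ[X] :=
  if Even j then evenPoly (j / 2) else oddPoly (j / 2)

theorem skewFamily_two_mul (k : ℕ) : skewFamily (2 * k) = evenPoly k := by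
  simp [skewFamily]

theorem skewFamily_two_mul_add_one (k : ℕ) : skewFamily (2 * k + 1) = oddPoly k := by
  rw [skewFamily, if_neg (by simp), show (2 * k + 1) / 2 = k by lia]

theorem symPoly_comp : symPoly.comp (-1 - X) = symPoly := by
  simp only [symPoly, mul_comp, add_comp, X_comp, one_comp]
  ring

theorem natDegree_symPoly_pow_le (a : ℕ) : (symPoly ^ a).natDegree ≤ 2 * a := by
  have h : symPoly.natDegree ≤ 2 := by
    rw [symPoly]
    compute_degree
  exact (natDegree_pow_le_of_le a h).trans (by lia)

theorem coeff_symPoly_pow (a : ℕ) : (symPoly ^ a).coeff (2 * a) = 1 := by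
  rw [symPoly, mul_pow, two_mul, coeff_X_pow_mul, coeff_one_add_X_pow, Nat.choose_self,
    Nat.cast_one]

theorem natDegree_evenPoly_le (k : ℕ) : (evenPoly k).natDegree ≤ 2 * k := by
  refine natDegree_sum_le_of_forall_le _ _ fun a ha => ?_
  have := Finset.mem_range.mp ha
  exact (natDegree_C_mul_le _ _).trans ((natDegree_symPoly_pow_le a).trans (by lia))

theorem coeff_evenPoly (k : ℕ) : (evenPoly k).coeff (2 * k) = evenCoeff k k := by
  rw [evenPoly, finsetSum_coeff, Finset.sum_range_succ, coeff_C_mul, coeff_symPoly_pow, mul_one,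
    add_eq_right]
  refine Finset.sum_eq_zero fun a ha => ?_
  have := Finset.mem_range.mp ha
  rw [coeff_C_mul, coeff_eq_zero_of_natDegree_lt ((natDegree_symPoly_pow_le a).trans_lt (by lia)),
    mul_zero]

theorem evenPoly_comp (k : ℕ) : (evenPoly k).comp (-1 - X) = evenPoly k := by
  simp only [evenPoly, sum_comp, mul_comp, C_comp, pow_comp, symPoly_comp]

theorem eval_evenPoly (k : ℕ) : (evenPoly k).eval 1 = evenValue k := by
  simp only [evenPoly, evenValue, eval_finsetSum, eval_mul, eval_C, eval_pow, symPoly, eval_X,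
    eval_add, eval_one]
  norm_num

theorem oddPoly_succ (b : ℕ) : oddPoly (b + 1) =
    C 2 * X * symPoly ^ (b + 1) + (symPoly ^ (b + 1) - C 2 * (2 * X + 1) * symPoly ^ b) := by
  rw [oddPoly, C_ofNat]
  ring

theorem natDegree_two_mul_X_add_one_le : (2 * X + 1 : ℚ[X]).natDegree ≤ 1 := by
  compute_degree

theorem natDegree_sub_le_two_mul (b : ℕ) :
    (symPoly ^ (b + 1) - C 2 * (2 * X + 1) * symPoly ^ b).natDegree ≤ 2 * (b + 1) := by
  refine (natDegree_sub_le _ _).trans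
    (max_le (natDegree_symPoly_pow_le _) (natDegree_mul_le.trans ?_))
  have h1 := natDegree_symPoly_pow_le b
  have h2 := (natDegree_C_mul_le 2 (2 * X + 1 : ℚ[X])).trans natDegree_two_mul_X_add_one_le
  lia

theorem natDegree_oddPoly_le (b : ℕ) : (oddPoly b).natDegree ≤ 2 * b + 1 := by
  cases b with
  | zero => exact natDegree_two_mul_X_add_one_le
  | succ b =>
    rw [oddPoly_succ]
    refine natDegree_add_le_of_degree_le (natDegree_mul_le.trans ?_)
      ((natDegree_sub_le_two_mul b).trans (by lia))
    have h1 := natDegree_symPoly_pow_le (b + 1)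
    have h2 := (natDegree_C_mul_le (2 : ℚ) X).trans natDegree_X_le
    lia

theorem coeff_oddPoly (b : ℕ) : (oddPoly b).coeff (2 * b + 1) = 2 := by
  cases b with
  | zero => simp [oddPoly, coeff_one]
  | succ b =>
    rw [oddPoly_succ, coeff_add,
      coeff_eq_zero_of_natDegree_lt ((natDegree_sub_le_two_mul b).trans_lt (by lia)), add_zero,
      mul_assoc, coeff_C_mul, coeff_X_mul, coeff_symPoly_pow, mul_one]

theorem oddPoly_comp (b : ℕ) : (oddPoly b).comp (-1 - X) = -oddPoly b := by
  cases b with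
  | zero =>
    simp only [oddPoly, add_comp, mul_comp, X_comp, one_comp, ofNat_comp]
    ring
  | succ b =>
    simp only [oddPoly, add_comp, sub_comp, mul_comp, X_comp, one_comp, ofNat_comp, pow_comp,
      symPoly_comp]
    ring

theorem natDegree_skewFamily_le (j : ℕ) : (skewFamily j).natDegree ≤ j := by
  obtain ⟨k, rfl | rfl⟩ := j.even_or_odd'
  · rw [skewFamily_two_mul]
    exact natDegree_evenPoly_le k
  · rw [skewFamily_two_mul_add_one]
    exact natDegree_oddPoly_le k

theorem skewFamily_comp (j : ℕ) :
    (skewFamily j).comp (-1 - X) = (-1 : ℚ) ^ j • skewFamily j := by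
  obtain ⟨k, rfl | rfl⟩ := j.even_or_odd'
  · rw [skewFamily_two_mul, evenPoly_comp]
    simp
  · rw [skewFamily_two_mul_add_one, oddPoly_comp]
    simp [pow_succ]

theorem skewForm_skewFamily (a b : ℕ) :
    skewForm (skewFamily (2 * a)) (skewFamily (2 * b + 1)) = skewSum a b := by
  rw [skewFamily_two_mul, skewFamily_two_mul_add_one, evenPoly, skewForm_sum_C_mul_left, skewSum]
  simp only [skewForm_symPoly_pow_oddPoly]

theorem card_partialIdeals_two_mul (k : ℕ) : ((partialIdeals (2 * k) 0).card : ℚ) =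
    ∏ b ∈ Finset.range k, growth (2 * b + 1) * growth (2 * b + 2) := by
  have h := card_partialIdeals_even natDegree_skewFamily_le skewFamily_comp
    (fun a b hab => by rw [skewForm_skewFamily, skewSum_eq_zero hab]) k
  rw [prod_range_two_mul] at h
  simp only [skewForm_skewFamily, skewSum_self, prod_range_eq_growth_mul_growth] at h
  simp only [skewFamily_two_mul, skewFamily_two_mul_add_one, coeff_evenPoly, coeff_oddPoly] at h
  refine mul_right_cancel₀ (Finset.prod_ne_zero_iff.mpr fun b _ =>
    mul_ne_zero (evenCoeff_self_ne_zero b) two_ne_zero) (h.trans ?_)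
  rw [← Finset.prod_mul_distrib]
  exact Finset.prod_congr rfl fun b _ => by ring

theorem card_partialIdeals_two_mul_add_one (k : ℕ) : ((partialIdeals (2 * k + 1) 0).card : ℚ) =
    (partialIdeals (2 * k) 0).card * growth (2 * k + 1) := by
  have htri : ∀ a b, b < a → skewForm (skewFamily (2 * a)) (skewFamily (2 * b + 1)) = 0 :=
    fun a b hab => by rw [skewForm_skewFamily, skewSum_eq_zero hab]
  have he := card_partialIdeals_even natDegree_skewFamily_le skewFamily_comp htri k
  have ho := card_partialIdeals_odd natDegree_skewFamily_le skewFamily_comp htri k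
  rw [← he, Finset.prod_range_succ, skewFamily_two_mul, coeff_evenPoly, eval_evenPoly,
    two_mul_evenValue, prod_range_two_mul] at ho
  simp only [skewFamily_two_mul, skewFamily_two_mul_add_one, coeff_evenPoly, coeff_oddPoly] at ho
  have hne : (∏ b ∈ Finset.range k, evenCoeff b b * 2) * evenCoeff k k ≠ 0 :=
    mul_ne_zero (Finset.prod_ne_zero_iff.mpr fun b _ =>
      mul_ne_zero (evenCoeff_self_ne_zero b) two_ne_zero) (evenCoeff_self_ne_zero k)
  refine mul_right_cancel₀ hne (ho.trans ?_)
  ring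

theorem card_partialIdeals_succ (m : ℕ) : ((partialIdeals (m + 1) 0).card : ℚ) =
    (partialIdeals m 0).card * growth (m + 1) := by
  obtain ⟨k, rfl | rfl⟩ := m.even_or_odd'
  · exact card_partialIdeals_two_mul_add_one k
  · rw [card_partialIdeals_two_mul_add_one, show 2 * k + 1 + 1 = 2 * (k + 1) by ring,
      card_partialIdeals_two_mul, card_partialIdeals_two_mul, Finset.prod_range_succ, mul_assoc]
    rfl

theorem prod_tripleIdx_succ (m : ℕ) (f : ℕ → ℕ → ℕ → ℚ) :
    ∏ t ∈ tripleIdx (m + 1), f t.1 t.2.1 t.2.2 = (∏ t ∈ tripleIdx m, f t.1 t.2.1 t.2.2) *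
      ∏ i ∈ Finset.Icc 1 (m + 1), ∏ j ∈ Finset.Icc i (m + 1), f i j (m + 1) := by
  rw [← Finset.prod_filter_mul_prod_filter_not (tripleIdx (m + 1)) fun t => t.2.2 ≤ m]
  congr 1
  · refine Finset.prod_congr ?_ fun _ _ => rfl
    ext ⟨i, j, l⟩
    simp only [tripleIdx, Finset.mem_filter, Finset.mem_product, Finset.mem_Icc]
    lia
  · rw [Finset.prod_sigma']
    refine Finset.prod_bij' (fun t _ => ⟨t.1, t.2.1⟩) (fun p _ => (p.1, p.2, m + 1)) ?_ ?_ ?_ ?_ ?_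
    · rintro ⟨i, j, l⟩
      simp only [tripleIdx, Finset.mem_filter, Finset.mem_product, Finset.mem_Icc, Finset.mem_sigma]
      lia
    · rintro ⟨i, j⟩
      simp only [tripleIdx, Finset.mem_filter, Finset.mem_product, Finset.mem_Icc, Finset.mem_sigma]
      lia
    · rintro ⟨i, j, l⟩
      simp only [tripleIdx, Finset.mem_filter, Finset.mem_product, Finset.mem_Icc, Prod.mk.injEq,
        true_and]
      lia
    · rintro ⟨i, j⟩ _
      rfl
    · rintro ⟨i, j, l⟩ h
      simp only [tripleIdx, Finset.mem_filter, Finset.mem_product, Finset.mem_Icc] at h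
      rw [show l = m + 1 by lia]

theorem prod_Icc_telescope (i n : ℕ) (c : ℚ) :
    (∏ j ∈ Finset.Icc i (i + n), (c + j + 1)) * (c + i) =
      (∏ j ∈ Finset.Icc i (i + n), (c + j)) * (c + i + n + 1) := by
  induction n with
  | zero =>
    simp
    ring
  | succ n ih =>
    rw [← add_assoc, Finset.prod_Icc_succ_top (by lia), Finset.prod_Icc_succ_top (by lia)]
    push_cast
    linear_combination (c + i + n + 1 + 1) * ih

theorem prod_Icc_eq_growth_mul (m : ℕ) :
    (∏ i ∈ Finset.Icc 1 (m + 1), ∏ j ∈ Finset.Icc i (m + 1), (i + j + (m + 1 : ℕ) - 1 : ℚ)) =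
      growth (m + 1) *
        ∏ i ∈ Finset.Icc 1 (m + 1), ∏ j ∈ Finset.Icc i (m + 1), (i + j + (m + 1 : ℕ) - 2 : ℚ) := by
  have hg : growth (m + 1) = ∏ i ∈ Finset.Icc 1 (m + 1),
      ((i + 2 * (m + 1 : ℕ) - 1) / (2 * i + (m + 1 : ℕ) - 2) : ℚ) := by
    rw [growth]
    refine Finset.prod_nbij' (· + 1) (· - 1) ?_ ?_ ?_ ?_ ?_ <;> intro i hi <;>
      simp only [Finset.mem_range, Finset.mem_Icc] at hi ⊢
    · lia
    · lia
    · lia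
    · lia
    · push_cast
      ring_nf
  rw [hg, ← Finset.prod_mul_distrib]
  refine Finset.prod_congr rfl fun i hi => ?_
  obtain ⟨h1, h2⟩ := Finset.mem_Icc.mp hi
  obtain ⟨n, hn⟩ := Nat.exists_eq_add_of_le h2
  have h1' : (1 : ℚ) ≤ i := by exact_mod_cast h1
  have hn' : (m : ℚ) + 1 = i + n := by exact_mod_cast hn
  have hm : (0 : ℚ) ≤ m := by positivity
  have h := prod_Icc_telescope i n (i + m - 1)
  rw [div_mul_eq_mul_div, eq_div_iff (by push_cast; linarith), mul_comm (_ - 1 : ℚ)]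
  rw [← hn] at h
  convert h using 2
  · exact Finset.prod_congr rfl fun j _ => by push_cast; ring
  · push_cast
    ring
  · exact Finset.prod_congr rfl fun j _ => by push_cast; ring
  · push_cast
    linear_combination hn'

theorem card_partialIdeals_mul_prod (m : ℕ) :
    ((partialIdeals m 0).card : ℚ) * ∏ t ∈ tripleIdx m, (t.1 + t.2.1 + t.2.2 - 2 : ℚ) =
      ∏ t ∈ tripleIdx m, (t.1 + t.2.1 + t.2.2 - 1 : ℚ) := by
  induction m with
  | zero =>
    have h := card_partialIdeals_two_mul 0
    simp only [mul_zero, Finset.range_zero, Finset.prod_empty] at h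
    simp [h, tripleIdx]
  | succ m ih =>
    rw [prod_tripleIdx_succ m fun i j l => (i + j + l - 2 : ℚ),
      prod_tripleIdx_succ m fun i j l => (i + j + l - 1 : ℚ), prod_Icc_eq_growth_mul,
      card_partialIdeals_succ, ← ih]
    ring

end Counting

/-- The number of order ideals of the full tetrahedral poset `T_n` satisfies
`|J(T_n)| · ∏_{1≤i≤j≤k≤n-1} (i+j+k-2) = ∏_{1≤i≤j≤k≤n-1} (i+j+k-1)`;
equivalently, `|J(T_n)|` is the number of totally symmetric plane partitions in
an `(n-1)×(n-1)×(n-1)` box. -/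
theorem stmt18 (n : ℕ) (hn : 1 ≤ n) :
    ((ideals3 {vr, vg, vy, vb, vo, vs} (V3 n)).card *
        ∏ t ∈ tripleIdx (n - 1), (t.1 + t.2.1 + t.2.2 - 2) =
      ∏ t ∈ tripleIdx (n - 1), (t.1 + t.2.1 + t.2.2 - 1)) ∧
    (ideals3 {vr, vg, vy, vb, vo, vs} (V3 n)).card =
      Nat.card {π : Set (ℕ × ℕ × ℕ) // IsTSPP (n - 1) π} := by
  rw [card_ideals3 hn, card_tspp]
  refine ⟨?_, rfl⟩
  have hpos : ∀ t ∈ tripleIdx (n - 1), 2 ≤ t.1 + t.2.1 + t.2.2 := by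
    intro t ht
    simp only [tripleIdx, Finset.mem_filter, Finset.mem_product, Finset.mem_Icc] at ht
    lia
  have h := card_partialIdeals_mul_prod (n - 1)
  apply Nat.cast_injective (R := ℚ)
  push_cast
  rw [Finset.prod_congr rfl fun t ht => show ((t.1 + t.2.1 + t.2.2 - 2 : ℕ) : ℚ) =
      t.1 + t.2.1 + t.2.2 - 2 by rw [Nat.cast_sub (hpos t ht)]; push_cast; ring, h]
  refine Finset.prod_congr rfl fun t ht => ?_
  rw [Nat.cast_sub (by have := hpos t ht; lia)]
  push_cast
  ring
end
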